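/- arXiv:1104.5007 — 2 statements merged into one kernel-verified Lean document; each statement's English description precedes it below -/
import Mathlib

section
/- For every integer t ≥ 1 there exists a constant C_t such that for every integer n ≥ 1, the maximum size r_{2t+3}(n) of a family of n-permutations with VC-dimension at most 2t+3 satisfies r_{2t+3}(n) ≤ 2^{n·((2/t!)·α(n)^t·log₂ α(n) + C_t·α(n)^t)}. -/
/-! ## Inverse Ackermann hierarchy -/

/-- Bounded-fuel iteration counter: number of applications of `f` needed to bring `m`
down to a value `≤ 1` (assuming `f` strictly decreases on values `≥ 2`). -/
def iterCount (f : ℕ → ℕ) : ℕ → ℕ → ℕ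
  | 0, _ => 0
  | fuel + 1, m => if m ≤ 1 then 0 else 1 + iterCount f fuel (f m)

/-- The inverse Ackermann hierarchy: `alphaHier 1 m = ⌈m/2⌉`, `alphaHier d 1 = 0` for `d ≥ 2`,
and `alphaHier d m = 1 + alphaHier d (alphaHier (d-1) m)` for `m, d ≥ 2`. -/
def alphaHier : ℕ → ℕ → ℕ
  | 0, m => m
  | 1, m => (m + 1) / 2
  | d + 2, m => iterCount (alphaHier (d + 1)) m m

/-- The inverse Ackermann function `α(m) = min {k ≥ 1 : α_k(m) ≤ 3}`. -/
noncomputable def invAck (m : ℕ) : ℕ := sInf {k : ℕ | 1 ≤ k ∧ alphaHier k m ≤ 3}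

/-! ## Permutations, restrictions, VC-dimension -/

/-- The restriction of the `n`-permutation `π` to the (increasing) `k`-tuple of positions `a`
is the `k`-permutation `σ`. -/
def PermRestrictionIs {n k : ℕ} (π : Equiv.Perm (Fin n)) (a : Fin k → Fin n)
    (σ : Equiv.Perm (Fin k)) : Prop :=
  ∀ i j : Fin k, σ i < σ j ↔ π (a i) < π (a j)

/-- The `k`-tuple of positions `a` is shattered by the family `P` of `n`-permutations. -/
def Shatters {n k : ℕ} (P : Finset (Equiv.Perm (Fin n))) (a : Fin k → Fin n) : Prop :=
  StrictMono a ∧ ∀ σ : Equiv.Perm (Fin k), ∃ π ∈ P, PermRestrictionIs π a σ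

/-- The family `P` of `n`-permutations has VC-dimension at most `k`:
no `(k+1)`-tuple of positions is shattered by `P`. -/
def VCDimLE (n k : ℕ) (P : Finset (Equiv.Perm (Fin n))) : Prop :=
  ∀ a : Fin (k + 1) → Fin n, ¬ Shatters P a

/-- The number of `1`-entries of the union of the permutation matrices of a family `P`
of `n`-permutations. -/
noncomputable def permOnes {n : ℕ} (P : Finset (Equiv.Perm (Fin n))) : ℕ :=
  Nat.card {p : Fin n × Fin n // ∃ π ∈ P, π p.2 = p.1}

/-- `v(P) = |M_P| / n`, the average number of `1`-entries per column of the union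
of the permutation matrices of the family `P`. -/
noncomputable def vPerm {n : ℕ} (P : Finset (Equiv.Perm (Fin n))) : ℝ :=
  (permOnes P : ℝ) / (n : ℝ)

/-! ## (0,1)-matrices -/

/-- The number of `1`-entries of a `(0,1)`-matrix (represented as a `Bool` matrix). -/
noncomputable def matOnes {m n : ℕ} (M : Fin m → Fin n → Bool) : ℕ :=
  Nat.card {p : Fin m × Fin n // M p.1 p.2 = true}

/-- The number of `1`-entries in column `j` of a `(0,1)`-matrix. -/
noncomputable def colOnes {m n : ℕ} (M : Fin m → Fin n → Bool) (j : Fin n) : ℕ :=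
  Nat.card {i : Fin m // M i j = true}

/-- The matrix `B` contains the matrix `S`. -/
def MatContains {m n p q : ℕ} (B : Fin m → Fin n → Bool) (S : Fin p → Fin q → Bool) : Prop :=
  ∃ (r : Fin p → Fin m) (c : Fin q → Fin n), StrictMono r ∧ StrictMono c ∧
    ∀ a b, S a b = true → B (r a) (c b) = true

/-- The `s × 2` matrix `DS_s`, with a `1`-entry in (1-indexed) row `i` and column `j`
exactly when `i + j` is odd. -/
def DS (s : ℕ) : Fin s → Fin 2 → Bool :=
  fun i j => decide ((i.val + j.val) % 2 = 1)

/-- The maximum number of `1`-entries in an `n × n` matrix avoiding `S`. -/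
noncomputable def exMat {p q : ℕ} (S : Fin p → Fin q → Bool) (n : ℕ) : ℕ :=
  sSup {x : ℕ | ∃ M : Fin n → Fin n → Bool, ¬ MatContains M S ∧ matOnes M = x}

/-- An `n × n` matrix is `k`-full if some increasing `k`-tuple of columns contains
every `k`-permutation matrix. -/
def IsFull (k : ℕ) {n : ℕ} (M : Fin n → Fin n → Bool) : Prop :=
  ∃ c : Fin k → Fin n, StrictMono c ∧ ∀ σ : Equiv.Perm (Fin k),
    ∃ r : Fin k → Fin n, StrictMono r ∧ ∀ b : Fin k, M (r (σ b)) (c b) = true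

/-- `pFull k n` is the maximum number of `1`-entries in an `n × n` matrix that is
not `(k+1)`-full. -/
noncomputable def pFull (k n : ℕ) : ℕ :=
  sSup {x : ℕ | ∃ M : Fin n → Fin n → Bool, ¬ IsFull (k + 1) M ∧ matOnes M = x}

/-! ## Formations -/

/-- `M` contains a `B`-fat `(r,s)`-formation: there are an `s`-partition of the rows into
intervals (the fibers of a monotone map `g`) and `r` columns, each having at least `B`
`1`-entries in every interval. -/
def FatFormation (B r s : ℕ) {m n : ℕ} (M : Fin m → Fin n → Bool) : Prop :=
  ∃ g : Fin m → Fin s, Monotone g ∧ ∃ c : Fin r → Fin n, StrictMono c ∧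
    ∀ (j : Fin r) (i : Fin s), B ≤ Nat.card {x : Fin m // g x = i ∧ M x (c j) = true}

/-- `M` contains a doubled `(r,s)`-formation: there are an `s`-partition of the rows into
intervals and `r` columns, each having at least one `1`-entry in the first and last
interval and at least two `1`-entries in every other interval. -/
def DoubledFormation (r s : ℕ) {m n : ℕ} (M : Fin m → Fin n → Bool) : Prop :=
  ∃ g : Fin m → Fin s, Monotone g ∧ ∃ c : Fin r → Fin n, StrictMono c ∧
    ∀ (j : Fin r) (i : Fin s),
      1 ≤ Nat.card {x : Fin m // g x = i ∧ M x (c j) = true} ∧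
      (i.val ≠ 0 → i.val ≠ s - 1 → 2 ≤ Nat.card {x : Fin m // g x = i ∧ M x (c j) = true})

/-! ## The functions R, D, β -/

/-- Nivasch's hierarchy `R_s(d)` (shifted as in the paper). -/
def Rfun : ℕ → ℕ → ℕ
  | 0, _ => 0
  | 1, _ => 0
  | 2, _ => 2
  | 3, _ => 3
  | 4, d => 2 * d + 1
  | _ + 5, 0 => 0
  | _ + 5, 1 => 0
  | s + 5, 2 => 2 ^ (s + 3) + 1
  | s + 5, d + 3 =>
      2 * (Rfun (s + 4) (d + 3) - 1) + (Rfun (s + 3) (d + 3) - 1) * (Rfun (s + 5) (d + 2) - 3) + 1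
  termination_by s d => (s, d)

/-- The hierarchy `D_s(d)`. -/
def Dfun : ℕ → ℕ → ℕ
  | 0, _ => 0
  | 1, _ => 0
  | 2, _ => 2
  | _ + 3, 0 => 0
  | _ + 3, 1 => 0
  | s + 3, 2 => 2 ^ (s + 2) + 2 ^ (s + 1) - 1
  | s + 3, d + 3 =>
      2 * Dfun (s + 2) (d + 3) + (Dfun (s + 1) (d + 3) + 1) * (Rfun (s + 3) (d + 2) - 3)
        + Dfun (s + 3) (d + 2) - Rfun (s + 3) (d + 2) + 1
  termination_by s d => (s, d)

/-- `β_s(m) = D_s(α(m))`. -/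
noncomputable def betaFun (s m : ℕ) : ℕ := Dfun s (invAck m)

/-! ## Sequences: MST and formations in sequences -/

/-- The list of column indices of the `1`-entries of a row, in increasing order. -/
def rowList {n : ℕ} (row : Fin n → Bool) : List (Fin n) :=
  (List.finRange n).filter (fun j => row j)

/-- The matrix → sequence transformation: read the rows top to bottom, writing for each
`1`-entry the index of its column. -/
def MST {m n : ℕ} (M : Fin m → Fin n → Bool) : List (Fin n) :=
  ((List.finRange m).map (fun i => rowList (M i))).flatten

/-- The list `L` contains an `(r,s)`-formation as a subsequence: a concatenation of `s`
permutations of the same `r`-element set of symbols is a sublist of `L`. -/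
def IsFormationSeq {A : Type*} [DecidableEq A] (r s : ℕ) (L : List A) : Prop :=
  ∃ (T : Finset A) (F : List (List A)), T.card = r ∧ F.length = s ∧
    (∀ l ∈ F, l.Nodup ∧ l.toFinset = T) ∧ List.Sublist F.flatten L

namespace VCX
open Finset

def HasForm {ι : Type} (r s : ℕ) (A : Finset (ℕ × ι)) : Prop :=
  ∃ T : Finset ι, T.card = r ∧ ∃ x : ℕ → ℕ, Monotone x ∧
    ∀ c ∈ T, ∀ i < s, ∃ y, x i ≤ y ∧ y < x (i+1) ∧ (y, c) ∈ A

def FBd (ι : Type) [DecidableEq ι] (r s m R X : ℕ) : Prop :=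
  ∀ (a : ℕ) (A : Finset (ℕ × ι)), (∀ p ∈ A, a ≤ p.1 ∧ p.1 < a + m) → ¬ HasForm r s A →
    A.card ≤ R * ((A.image Prod.snd).card + X * m)

theorem extend_after {ι : Type} {r s e : ℕ} {A1 A : Finset (ℕ × ι)} (hs : 1 ≤ s) (hsub : A1 ⊆ A)
    (h1 : ∀ p ∈ A1, p.1 < e) (h2 : ∀ p ∈ A1, ∃ y, e ≤ y ∧ (y, p.2) ∈ A)
    (hf : HasForm r s A1) : HasForm r (s+1) A := by
  obtain ⟨T, hT, x, hx, h⟩ := hf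
  refine ⟨T, hT, fun j => if j ≤ s then min (x j) e else A.sup Prod.fst + 1 + e, ?_, ?_⟩
  · intro i j hij
    have := hx hij
    simp only
    split_ifs <;> omega
  · intro c hc i hi
    by_cases his : i < s
    · obtain ⟨y, hy1, hy2, hy3⟩ := h c hc i his
      refine ⟨y, ?_, ?_, hsub hy3⟩
      · simp only [if_pos his.le]; omega
      · have : i + 1 ≤ s := his
        have := h1 _ hy3
        simp only at this
        simp only [if_pos ‹i + 1 ≤ s›]; omega
    · obtain ⟨y, hy1, hy2, hy3⟩ := h c hc 0 (by omega)
      obtain ⟨z, hz, hz2⟩ := h2 _ hy3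
      have hi' : i = s := by omega
      subst hi'
      refine ⟨z, ?_, ?_, hz2⟩
      · simp only [le_refl, if_true]; omega
      · have : (z, c).1 ≤ A.sup Prod.fst := Finset.le_sup (f := Prod.fst) hz2
        simp only at this
        simp only [show ¬ (i + 1 ≤ i) by omega, if_false]; omega

theorem extend_before {ι : Type} {r s e : ℕ} {A1 A : Finset (ℕ × ι)} (hs : 1 ≤ s) (hsub : A1 ⊆ A)
    (h1 : ∀ p ∈ A1, e ≤ p.1) (h2 : ∀ p ∈ A1, ∃ y, y < e ∧ (y, p.2) ∈ A)
    (hf : HasForm r s A1) : HasForm r (s+1) A := by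
  obtain ⟨T, hT, x, hx, h⟩ := hf
  refine ⟨T, hT, fun j => if j = 0 then 0 else max (x (j-1)) e, ?_, ?_⟩
  · intro i j hij
    have : x (i-1) ≤ x (j-1) := hx (by omega)
    simp only
    split_ifs <;> omega
  · intro c hc i hi
    rcases i with _ | i
    · obtain ⟨y, hy1, hy2, hy3⟩ := h c hc 0 (by omega)
      obtain ⟨z, hz, hz2⟩ := h2 _ hy3
      exact ⟨z, by simp, by simp; omega, hz2⟩
    · obtain ⟨y, hy1, hy2, hy3⟩ := h c hc i (by omega)
      have := h1 _ hy3
      simp only at this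
      refine ⟨y, ?_, ?_, hsub hy3⟩
      · simp; omega
      · simp; omega

theorem HasForm.mono {ι : Type} {r s : ℕ} {A B : Finset (ℕ × ι)} (h : HasForm r s A) (hAB : A ⊆ B) :
    HasForm r s B := by
  obtain ⟨T, hT, x, hx, h⟩ := h
  exact ⟨T, hT, x, hx, fun c hc i hi => by
    obtain ⟨y, a, b, c⟩ := h c hc i hi
    exact ⟨y, a, b, hAB c⟩⟩

theorem row_bound {ι : Type} [DecidableEq ι] {a m r : ℕ} {B : Finset (ℕ × ι)} (hB : ∀ p ∈ B, a ≤ p.1 ∧ p.1 < a + m)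
    (h : ∀ y, (B.filter (fun p => p.1 = y)).card ≤ r) : B.card ≤ r * m := by
  have := Finset.card_le_mul_card_image_of_maps_to (f := Prod.fst) (s := B) (t := Finset.Ico a (a+m))
    (fun p hp => by simpa using hB p hp) r (fun y _ => h y)
  simpa using this

theorem inj_snd {ι : Type} [DecidableEq ι] {A B : Finset (ℕ × ι)} (hBA : B ⊆ A)
    (h : ∀ p ∈ B, ∀ q ∈ B, p.2 = q.2 → p.1 ≤ q.1) : B.card ≤ (A.image Prod.snd).card := by
  apply Finset.card_le_card_of_injOn Prod.snd
  · intro p hp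
    exact Finset.mem_image_of_mem _ (hBA hp)
  · intro p hp q hq hpq
    exact Prod.ext (le_antisymm (h p hp q hq hpq) (h q hq p hp hpq.symm)) hpq

theorem exists_big {ι : Type} (A : Finset (ℕ × ι)) : ∃ M, ∀ p ∈ A, p.1 < M :=
  ⟨A.sup Prod.fst + 1, fun p hp => Nat.lt_succ_of_le (Finset.le_sup (f := Prod.fst) hp)⟩

theorem base2 (ι : Type) [DecidableEq ι] (r m : ℕ) : FBd ι r 2 m 1 r := by
  classical
  intro a A hA hf
  set B := A.filter (fun p => ∃ q ∈ A, q.2 = p.2 ∧ p.1 < q.1) with hBdef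
  have h1 : (A.filter (fun p => ¬ ∃ q ∈ A, q.2 = p.2 ∧ p.1 < q.1)).card ≤ (A.image Prod.snd).card := by
    apply inj_snd (Finset.filter_subset _ _)
    intro p hp q hq hpq
    by_contra hlt
    simp only [Finset.mem_filter] at hp hq
    exact hq.2 ⟨p, hp.1, hpq, by omega⟩
  have h2 : B.card ≤ r * m := by
    apply row_bound (a := a)
    · intro p hp; exact hA p (Finset.mem_filter.1 hp).1
    · intro y
      by_contra hlt
      push Not at hlt
      have hcard : (B.filter (fun p => p.1 = y)).card = ((B.filter (fun p => p.1 = y)).image Prod.snd).card := by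
        rw [Finset.card_image_of_injOn]
        intro p hp q hq hpq
        simp at hp hq
        exact Prod.ext (by omega) hpq
      obtain ⟨T, hT, hTc⟩ := Finset.exists_subset_card_eq (hcard ▸ hlt.le)
      obtain ⟨M, hM⟩ := exists_big A
      apply hf
      refine ⟨T, hTc, fun j => if j = 0 then 0 else if j = 1 then y + 1 else max M (y+1), ?_, ?_⟩
      · intro i j hij
        simp only
        split_ifs <;> omega
      · intro c hc i hi
        obtain ⟨p, hp, hpc⟩ := Finset.mem_image.1 (hT hc)
        simp only [hBdef, Finset.mem_filter] at hp
        obtain ⟨⟨hpA, q, hqA, hq2, hq1⟩, hpy⟩ := hp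
        have e1 : (y, c) = p := Prod.ext hpy.symm hpc.symm
        have e2 : (q.1, c) = q := Prod.ext rfl (by rw [hq2, hpc])
        have := hM q hqA
        interval_cases i
        · exact ⟨y, by simp, by simp, e1 ▸ hpA⟩
        · exact ⟨q.1, by simp; omega, by simp; omega, e2 ▸ hqA⟩
  have := Finset.card_filter_add_card_filter_not (s := A) (fun p => ∃ q ∈ A, q.2 = p.2 ∧ p.1 < q.1)
  rw [← hBdef] at this
  omega

theorem base3 (ι : Type) [DecidableEq ι] (r m : ℕ) : FBd ι r 3 m 2 r := by
  classical
  intro a A hA hf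
  set B := A.filter (fun p => (∃ q ∈ A, q.2 = p.2 ∧ p.1 < q.1) ∧ (∃ q ∈ A, q.2 = p.2 ∧ q.1 < p.1)) with hBdef
  have h1 : (A.filter (fun p => ¬ ∃ q ∈ A, q.2 = p.2 ∧ p.1 < q.1)).card ≤ (A.image Prod.snd).card := by
    apply inj_snd (Finset.filter_subset _ _)
    intro p hp q hq hpq
    by_contra hlt
    simp only [Finset.mem_filter] at hp hq
    exact hq.2 ⟨p, hp.1, hpq, by omega⟩
  have h1' : (A.filter (fun p => ¬ ∃ q ∈ A, q.2 = p.2 ∧ q.1 < p.1)).card ≤ (A.image Prod.snd).card := by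
    apply inj_snd (Finset.filter_subset _ _)
    intro p hp q hq hpq
    by_contra hlt
    simp only [Finset.mem_filter] at hp hq
    exact hp.2 ⟨q, hq.1, hpq.symm, by omega⟩
  have h2 : B.card ≤ r * m := by
    apply row_bound (a := a)
    · intro p hp; exact hA p (Finset.mem_filter.1 hp).1
    · intro y
      by_contra hlt
      push Not at hlt
      have hcard : (B.filter (fun p => p.1 = y)).card = ((B.filter (fun p => p.1 = y)).image Prod.snd).card := by
        rw [Finset.card_image_of_injOn]
        intro p hp q hq hpq
        simp at hp hq
        exact Prod.ext (by omega) hpq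
      obtain ⟨T, hT, hTc⟩ := Finset.exists_subset_card_eq (hcard ▸ hlt.le)
      obtain ⟨M, hM⟩ := exists_big A
      apply hf
      refine ⟨T, hTc, fun j => if j = 0 then 0 else if j = 1 then y else if j = 2 then y + 1 else max M (y+1), ?_, ?_⟩
      · intro i j hij
        simp only
        split_ifs <;> omega
      · intro c hc i hi
        obtain ⟨p, hp, hpc⟩ := Finset.mem_image.1 (hT hc)
        simp only [hBdef, Finset.mem_filter] at hp
        obtain ⟨⟨hpA, ⟨q, hqA, hq2, hq1⟩, ⟨z, hzA, hz2, hz1⟩⟩, hpy⟩ := hp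
        have e1 : (y, c) = p := Prod.ext hpy.symm hpc.symm
        have e2 : (q.1, c) = q := Prod.ext rfl (by rw [hq2, hpc])
        have e3 : (z.1, c) = z := Prod.ext rfl (by rw [hz2, hpc])
        have := hM q hqA
        interval_cases i
        · exact ⟨z.1, by simp, by simp; omega, e3 ▸ hzA⟩
        · exact ⟨y, by simp, by simp, e1 ▸ hpA⟩
        · exact ⟨q.1, by simp; omega, by simp; omega, e2 ▸ hqA⟩
  have hun : A ⊆ B ∪ ((A.filter (fun p => ¬ ∃ q ∈ A, q.2 = p.2 ∧ p.1 < q.1)) ∪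
      (A.filter (fun p => ¬ ∃ q ∈ A, q.2 = p.2 ∧ q.1 < p.1))) := by
    intro p hp
    simp only [hBdef, Finset.mem_union, Finset.mem_filter, hp, true_and]
    by_cases h1 : ∃ q ∈ A, q.2 = p.2 ∧ p.1 < q.1
    · by_cases h2 : ∃ q ∈ A, q.2 = p.2 ∧ q.1 < p.1
      · exact Or.inl ⟨h1, h2⟩
      · exact Or.inr (Or.inr h2)
    · exact Or.inr (Or.inl h1)
  have h3 := Finset.card_le_card hun
  have h4 := Finset.card_union_le B ((A.filter (fun p => ¬ ∃ q ∈ A, q.2 = p.2 ∧ p.1 < q.1)) ∪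
      (A.filter (fun p => ¬ ∃ q ∈ A, q.2 = p.2 ∧ q.1 < p.1)))
  have h5 := Finset.card_union_le (A.filter (fun p => ¬ ∃ q ∈ A, q.2 = p.2 ∧ p.1 < q.1))
      (A.filter (fun p => ¬ ∃ q ∈ A, q.2 = p.2 ∧ q.1 < p.1))
  omega

theorem sum_min (g m b : ℕ) : ∑ i ∈ range b, min g (m - i * g) = min (b * g) m := by
  induction b with
  | zero => simp
  | succ b ih =>
    rw [Finset.sum_range_succ, ih, Nat.succ_mul]
    omega

theorem sum_groups {ι : Type} [DecidableEq ι] {r s a m g R X : ℕ} {B : Finset (ℕ × ι)}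
    (hB : ∀ p ∈ B, a ≤ p.1 ∧ p.1 < a + m) (hg : 1 ≤ g)
    (hform : ∀ i, ¬ HasForm r s (B.filter (fun p => (p.1 - a) / g = i)))
    (hF : ∀ m' ≤ g, FBd ι r s m' R X) :
    B.card ≤ R * ((B.image (fun p => ((p.1 - a) / g, p.2))).card + X * m) := by
  have hmap : ∀ p ∈ B, (p.1 - a) / g ∈ range (m + 1) := by
    intro p hp
    have := hB p hp
    have h2 := Nat.div_le_self (p.1 - a) g
    simp only [Finset.mem_range]; omega
  rw [Finset.card_eq_sum_card_fiberwise hmap]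
  have h1 : ∀ i ∈ range (m+1), (B.filter (fun p => (p.1 - a) / g = i)).card ≤
      R * (((B.filter (fun p => (p.1 - a) / g = i)).image Prod.snd).card + X * min g (m - i * g)) := by
    intro i _
    apply hF _ (min_le_left _ _) (a + i * g) _ _ (hform i)
    intro p hp
    simp only [Finset.mem_filter] at hp
    have h3 := hB p hp.1
    have h4 := hp.2
    have h5 := Nat.div_add_mod (p.1 - a) g
    have h6 := Nat.mod_lt (p.1 - a) hg
    rw [h4, mul_comm] at h5
    omega
  refine (Finset.sum_le_sum h1).trans ?_
  rw [← Finset.mul_sum, Finset.sum_add_distrib, ← Finset.mul_sum, sum_min]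
  apply Nat.mul_le_mul_left
  apply Nat.add_le_add
  · have hmap2 : ∀ q ∈ B.image (fun p => ((p.1 - a) / g, p.2)), q.1 ∈ range (m+1) := by
      intro q hq
      obtain ⟨p, hp, rfl⟩ := Finset.mem_image.1 hq
      exact hmap p hp
    rw [Finset.card_eq_sum_card_fiberwise hmap2]
    apply Finset.sum_le_sum
    intro i _
    apply Finset.card_le_card_of_injOn (fun c => (i, c))
    · intro c hc
      simp only [Finset.coe_image, Set.mem_image, Finset.mem_coe, Finset.mem_filter] at hc
      obtain ⟨p, hp, rfl⟩ := hc
      simp only [Finset.coe_filter, Set.mem_ofPred_eq, Finset.mem_image, and_true]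
      exact ⟨p, hp.1, by rw [hp.2]⟩
    · intro c _ d _ h
      exact (Prod.mk.inj h).2
  · exact Nat.mul_le_mul_left _ (min_le_right _ _)

theorem group_step (ι : Type) [DecidableEq ι] {r s m g b R X R1 X1 R2 X2 R' X' Rn Xn : ℕ}
    (hs : 1 ≤ s) (hg : 1 ≤ g) (hb : m ≤ b * g)
    (H0 : ∀ m' ≤ g, FBd ι r (s+2) m' R X)
    (H1 : ∀ m' ≤ g, FBd ι r (s+1) m' R1 X1)
    (H2 : ∀ m' ≤ g, FBd ι r s m' R2 X2)
    (H3 : FBd ι r (s+2) b R' X')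
    (hR : R ≤ Rn) (hR2 : 2 * R1 + R2 * R' ≤ Rn)
    (hX : R * (X * m) + 2 * (R1 * (X1 * m)) + R2 * (X2 * m) + R2 * (R' * (X' * b)) ≤ Rn * (Xn * m)) :
    FBd ι r (s+2) m Rn Xn := by
  classical
  intro a A hA hf
  set h : ℕ × ι → ℕ := fun p => (p.1 - a) / g with hh
  set bef : ℕ × ι → Prop := fun p => ∃ q ∈ A, q.2 = p.2 ∧ h q < h p with hbef
  set aft : ℕ × ι → Prop := fun p => ∃ q ∈ A, q.2 = p.2 ∧ h p < h q with haft
  set loc := A.filter (fun p => ¬ bef p ∧ ¬ aft p) with hloc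
  set st := A.filter (fun p => ¬ bef p ∧ aft p) with hst
  set en := A.filter (fun p => bef p ∧ ¬ aft p) with hen
  set mid := A.filter (fun p => bef p ∧ aft p) with hmid
  have hlo : ∀ p ∈ A, a + h p * g ≤ p.1 ∧ p.1 < a + (h p + 1) * g := by
    intro p hp
    have h3 := hA p hp
    have h5 := Nat.div_add_mod (p.1 - a) g
    have h6 := Nat.mod_lt (p.1 - a) hg
    have : h p = (p.1 - a) / g := rfl
    rw [← this, mul_comm] at h5
    rw [Nat.succ_mul]; omega
  have hmono : ∀ i j, i ≤ j → a + i * g ≤ a + j * g := fun i j hij =>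
    Nat.add_le_add_left (Nat.mul_le_mul_right _ hij) _
  have hsplit : A.card ≤ loc.card + st.card + en.card + mid.card := by
    have : A ⊆ (loc ∪ st) ∪ (en ∪ mid) := by
      intro p hp
      simp only [hloc, hst, hen, hmid, Finset.mem_union, Finset.mem_filter, hp, true_and]
      tauto
    have h1 := Finset.card_le_card this
    have h2 := Finset.card_union_le (loc ∪ st) (en ∪ mid)
    have h3 := Finset.card_union_le loc st
    have h4 := Finset.card_union_le en mid
    omega
  -- column sets
  set ng := ((A.filter (fun p => bef p ∨ aft p)).image Prod.snd).card with hng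
  have hinj : ∀ B : Finset (ℕ × ι), (∀ p ∈ B, ∀ q ∈ B, p.2 = q.2 → h p ≤ h q) →
      (B.image (fun p => (h p, p.2))).card ≤ (B.image Prod.snd).card := by
    intro B hB
    apply Finset.card_le_card_of_injOn Prod.snd
    · intro q hq
      simp only [Finset.coe_image, Set.mem_image, Finset.mem_coe] at hq ⊢
      obtain ⟨p, hp, rfl⟩ := hq
      exact ⟨p, hp, rfl⟩
    · intro q hq q' hq' hqq
      simp only [Finset.coe_image, Set.mem_image, Finset.mem_coe] at hq hq'
      obtain ⟨p, hp, rfl⟩ := hq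
      obtain ⟨p', hp', rfl⟩ := hq'
      simp only at hqq
      exact Prod.ext (le_antisymm (hB p hp p' hp' hqq) (hB p' hp' p hp hqq.symm)) hqq
  have hlocn : (loc.image (fun p => (h p, p.2))).card ≤ (loc.image Prod.snd).card := by
    apply hinj
    intro p hp q hq hpq
    by_contra hlt
    simp only [hloc, Finset.mem_filter] at hp hq
    exact hq.2.2 ⟨p, hp.1, hpq, by omega⟩
  have hstn : (st.image (fun p => (h p, p.2))).card ≤ ng := by
    refine (hinj st ?_).trans (Finset.card_le_card (Finset.image_subset_image ?_))
    · intro p hp q hq hpq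
      by_contra hlt
      simp only [hst, Finset.mem_filter] at hp hq
      exact hp.2.1 ⟨q, hq.1, hpq.symm, by omega⟩
    · intro p hp
      simp only [hst, Finset.mem_filter] at hp ⊢
      exact ⟨hp.1, Or.inr hp.2.2⟩
  have henn : (en.image (fun p => (h p, p.2))).card ≤ ng := by
    refine (hinj en ?_).trans (Finset.card_le_card (Finset.image_subset_image ?_))
    · intro p hp q hq hpq
      by_contra hlt
      simp only [hen, Finset.mem_filter] at hp hq
      exact hq.2.2 ⟨p, hp.1, hpq, by omega⟩
    · intro p hp
      simp only [hen, Finset.mem_filter] at hp ⊢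
      exact ⟨hp.1, Or.inl hp.2.1⟩
  have hmidn : (mid.image Prod.snd).card ≤ ng := by
    refine Finset.card_le_card (Finset.image_subset_image ?_)
    intro p hp
    simp only [hmid, Finset.mem_filter] at hp ⊢
    exact ⟨hp.1, Or.inl hp.2.1⟩
  have hcols : (loc.image Prod.snd).card + ng ≤ (A.image Prod.snd).card := by
    rw [hng, ← Finset.card_union_of_disjoint]
    · apply Finset.card_le_card
      intro c hc
      simp only [Finset.mem_union, Finset.mem_image] at hc ⊢
      rcases hc with ⟨p, hp, rfl⟩ | ⟨p, hp, rfl⟩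
      · exact ⟨p, (Finset.mem_filter.1 hp).1, rfl⟩
      · exact ⟨p, (Finset.mem_filter.1 hp).1, rfl⟩
    · rw [Finset.disjoint_left]
      intro c hc hc'
      obtain ⟨p, hp, rfl⟩ := Finset.mem_image.1 hc
      obtain ⟨p', hp', hpp⟩ := Finset.mem_image.1 hc'
      simp only [hloc, Finset.mem_filter] at hp hp'
      have e1 : h p' = h p := by
        by_contra hne
        rcases lt_or_gt_of_ne hne with hlt | hlt
        · exact hp.2.1 ⟨p', hp'.1, hpp, hlt⟩
        · exact hp.2.2 ⟨p', hp'.1, hpp, hlt⟩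
      rcases hp'.2 with ⟨q, hq, hq2, hq3⟩ | ⟨q, hq, hq2, hq3⟩
      · exact hp.2.1 ⟨q, hq, by rw [hq2, hpp], by omega⟩
      · exact hp.2.2 ⟨q, hq, by rw [hq2, hpp], by omega⟩
  -- bounds
  have bloc : loc.card ≤ R * ((loc.image (fun p => (h p, p.2))).card + X * m) := by
    refine sum_groups (B := loc) (a := a) (g := g) (m := m) (fun p hp => hA p (Finset.mem_filter.1 hp).1) hg ?_ H0
    intro i hc
    exact hf (hc.mono ((Finset.filter_subset _ _).trans (Finset.filter_subset _ _)))
  have bst : st.card ≤ R1 * ((st.image (fun p => (h p, p.2))).card + X1 * m) := by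
    refine sum_groups (B := st) (a := a) (g := g) (m := m) (fun p hp => hA p (Finset.mem_filter.1 hp).1) hg ?_ H1
    intro i hc
    refine hf (extend_after (e := a + (i+1) * g) (by omega)
      ((Finset.filter_subset _ _).trans (Finset.filter_subset _ _)) ?_ ?_ hc)
    · intro p hp
      simp only [hst, Finset.mem_filter] at hp
      have := (hlo p hp.1.1).2
      rwa [show h p = i from hp.2] at this
    · intro p hp
      simp only [hst, Finset.mem_filter] at hp
      obtain ⟨⟨hpA, _, q, hq, hq2, hq3⟩, hpi⟩ := hp
      have hpi : h p = i := hpi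
      refine ⟨q.1, (hmono (i+1) (h q) (by omega)).trans (hlo q hq).1, ?_⟩
      rw [← hq2]; exact hq
  have ben : en.card ≤ R1 * ((en.image (fun p => (h p, p.2))).card + X1 * m) := by
    refine sum_groups (B := en) (a := a) (g := g) (m := m) (fun p hp => hA p (Finset.mem_filter.1 hp).1) hg ?_ H1
    intro i hc
    refine hf (extend_before (e := a + i * g) (by omega)
      ((Finset.filter_subset _ _).trans (Finset.filter_subset _ _)) ?_ ?_ hc)
    · intro p hp
      simp only [hen, Finset.mem_filter] at hp
      have := (hlo p hp.1.1).1
      rwa [show h p = i from hp.2] at this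
    · intro p hp
      simp only [hen, Finset.mem_filter] at hp
      obtain ⟨⟨hpA, ⟨q, hq, hq2, hq3⟩, _⟩, hpi⟩ := hp
      have hpi : h p = i := hpi
      refine ⟨q.1, (hlo q hq).2.trans_le (hmono (h q + 1) i (by omega)), ?_⟩
      rw [← hq2]; exact hq
  have bmid : mid.card ≤ R2 * ((mid.image (fun p => (h p, p.2))).card + X2 * m) := by
    refine sum_groups (B := mid) (a := a) (g := g) (m := m) (fun p hp => hA p (Finset.mem_filter.1 hp).1) hg ?_ H2
    intro i hc
    set mi := mid.filter (fun p => (p.1 - a) / g = i) with hmi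
    have hmiP : ∀ p ∈ mi, p ∈ A ∧ bef p ∧ aft p ∧ h p = i := by
      intro p hp
      simp only [hmi, hmid, Finset.mem_filter] at hp
      exact ⟨hp.1.1, hp.1.2.1, hp.1.2.2, hp.2⟩
    set A' := A.filter (fun p => i ≤ h p ∧ p.2 ∈ mi.image Prod.snd) with hA'
    have f1 : HasForm r (s+1) A' := by
      refine extend_after (e := a + (i+1) * g) hs ?_ ?_ ?_ hc
      · intro p hp
        have := hmiP p hp
        simp only [hA', Finset.mem_filter]
        exact ⟨this.1, this.2.2.2.ge, Finset.mem_image_of_mem _ hp⟩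
      · intro p hp
        have := hmiP p hp
        have h2 := (hlo p this.1).2
        rwa [this.2.2.2] at h2
      · intro p hp
        obtain ⟨hpA, _, ⟨q, hq, hq2, hq3⟩, hpi⟩ := hmiP p hp
        refine ⟨q.1, (hmono (i+1) (h q) (by omega)).trans (hlo q hq).1, ?_⟩
        rw [← hq2]
        simp only [hA', Finset.mem_filter]
        refine ⟨hq, ?_, ?_⟩
        · change i ≤ h q
          omega
        · rw [hq2]; exact Finset.mem_image_of_mem _ hp
    refine hf (extend_before (e := a + i * g) (by omega) (Finset.filter_subset _ _) ?_ ?_ f1)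
    · intro p hp
      simp only [hA', Finset.mem_filter] at hp
      exact (hmono i (h p) hp.2.1).trans (hlo p hp.1).1
    · intro p hp
      simp only [hA', Finset.mem_filter] at hp
      obtain ⟨p', hp', hpp⟩ := Finset.mem_image.1 hp.2.2
      obtain ⟨hpA, ⟨q, hq, hq2, hq3⟩, _, hpi⟩ := hmiP p' hp'
      refine ⟨q.1, (hlo q hq).2.trans_le (hmono (h q + 1) i (by omega)), ?_⟩
      rw [← hpp, ← hq2]; exact hq
  have bcon : (mid.image (fun p => (h p, p.2))).card ≤ R' * ((mid.image Prod.snd).card + X' * b) := by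
    have := H3 0 (mid.image (fun p => (h p, p.2))) ?_ ?_
    · rwa [Finset.image_image] at this
    · intro q hq
      obtain ⟨p, hp, rfl⟩ := Finset.mem_image.1 hq
      have hp' := (Finset.mem_filter.1 hp).1
      have h1 := hA p hp'
      refine ⟨Nat.zero_le _, ?_⟩
      simp only [zero_add]
      apply Nat.div_lt_of_lt_mul
      rw [mul_comm]; omega
    · rintro ⟨T, hT, x, hx, hform⟩
      apply hf
      refine ⟨T, hT, fun j => a + x j * g, fun i j hij => hmono _ _ (hx hij), ?_⟩
      intro c hc i hi
      obtain ⟨y, hy1, hy2, hy3⟩ := hform c hc i hi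
      obtain ⟨p, hp, hpe⟩ := Finset.mem_image.1 hy3
      have hp' := (Finset.mem_filter.1 hp).1
      obtain ⟨rfl, rfl⟩ := Prod.mk.inj hpe
      exact ⟨p.1, (hmono _ _ hy1).trans (hlo p hp').1,
        (hlo p hp').2.trans_le (hmono _ _ hy2), hp'⟩
  set nl := (loc.image Prod.snd).card
  set n := (A.image Prod.snd).card
  have e1 : loc.card ≤ R * nl + R * (X * m) := by
    refine bloc.trans ?_
    rw [← Nat.mul_add]; gcongr
  have e2 : st.card ≤ R1 * ng + R1 * (X1 * m) := by
    refine bst.trans ?_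
    rw [← Nat.mul_add]; gcongr
  have e3 : en.card ≤ R1 * ng + R1 * (X1 * m) := by
    refine ben.trans ?_
    rw [← Nat.mul_add]; gcongr
  have e4 : mid.card ≤ R2 * (R' * ng) + R2 * (R' * (X' * b)) + R2 * (X2 * m) := by
    refine bmid.trans ?_
    rw [← Nat.mul_add, ← Nat.mul_add, ← Nat.mul_add]
    gcongr
    refine bcon.trans ?_
    gcongr
  have e5 : R * nl ≤ Rn * nl := Nat.mul_le_mul_right _ hR
  have e6 : 2 * (R1 * ng) + R2 * (R' * ng) ≤ Rn * ng := by
    have := Nat.mul_le_mul_right ng hR2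
    calc _ = (2 * R1 + R2 * R') * ng := by ring
      _ ≤ _ := this
  have e7 : Rn * nl + Rn * ng ≤ Rn * n := by
    rw [← Nat.mul_add]; exact Nat.mul_le_mul_left _ hcols
  rw [Nat.mul_add]
  omega
end VCX

namespace VCX
open Finset

def Rr : ℕ → ℕ → ℕ
  | 0, _ => 1
  | 1, _ => 1
  | 2, _ => 1
  | 3, _ => 2
  | s + 4, 0 => 2 * Rr (s+3) 0 + 2 * Rr (s+2) 0
  | s + 4, d + 1 => 2 * Rr (s+3) (d+1) + Rr (s+2) (d+1) * Rr (s+4) d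
  termination_by s d => (s, d)

theorem Rr_zero (s : ℕ) : Rr (s+4) 0 = 2 * Rr (s+3) 0 + 2 * Rr (s+2) 0 := by
  rw [Rr]

theorem Rr_succ (s d : ℕ) : Rr (s+4) (d+1) = 2 * Rr (s+3) (d+1) + Rr (s+2) (d+1) * Rr (s+4) d := by
  rw [Rr]

theorem Rr_two (d : ℕ) : Rr 2 d = 1 := by rw [Rr]
theorem Rr_three (d : ℕ) : Rr 3 d = 2 := by rw [Rr]

theorem Rr_pos (s : ℕ) : ∀ d, 1 ≤ Rr s d := by
  induction s using Nat.strong_induction_on with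
  | _ s ih =>
    intro d
    rcases s with _ | _ | _ | _ | s
    · rw [Rr]
    · rw [Rr]
    · rw [Rr_two]
    · rw [Rr_three]; norm_num
    · have h1 := ih (s+3) (by omega)
      cases d with
      | zero => rw [Rr_zero]; have := h1 0; omega
      | succ d => rw [Rr_succ]; have := h1 (d+1); omega

theorem Rr_mono_succ (s d : ℕ) : Rr s d ≤ Rr s (d+1) := by
  rcases s with _ | _ | _ | _ | s
  · simp [Rr]
  · simp [Rr]
  · simp [Rr_two]
  · simp [Rr_three]
  · rw [Rr_succ]
    have := Nat.mul_le_mul_right (Rr (s+4) d) (Rr_pos (s+2) (d+1))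
    change Rr (s+4) d ≤ _
    omega

theorem FBd.mono {ι : Type} [DecidableEq ι] {r s m R X R' X' : ℕ} (h : FBd ι r s m R X)
    (hR : R ≤ R') (hX : X ≤ X') : FBd ι r s m R' X' := by
  intro a A hA hf
  exact (h a A hA hf).trans (Nat.mul_le_mul hR (by gcongr))

theorem FBd_trivial (ι : Type) [DecidableEq ι] (r s m : ℕ) : FBd ι r s m m 0 := by
  intro a A hA hf
  have h1 : A ⊆ (Finset.Ico a (a+m)) ×ˢ (A.image Prod.snd) := by
    intro p hp
    simp only [Finset.mem_product, Finset.mem_Ico]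
    exact ⟨hA p hp, Finset.mem_image_of_mem _ hp⟩
  have h2 := Finset.card_le_card h1
  rw [Finset.card_product] at h2
  simpa using h2

theorem le_mul_pow' (r x s : ℕ) (hx : 1 ≤ x) : r ≤ r * x ^ s :=
  Nat.le_mul_of_pos_right _ (Nat.pow_pos hx)

theorem binary (ι : Type) [DecidableEq ι] (r k : ℕ) :
    ∀ s m, 2 ≤ s → m ≤ 2 ^ k → FBd ι r s m (Rr s 0) (r * (k+1)^s) := by
  induction k with
  | zero =>
    intro s m hs hm
    exact (FBd_trivial ι r s m).mono (hm.trans (by simpa using Rr_pos s 0)) (Nat.zero_le _)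
  | succ k ih =>
    intro s m hs hm
    rcases s with _ | _ | _ | _ | s
    · omega
    · omega
    · exact (base2 ι r m).mono (Rr_pos _ _) (le_mul_pow' _ _ _ (by omega))
    · exact (base3 ι r m).mono (by rw [Rr_three]) (le_mul_pow' _ _ _ (by omega))
    · refine group_step ι (s := s + 2) (g := 2 ^ k) (b := 2) (R := Rr (s+4) 0) (X := r * (k+1)^(s+4))
        (R1 := Rr (s+3) 0) (X1 := r * (k+1)^(s+3)) (R2 := Rr (s+2) 0) (X2 := r * (k+1)^(s+2)) (R' := 2) (X' := 0)
        (by omega) Nat.one_le_two_pow (by rw [pow_succ] at hm; omega)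
        (fun m' hm' => ih _ _ (by omega) hm') (fun m' hm' => ih _ _ (by omega) hm')
        (fun m' hm' => ih _ _ (by omega) hm') (FBd_trivial _ _ _ _) le_rfl (by rw [Rr_zero]; omega) ?_
      rw [Rr_zero]
      set R1 := Rr (s+3) 0
      set R2 := Rr (s+2) 0
      have hx : (k+1)^(s+2) ≤ (k+1)^(s+3) := Nat.pow_le_pow_right (by omega) (by omega)
      have hy : (k+1)^(s+4) + (k+1)^(s+3) ≤ (k+1+1)^(s+4) := by
        calc (k+1)^(s+4) + (k+1)^(s+3) = (k+1+1) * (k+1)^(s+3) := by ring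
          _ ≤ (k+1+1) * (k+1+1)^(s+3) := by gcongr; omega
          _ = _ := by ring
      calc _ ≤ (2*R1+2*R2)*(r*(k+1)^(s+4)*m) + 2*(R1*(r*(k+1)^(s+3)*m)) + R2*(r*(k+1)^(s+3)*m) + 0 := by
              gcongr
              · omega
        _ ≤ (2*R1+2*R2)*(r*(k+1)^(s+4)*m) + 2*(R1*(r*(k+1)^(s+3)*m)) + 2*(R2*(r*(k+1)^(s+3)*m)) := by
              omega
        _ = (2*R1+2*R2)*(r*((k+1)^(s+4)+(k+1)^(s+3))*m) := by ring
        _ ≤ _ := by gcongr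

def Bk : ℕ → ℕ → ℕ
  | 0, k => 2 * k + 1
  | _ + 1, 0 => 1
  | d + 1, k + 1 => Bk d (Bk (d+1) k)
  termination_by d k => (d, k)

theorem Bk_zero (k : ℕ) : Bk 0 k = 2 * k + 1 := by rw [Bk]
theorem Bk_succ_zero (d : ℕ) : Bk (d+1) 0 = 1 := by rw [Bk]
theorem Bk_succ_succ (d k : ℕ) : Bk (d+1) (k+1) = Bk d (Bk (d+1) k) := by rw [Bk]
theorem Bk_at_zero (d : ℕ) : Bk d 0 = 1 := by
  cases d with
  | zero => rw [Bk_zero]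
  | succ d => rw [Bk_succ_zero]

theorem claim (ι : Type) [DecidableEq ι] (r c P : ℕ) (hc : 2 ≤ c)
    (hcP : ∀ k, (2 * k + 1 + c) ^ P ≤ 2 ^ (k + c - 1)) (d : ℕ) :
    ∀ k s m, 2 ≤ s → s < P → m ≤ (Bk d k + c) ^ P → FBd ι r s m (Rr s d) (r * (k + c) ^ s) := by
  induction d with
  | zero =>
    intro k s m hs hsP hm
    rw [Bk_zero] at hm
    have := binary ι r (k + c - 1) s m hs (hm.trans (hcP k))
    rwa [show k + c - 1 + 1 = k + c by omega] at this
  | succ d ihd =>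
    intro k
    induction k with
    | zero =>
      intro s m hs hsP hm
      rw [Bk_at_zero] at hm
      exact (ihd 0 s m hs hsP (by rwa [Bk_at_zero])).mono (Rr_mono_succ _ _) le_rfl
    | succ k ihk =>
      intro s m hs hsP hm
      rcases s with _ | _ | _ | _ | s
      · omega
      · omega
      · exact (base2 ι r m).mono (Rr_pos _ _) (le_mul_pow' _ _ _ (by omega))
      · exact (base3 ι r m).mono (by rw [Rr_three]) (le_mul_pow' _ _ _ (by omega))
      · rw [Bk_succ_succ] at hm
        set K := Bk (d+1) k with hK
        set g := (K + c) ^ P with hg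
        have hKc : 2 ≤ K + c := by omega
        by_cases hmg : m ≤ g
        · exact (ihk _ m hs hsP hmg).mono le_rfl (by gcongr; omega)
        · push Not at hmg
          have hg2 : (K + c)^(s+4) * 2 ≤ g := by
            calc (K+c)^(s+4) * 2 ≤ (K+c)^(s+4) * (K+c) := by gcongr
              _ = (K+c)^(s+5) := by ring
              _ ≤ g := Nat.pow_le_pow_right (by omega) (by omega)
          have hg3 : 2 ≤ g := by
            have : 1 ≤ (K+c)^(s+4) := Nat.pow_pos (by omega)
            omega
          have hdm := Nat.div_add_mod m g
          have hml := Nat.mod_lt m (show 0 < g by omega)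
          have hbm : m / g + 1 ≤ m := by
            have : 2 * (m/g) ≤ g * (m/g) := Nat.mul_le_mul_right _ hg3
            omega
          refine group_step ι (s := s + 2) (g := g) (b := m / g + 1) (R := Rr (s+4) (d+1)) (X := r * (k+c)^(s+4))
            (R1 := Rr (s+3) (d+1)) (X1 := r * (k+c)^(s+3)) (R2 := Rr (s+2) (d+1)) (X2 := r * (k+c)^(s+2))
            (R' := Rr (s+4) d) (X' := r * (K+c)^(s+4))
            (by omega) (by omega) (by rw [Nat.succ_mul, mul_comm]; omega)
            (fun m' hm' => ihk _ _ (by omega) (by omega) hm') (fun m' hm' => ihk _ _ (by omega) (by omega) hm')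
            (fun m' hm' => ihk _ _ (by omega) (by omega) hm')
            (ihd K _ _ (by omega) (by omega) (hbm.trans hm)) le_rfl (by rw [Rr_succ]) ?_
          have hRp : 1 ≤ Rr (s+4) d := Rr_pos _ _
          rw [Rr_succ]
          set R1 := Rr (s+3) (d+1)
          set R2 := Rr (s+2) (d+1)
          set R' := Rr (s+4) d
          have hb : (K+c)^(s+4) * (m/g+1) ≤ m := by
            have h1 : (K+c)^(s+4) * 2 * (m/g+1) ≤ g * (m/g+1) := by gcongr
            have h2 : g * (m/g+1) ≤ 2 * m := by rw [Nat.mul_succ]; omega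
            nlinarith
          have hx0 : 1 ≤ k + c := by omega
          rw [show k + 1 + c = k + c + 1 by omega]
          generalize k + c = x at *
          have hx : x^(s+2) ≤ x^(s+3) := Nat.pow_le_pow_right (by omega) (by omega)
          have hx1 : 1 ≤ x^(s+3) := Nat.pow_pos (by omega)
          have hy : x^(s+4) + 2*x^(s+3) ≤ (x+1)^(s+4) := by
            calc x^(s+4) + 2*x^(s+3) = x^(s+2) * (x^2+2*x) := by ring
              _ ≤ (x+1)^(s+2) * (x+1)^2 := by gcongr; omega; nlinarith
              _ = _ := by ring
          have hkey : R2 * (r * x^(s+2) * m) ≤ R2 * R' * (r * x^(s+3) * m) := by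
            calc R2 * (r * x^(s+2) * m) ≤ R2 * R' * (r * x^(s+2) * m) := by
                  gcongr; exact Nat.le_mul_of_pos_right _ hRp
              _ ≤ _ := by gcongr
          have hkey2 : R2 * (R' * (r * (K+c)^(s+4) * (m/g+1))) ≤ R2 * R' * (r * x^(s+3) * m) := by
            calc R2 * (R' * (r * (K+c)^(s+4) * (m/g+1))) = R2 * R' * (r * 1 * ((K+c)^(s+4) * (m/g+1))) := by ring
              _ ≤ _ := by gcongr
          have hkey3 : 2 * (R1 * (r * x^(s+3) * m)) ≤ 2 * (2 * (R1 * (r * x^(s+3) * m))) := by omega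
          calc _ ≤ (2*R1+R2*R')*(r*x^(s+4)*m) + 2 * (2*(R1*(r*x^(s+3)*m))) + R2 * R' * (r * x^(s+3) * m) +  R2 * R' * (r * x^(s+3) * m) := by
                gcongr
            _ = (2*R1+R2*R')*(r*(x^(s+4)+2*x^(s+3))*m) := by ring
            _ ≤ _ := by gcongr

theorem exists_c (P : ℕ) : ∃ c, 2 ≤ c ∧ ∀ k, (2 * k + 1 + c) ^ P ≤ 2 ^ (k + c - 1) := by
  have h := tendsto_pow_const_div_const_pow_of_one_lt P (r := (2:ℝ)) (by norm_num)
  have h2 := h.eventually (gt_mem_nhds (show (0:ℝ) < 1 / 2^(P+1) by positivity))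
  obtain ⟨c, hc⟩ := Filter.eventually_atTop.1 h2
  refine ⟨c + 2, by omega, fun k => ?_⟩
  have h3 := hc (k + (c+2)) (by omega)
  rw [div_lt_div_iff₀ (by positivity) (by positivity)] at h3
  have h4 : (k + (c+2))^P * 2^(P+1) < 1 * 2^(k+(c+2)) := by exact_mod_cast h3
  have h5 : 2^(k+(c+2)) = 2 * 2^(k+(c+2)-1) := by
    rw [← pow_succ']; congr 1
  calc (2*k+1+(c+2))^P ≤ (2*(k+(c+2)))^P := by gcongr; omega
    _ = 2^P * (k+(c+2))^P := by rw [mul_pow]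
    _ ≤ _ := by
      rw [h5, pow_succ] at h4
      nlinarith

/-! inverse Ackermann -/

theorem iterCount_bound (f : ℕ → ℕ) (h1 : ∀ y, 2 ≤ y → f y < y) (fuel : ℕ) :
    ∀ m, iterCount f fuel m ≤ m - 1 := by
  induction fuel with
  | zero => intro m; simp [iterCount]
  | succ n ih =>
    intro m
    rw [iterCount]
    split_ifs with h
    · omega
    · have := ih (f m)
      have := h1 m (by omega)
      omega

theorem iterCount_bound2 (f : ℕ → ℕ) (h1 : ∀ y, 2 ≤ y → f y < y) (h2 : ∀ y, 4 ≤ y → f y ≤ y - 2) (fuel m : ℕ)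
    (hm : 4 ≤ m) : iterCount f fuel m ≤ m - 2 := by
  cases fuel with
  | zero => simp [iterCount]
  | succ n =>
    rw [iterCount, if_neg (by omega)]
    have := iterCount_bound f h1 n (f m)
    have := h2 m hm
    omega

theorem alphaHier_succ2 (d m : ℕ) : alphaHier (d+2) m = iterCount (alphaHier (d+1)) m m := by
  rw [alphaHier]
theorem alphaHier_one (m : ℕ) : alphaHier 1 m = (m+1)/2 := by rw [alphaHier]

theorem alphaHier_props (d : ℕ) : (∀ y, 2 ≤ y → alphaHier (d+1) y < y) ∧ (∀ y, 4 ≤ y → alphaHier (d+1) y ≤ y - 2) := by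
  induction d with
  | zero => simp only [zero_add, alphaHier_one]; constructor <;> intro y hy <;> omega
  | succ d ih =>
    constructor
    · intro y hy
      rw [alphaHier_succ2]
      have := iterCount_bound _ ih.1 y y
      omega
    · intro y hy
      rw [alphaHier_succ2]
      exact iterCount_bound2 _ ih.1 ih.2 y y hy

theorem alphaHier_dec (d m : ℕ) : alphaHier (d+2) m ≤ max 3 (alphaHier (d+1) m - 1) := by
  rw [alphaHier_succ2]
  obtain ⟨h1, h2⟩ := alphaHier_props d
  cases m with
  | zero => simp [iterCount]
  | succ m =>
    rw [iterCount]
    split_ifs with h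
    · omega
    · by_cases h4 : 4 ≤ alphaHier (d+1) (m+1)
      · have := iterCount_bound2 _ h1 h2 m _ h4
        omega
      · have := iterCount_bound _ h1 m (alphaHier (d+1) (m+1))
        omega

theorem alphaHier_dec' (m j : ℕ) : alphaHier (j+1) m ≤ max 3 (m - j) := by
  induction j with
  | zero => simp only [zero_add, alphaHier_one]; omega
  | succ j ih =>
    have := alphaHier_dec j m
    change alphaHier (j+2) m ≤ _
    omega

theorem invAck_spec (m : ℕ) : 1 ≤ invAck m ∧ alphaHier (invAck m) m ≤ 3 := by
  have : {k : ℕ | 1 ≤ k ∧ alphaHier k m ≤ 3}.Nonempty := by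
    refine ⟨m + 1, by omega, ?_⟩
    have := alphaHier_dec' m m
    simpa using this
  exact Nat.sInf_mem this

theorem Bk_pos (d : ℕ) : ∀ k, 1 ≤ Bk d k := by
  induction d with
  | zero => intro k; rw [Bk_zero]; omega
  | succ d ih =>
    intro k
    cases k with
    | zero => rw [Bk_succ_zero]
    | succ k => rw [Bk_succ_succ]; exact ih _

theorem le_Bk (d : ℕ) : ∀ k n, alphaHier (d+1) n ≤ k → n ≤ Bk d k := by
  induction d with
  | zero => intro k n h; simp only [zero_add, alphaHier_one] at h; rw [Bk_zero]; omega
  | succ d ih =>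
    obtain ⟨h1, h2⟩ := alphaHier_props d
    have key : ∀ fuel m k, m ≤ fuel → iterCount (alphaHier (d+1)) fuel m ≤ k → m ≤ Bk (d+1) k := by
      intro fuel
      induction fuel with
      | zero => intro m k hm _; omega
      | succ n ihn =>
        intro m k hm hk
        rw [iterCount] at hk
        split_ifs at hk with hle
        · exact hle.trans (Bk_pos _ _)
        · obtain ⟨k, rfl⟩ : ∃ k', k = k' + 1 := ⟨k - 1, by omega⟩
          have := h1 m (by omega)
          rw [Bk_succ_succ]
          exact ih _ _ (ihn _ k (by omega) (by omega))
    intro k n h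
    rw [alphaHier_succ2] at h
    exact key n n k le_rfl h

theorem partA (r s : ℕ) (hs : 2 ≤ s) : ∃ X, 1 ≤ X ∧ ∀ (ι : Type) [DecidableEq ι], ∀ n m, m ≤ n →
    FBd ι r s m (Rr s (invAck n - 1)) X := by
  obtain ⟨c, hc2, hc⟩ := exists_c (s+1)
  refine ⟨r * (3 + c)^s + 1, by omega, ?_⟩
  intro ι _ n m hm
  obtain ⟨h1, h2⟩ := invAck_spec n
  obtain ⟨d, hd⟩ : ∃ d, invAck n = d + 1 := ⟨invAck n - 1, by omega⟩
  rw [hd] at h2 ⊢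
  have h3 := le_Bk d 3 n h2
  have h4 : m ≤ (Bk d 3 + c)^(s+1) := by
    have := Nat.le_self_pow (n := s+1) (by omega) (Bk d 3 + c)
    omega
  exact (claim ι r c (s+1) hc2 hc d 3 s m hs (by omega) h4).mono le_rfl (by omega)
end VCX

namespace VCX
open Finset

def Shat {ι : Type} (F : Finset (ι → ℕ)) (U : Finset ι) (b D : ℕ) : Prop :=
  ∃ T ⊆ U, T.card = D ∧ ∃ Θ : ι → Finset ℕ, (∀ i ∈ T, (Θ i).card = b) ∧
    ∀ σ : ι → ℕ, (∀ i ∈ T, σ i ∈ Θ i) → ∃ f ∈ F, ∀ i ∈ T, f i = σ i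

theorem choose_ge (b x : ℕ) (hb : 1 ≤ b) : x + 1 ≤ (b + x).choose b := by
  obtain ⟨b, rfl⟩ : ∃ b', b = b' + 1 := ⟨b - 1, by omega⟩
  induction x with
  | zero => simp
  | succ x ih =>
    rw [show b + 1 + (x + 1) = (b + 1 + x) + 1 by ring, Nat.choose_succ_succ']
    have : 0 < (b+1+x).choose b := Nat.choose_pos (by omega)
    omega

theorem le_choose (a b : ℕ) (hb : 1 ≤ b) : a ≤ b * (1 + a.choose b) := by
  by_cases h : a ≤ b
  · calc a ≤ b * 1 := by omega
      _ ≤ _ := by gcongr; omega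
  · obtain ⟨x, rfl⟩ : ∃ x, a = b + x := ⟨a - b, by omega⟩
    have := choose_ge b x hb
    calc b + x ≤ b * (1 + x) := by nlinarith
      _ ≤ _ := by gcongr; omega

theorem sauer {ι : Type} [DecidableEq ι] (b V : ℕ) (hb : 1 ≤ b) (hV : 1 ≤ V) (As : ι → Finset ℕ)
    (U : Finset ι) : ∀ (D : ℕ) (F : Finset (ι → ℕ)), (∀ f ∈ F, ∀ i, i ∉ U → f i = 0) →
    (∀ f ∈ F, ∀ i ∈ U, f i ∈ As i) → (∀ i ∈ U, (As i).card ≤ V) → ¬ Shat F U b (D+1) →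
    F.card ≤ (2 * b) ^ U.card * V ^ (b * D) := by
  classical
  induction U using Finset.induction_on with
  | empty =>
    intro D F h0 _ _ _
    have h1 : F ⊆ {0} := by
      intro f hf
      rw [Finset.mem_singleton]
      ext i
      exact h0 f hf i (by simp)
    have h2 := Finset.card_le_card h1
    have h3 : 1 ≤ V ^ (b * D) := Nat.pow_pos hV
    simp at h2 ⊢
    omega
  | insert j U hj ih =>
    intro D F h0 hA hAV hS
    set F0 := F.image (fun f => Function.update f j 0) with hF0
    set FT : Finset ℕ → Finset (ι → ℕ) := fun Θ => F0.filter (fun q => ∀ θ ∈ Θ, Function.update q j θ ∈ F) with hFT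
    set Vq : (ι → ℕ) → Finset ℕ := fun q => (As j).filter (fun θ => Function.update q j θ ∈ F) with hVq
    have g0 : ∀ q ∈ F0, ∀ i, i ∉ U → q i = 0 := by
      intro q hq i hi
      obtain ⟨f, hf, rfl⟩ := Finset.mem_image.1 hq
      by_cases hij : i = j
      · subst hij; simp
      · simp only [Function.update_of_ne hij]
        exact h0 f hf i (by simp [hij, hi])
    have gA : ∀ q ∈ F0, ∀ i ∈ U, q i ∈ As i := by
      intro q hq i hi
      obtain ⟨f, hf, rfl⟩ := Finset.mem_image.1 hq
      have hij : i ≠ j := fun h => hj (h ▸ hi)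
      simp only [Function.update_of_ne hij]
      exact hA f hf i (by simp [hi])
    have gV : ∀ i ∈ U, (As i).card ≤ V := fun i hi => hAV i (by simp [hi])
    have gS : ¬ Shat F0 U b (D+1) := by
      rintro ⟨T, hTU, hTc, Θ, hΘ, hσ⟩
      refine hS ⟨T, hTU.trans (Finset.subset_insert _ _), hTc, Θ, hΘ, ?_⟩
      intro σ hs
      obtain ⟨q, hq, hqs⟩ := hσ σ hs
      obtain ⟨f, hf, rfl⟩ := Finset.mem_image.1 hq
      refine ⟨f, hf, fun i hi => ?_⟩
      have hij : i ≠ j := fun h => hj (h ▸ hTU hi)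
      rw [← hqs i hi]
      simp [Function.update_of_ne hij]
    have b0 := ih D F0 g0 gA gV gS
    have bT : ∀ Θ ∈ (As j).powersetCard b, (FT Θ).card * V ^ b ≤ (2 * b) ^ U.card * V ^ (b * D) := by
      intro Θ hΘ
      rw [Finset.mem_powersetCard] at hΘ
      have key : ¬ Shat (FT Θ) U b D := by
        rintro ⟨T, hTU, hTc, Θ', hΘ', hσ⟩
        have hjT : j ∉ T := fun h => hj (hTU h)
        refine hS ⟨insert j T, Finset.insert_subset_insert _ hTU, by rw [Finset.card_insert_of_notMem hjT, hTc],
          Function.update Θ' j Θ, ?_, ?_⟩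
        · intro i hi
          by_cases hij : i = j
          · subst hij; simpa using hΘ.2
          · simp only [Function.update_of_ne hij]
            exact hΘ' i (by simpa [hij] using hi)
        · intro σ hs
          obtain ⟨q, hq, hqs⟩ := hσ σ (by
            intro i hi
            have hij : i ≠ j := fun h => hjT (h ▸ hi)
            have := hs i (by simp [hi])
            simpa [Function.update_of_ne hij] using this)
          have hjs := hs j (by simp)
          simp only [Function.update_self] at hjs
          refine ⟨Function.update q j (σ j), (Finset.mem_filter.1 hq).2 _ hjs, ?_⟩
          intro i hi
          by_cases hij : i = j
          · subst hij; simp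
          · simp only [Function.update_of_ne hij]
            exact hqs i (by simpa [hij] using hi)
      cases D with
      | zero =>
        have : FT Θ = ∅ := by
          by_contra hne
          obtain ⟨f, hf⟩ := Finset.nonempty_iff_ne_empty.2 hne
          exact key ⟨∅, by simp, by simp, fun _ => ∅, by simp, fun σ _ => ⟨f, hf, by simp⟩⟩
        rw [this]; simp
      | succ D =>
        have := ih D (FT Θ) (fun q hq => g0 q (Finset.mem_filter.1 hq).1)
          (fun q hq => gA q (Finset.mem_filter.1 hq).1) gV key
        calc (FT Θ).card * V^b ≤ ((2 * b) ^ U.card * V ^ (b * D)) * V ^ b := by gcongr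
          _ = _ := by ring
    have hcount : F.card = ∑ q ∈ F0, (Vq q).card := by
      rw [Finset.card_eq_sum_card_image (fun f => Function.update f j 0) F]
      apply Finset.sum_congr rfl
      intro q hq
      have hqj : q j = 0 := g0 q hq j hj
      apply Finset.card_bij' (fun f _ => f j) (fun θ _ => Function.update q j θ)
      · intro f hf
        rw [Finset.mem_filter] at hf
        have : Function.update q j (f j) = f := by rw [← hf.2]; simp
        simp only [hVq, Finset.mem_filter, this, hf.1, and_true]
        exact hA f hf.1 j (by simp)
      · intro θ hθ
        simp only [hVq, Finset.mem_filter] at hθ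
        rw [Finset.mem_filter]
        refine ⟨hθ.2, ?_⟩
        ext i
        by_cases hij : i = j
        · subst hij; simp [hqj]
        · simp [Function.update_of_ne hij]
      · intro f hf
        rw [Finset.mem_filter] at hf
        rw [← hf.2]; simp
      · intro θ hθ
        simp
    have hdc : ∑ q ∈ F0, (Vq q).card.choose b = ∑ Θ ∈ (As j).powersetCard b, (FT Θ).card := by
      have e1 : ∀ q, (Vq q).card.choose b = (((As j).powersetCard b).filter (fun Θ => ∀ θ ∈ Θ, Function.update q j θ ∈ F)).card := by
        intro q
        rw [← Finset.card_powersetCard]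
        congr 1
        ext Θ
        simp only [hVq, Finset.mem_powersetCard, Finset.mem_filter, Finset.subset_iff]
        constructor
        · rintro ⟨h1, h2⟩
          exact ⟨⟨fun x hx => (h1 hx).1, h2⟩, fun x hx => (h1 hx).2⟩
        · rintro ⟨⟨h1, h2⟩, h3⟩
          exact ⟨fun x hx => ⟨h1 hx, h3 x hx⟩, h2⟩
      simp only [e1, hFT, Finset.card_filter]
      exact Finset.sum_comm
    have hsum : ∑ Θ ∈ (As j).powersetCard b, (FT Θ).card ≤ (2 * b) ^ U.card * V ^ (b * D) := by
      have hcT : ((As j).powersetCard b).card ≤ V ^ b := by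
        rw [Finset.card_powersetCard]
        exact (Nat.choose_le_pow _ _).trans (Nat.pow_le_pow_left (hAV j (by simp)) _)
      have hVb : 0 < V ^ b := Nat.pow_pos hV
      have h1 : (∑ Θ ∈ (As j).powersetCard b, (FT Θ).card) * V ^ b ≤ ((2 * b) ^ U.card * V ^ (b * D)) * V ^ b := by
        rw [Finset.sum_mul]
        calc _ ≤ ∑ Θ ∈ (As j).powersetCard b, (2 * b) ^ U.card * V ^ (b * D) := Finset.sum_le_sum bT
          _ = ((As j).powersetCard b).card * ((2 * b) ^ U.card * V ^ (b * D)) := by simp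
          _ ≤ V ^ b * ((2 * b) ^ U.card * V ^ (b * D)) := by gcongr
          _ = _ := by ring
      exact Nat.le_of_mul_le_mul_right h1 hVb
    rw [Finset.card_insert_of_notMem hj]
    calc F.card = ∑ q ∈ F0, (Vq q).card := hcount
      _ ≤ ∑ q ∈ F0, b * (1 + (Vq q).card.choose b) := Finset.sum_le_sum (fun q _ => le_choose _ _ hb)
      _ = b * (F0.card + ∑ q ∈ F0, (Vq q).card.choose b) := by
          rw [← Finset.mul_sum, Finset.sum_add_distrib]; simp
      _ ≤ b * ((2 * b) ^ U.card * V ^ (b * D) + (2 * b) ^ U.card * V ^ (b * D)) := by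
          rw [hdc]; gcongr
      _ = _ := by ring

def NoSh {ι : Type} (F : Finset (ι → ℕ)) (U : Finset ι) (s : ℕ) : Prop :=
  ∀ T ⊆ U, T.card = s → ¬ ∀ e : ι → ℕ, Set.InjOn e T → ∃ f ∈ F, ∀ i ∈ T, ∀ j ∈ T, e i < e j → f i < f j

theorem partB {ι : Type} [DecidableEq ι] {s m R X V : ℕ} (hs : 1 ≤ s) (hV : 1 ≤ V) (As : ι → Finset ℕ)
    (U : Finset ι) (F : Finset (ι → ℕ)) (hF : FBd ι s s m R X)
    (h0 : ∀ f ∈ F, ∀ i, i ∉ U → f i = 0)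
    (hm : ∀ f ∈ F, ∀ i ∈ U, f i < m)
    (hA : ∀ f ∈ F, ∀ i ∈ U, f i ∈ As i) (hAV : ∀ i ∈ U, (As i).card ≤ V) (hN : NoSh F U s) :
    F.card ≤ (2 * (2 * R + 1)) ^ U.card * V ^ ((2 * R + 1) * (X * m)) := by
  classical
  apply sauer _ V (by omega) hV As U _ F h0 hA hAV
  rintro ⟨T, hTU, hTc, Θ, hΘ, hσ⟩
  have hne : ∀ i ∈ T, ∃ θ, θ ∈ Θ i := by
    intro i hi
    exact Finset.card_pos.1 (by rw [hΘ i hi]; omega)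
  choose! θ0 hθ0 using hne
  have hlt : ∀ i ∈ T, ∀ θ ∈ Θ i, θ < m := by
    intro i hi θ hθ
    obtain ⟨f, hf, hfi⟩ := hσ (Function.update θ0 i θ) (by
      intro k hk
      by_cases hki : k = i
      · subst hki; simpa using hθ
      · simpa [Function.update_of_ne hki] using hθ0 k hk)
    have := hfi i hi
    simp only [Function.update_self] at this
    rw [← this]
    exact hm f hf i (hTU hi)
  set M : Finset (ℕ × ι) := (T.sigma Θ).image (fun p => (p.2, p.1)) with hM
  have hMm : ∀ θ i, (θ, i) ∈ M ↔ i ∈ T ∧ θ ∈ Θ i := by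
    intro θ i
    simp only [hM, Finset.mem_image, Finset.mem_sigma, Prod.mk.injEq]
    constructor
    · rintro ⟨⟨a, b⟩, h, rfl, rfl⟩; exact h
    · intro h; exact ⟨⟨i, θ⟩, h, rfl, rfl⟩
  have hMc : M.card = (2 * R + 1) * (X * m + 1) := by
    rw [hM, Finset.card_image_of_injective, Finset.card_sigma, Finset.sum_congr rfl hΘ]
    · simp [hTc]; ring
    · rintro ⟨a, b⟩ ⟨c, d⟩ h
      simp only [Prod.mk.injEq] at h
      obtain ⟨rfl, rfl⟩ := h
      rfl
  have hcol : (M.image Prod.snd).card ≤ X * m + 1 := by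
    rw [← hTc]
    apply Finset.card_le_card
    intro c hc
    obtain ⟨p, hp, rfl⟩ := Finset.mem_image.1 hc
    exact ((hMm p.1 p.2).1 hp).1
  have hform : HasForm s s M := by
    by_contra hnf
    have h1 := hF 0 M (by
      intro p hp
      have := (hMm p.1 p.2).1 hp
      have := hlt _ this.1 _ this.2
      omega) hnf
    rw [hMc] at h1
    have h2 : R * ((M.image Prod.snd).card + X * m) ≤ R * (2 * (X * m + 1)) := by gcongr; omega
    nlinarith
  obtain ⟨T', hT'c, x, hx, hT'⟩ := hform
  have hT'T : T' ⊆ T := by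
    intro c hc
    obtain ⟨y, _, _, h⟩ := hT' c hc 0 (by omega)
    exact ((hMm _ _).1 h).1
  refine hN T' (hT'T.trans hTU) hT'c ?_
  intro e he
  have hrank : ∀ c ∈ T', (T'.filter (fun k => e k < e c)).card < s := by
    intro c hc
    rw [← hT'c]
    apply Finset.card_lt_card
    rw [Finset.filter_ssubset]
    exact ⟨c, hc, lt_irrefl _⟩
  have hex : ∀ c, ∃ y, c ∈ T' → x (T'.filter (fun k => e k < e c)).card ≤ y ∧
      y < x ((T'.filter (fun k => e k < e c)).card + 1) ∧ (y, c) ∈ M := by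
    intro c
    by_cases hc : c ∈ T'
    · obtain ⟨y, hy⟩ := hT' c hc _ (hrank c hc)
      exact ⟨y, fun _ => hy⟩
    · exact ⟨0, fun h => absurd h hc⟩
  choose ys hys using hex
  obtain ⟨f, hf, hfi⟩ := hσ (fun i => if i ∈ T' then ys i else θ0 i) (by
    intro i hi
    by_cases hiT : i ∈ T'
    · simp only [if_pos hiT]
      exact ((hMm _ _).1 (hys i hiT).2.2).2
    · simp only [if_neg hiT]
      exact hθ0 i hi)
  refine ⟨f, hf, ?_⟩
  intro i hi j hj hij
  rw [hfi i (hT'T hi), hfi j (hT'T hj)]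
  simp only [if_pos hi, if_pos hj]
  have h1 := hys i hi
  have h2 := hys j hj
  have h3 : (T'.filter (fun k => e k < e i)).card + 1 ≤ (T'.filter (fun k => e k < e j)).card := by
    apply Finset.card_lt_card
    rw [Finset.ssubset_iff_of_subset]
    · exact ⟨i, by simp [hi, hij], by simp⟩
    · intro k hk
      simp only [Finset.mem_filter] at hk ⊢
      exact ⟨hk.1, hk.2.trans hij⟩
  have h4 := hx h3
  omega
end VCX

namespace VCX
open Finset

def res {ι : Type} [DecidableEq ι] (S : Finset ι) (f : ι → ℕ) : ι → ℕ := fun i => if i ∈ S then f i else 0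

theorem res_eq_iff {ι : Type} [DecidableEq ι] (S : Finset ι) (f g : ι → ℕ) :
    res S f = res S g ↔ ∀ i ∈ S, f i = g i := by
  constructor
  · intro h i hi
    have := congrFun h i
    simpa [res, hi] using this
  · intro h
    ext i
    by_cases hi : i ∈ S
    · simpa [res, hi] using h i hi
    · simp [res, hi]

theorem res_mem {ι : Type} [DecidableEq ι] {S : Finset ι} {f : ι → ℕ} {i : ι} (hi : i ∈ S) : res S f i = f i := by
  simp [res, hi]

theorem res_notMem {ι : Type} [DecidableEq ι] {S : Finset ι} {f : ι → ℕ} {i : ι} (hi : i ∉ S) : res S f i = 0 := by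
  simp [res, hi]

structure Gd {ι : Type} (F : Finset (ι → ℕ)) (U : Finset ι) (I : Finset ℕ) : Prop where
  zero : ∀ f ∈ F, ∀ i, i ∉ U → f i = 0
  mem : ∀ f ∈ F, ∀ i ∈ U, f i ∈ I
  inj : ∀ f ∈ F, Set.InjOn f U
  card : I.card ≤ U.card

def IHy (ι : Type) (s Y n : ℕ) : Prop := ∀ (U : Finset ι) (I : Finset ℕ) (F : Finset (ι → ℕ)),
  U.card < n → Gd F U I → NoSh F U s → F.card ≤ Y ^ U.card

theorem NoSh.of_agree {ι : Type} {F F' : Finset (ι → ℕ)} {U U' : Finset ι} {s : ℕ} (h : NoSh F U s)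
    (hU : U' ⊆ U) (hF : ∀ g ∈ F', ∃ f ∈ F, ∀ i ∈ U', ∀ j ∈ U', g i < g j → f i < f j) : NoSh F' U' s := by
  intro T hT hTc hsh
  refine h T (hT.trans hU) hTc ?_
  intro e he
  obtain ⟨g, hg, hge⟩ := hsh e he
  obtain ⟨f, hf, hfg⟩ := hF g hg
  exact ⟨f, hf, fun i hi j hj hij => hfg i (hT hi) j (hT hj) (hge i hi j hj hij)⟩

section
variable {ι : Type} [Fintype ι] [DecidableEq ι]

theorem card_le_pi (F : Finset (ι → ℕ)) (U : Finset ι) (B : ι → Finset ℕ) (w : ℕ)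
    (h0 : ∀ f ∈ F, ∀ i, i ∉ U → f i = 0) (hB : ∀ f ∈ F, ∀ i ∈ U, f i ∈ B i) (hw : ∀ i ∈ U, (B i).card ≤ w) :
    F.card ≤ w ^ U.card := by
  have h1 : F ⊆ Fintype.piFinset (fun i => if i ∈ U then B i else {0}) := by
    intro f hf
    rw [Fintype.mem_piFinset]
    intro i
    by_cases hi : i ∈ U
    · simp [hi, hB f hf i hi]
    · simp [hi, h0 f hf i hi]
  refine (Finset.card_le_card h1).trans ?_
  rw [Fintype.card_piFinset]
  have h2 : ∀ i, (if i ∈ U then B i else {0}).card = if i ∈ U then (B i).card else 1 := by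
    intro i; split_ifs <;> simp
  simp only [h2]
  rw [Finset.prod_ite]
  simp only [Finset.filter_mem_eq_inter, Finset.univ_inter, Finset.prod_const_one, mul_one]
  exact Finset.prod_le_pow_card _ _ _ hw

theorem fibre_bound {s Y : ℕ} {F : Finset (ι → ℕ)} {U : Finset ι} {I : Finset ℕ}
    (hG : Gd F U I) (hN : NoSh F U s) (ih : IHy ι s Y U.card) (S : Finset ι) (hS : S ⊆ U) (hS1 : S.Nonempty)
    (q : ι → ℕ) : (F.filter (fun f => ∀ i ∈ S, f i = q i)).card ≤ Y ^ (U \ S).card := by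
  classical
  set H := F.filter (fun f => ∀ i ∈ S, f i = q i) with hH
  rcases H.eq_empty_or_nonempty with he | ⟨f0, hf0⟩
  · rw [he]; simp
  have hHm : ∀ f ∈ H, f ∈ F ∧ ∀ i ∈ S, f i = q i := fun f hf => Finset.mem_filter.1 hf
  have hinj : Set.InjOn (res (U \ S)) (H : Set (ι → ℕ)) := by
    intro f hf g hg hfg
    rw [res_eq_iff] at hfg
    ext i
    by_cases hi : i ∈ U
    · by_cases hiS : i ∈ S
      · rw [(hHm f hf).2 i hiS, (hHm g hg).2 i hiS]
      · exact hfg i (by simp [hi, hiS])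
    · rw [hG.zero f (hHm f hf).1 i hi, hG.zero g (hHm g hg).1 i hi]
  rw [← Finset.card_image_of_injOn hinj]
  have hqI : Set.InjOn q S := by
    intro i hi j hj hij
    have h1 := (hHm f0 hf0).2
    exact hG.inj f0 (hHm f0 hf0).1 (hS hi) (hS hj) (by rw [h1 i hi, h1 j hj, hij])
  have hlt : (U \ S).card < U.card := by
    apply Finset.card_lt_card
    exact Finset.sdiff_ssubset hS hS1
  apply ih _ (I \ S.image q) _ hlt
  · constructor
    · intro f hf i hi
      obtain ⟨g, hg, rfl⟩ := Finset.mem_image.1 hf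
      exact res_notMem hi
    · intro f hf i hi
      obtain ⟨g, hg, rfl⟩ := Finset.mem_image.1 hf
      rw [res_mem hi]
      have hi' := Finset.mem_sdiff.1 hi
      rw [Finset.mem_sdiff]
      refine ⟨hG.mem g (hHm g hg).1 i hi'.1, ?_⟩
      intro hc
      obtain ⟨j, hj, hji⟩ := Finset.mem_image.1 hc
      rw [← (hHm g hg).2 j hj] at hji
      have := hG.inj g (hHm g hg).1 (hS hj) hi'.1 hji
      exact hi'.2 (this ▸ hj)
    · intro f hf
      obtain ⟨g, hg, rfl⟩ := Finset.mem_image.1 hf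
      intro i hi j hj hij
      rw [res_mem (by simpa using hi), res_mem (by simpa using hj)] at hij
      exact hG.inj g (hHm g hg).1 (Finset.mem_sdiff.1 (by simpa using hi)).1 (Finset.mem_sdiff.1 (by simpa using hj)).1 hij
    · have h1 : S.image q ⊆ I := by
        intro v hv
        obtain ⟨j, hj, rfl⟩ := Finset.mem_image.1 hv
        rw [← (hHm f0 hf0).2 j hj]
        exact hG.mem f0 (hHm f0 hf0).1 j (hS hj)
      rw [Finset.card_sdiff_of_subset h1, Finset.card_sdiff_of_subset hS, Finset.card_image_of_injOn hqI]
      exact Nat.sub_le_sub_right hG.card _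
  · apply hN.of_agree Finset.sdiff_subset
    intro g hg
    obtain ⟨f, hf, rfl⟩ := Finset.mem_image.1 hg
    exact ⟨f, (hHm f hf).1, fun i hi j hj h => by rwa [res_mem hi, res_mem hj] at h⟩

theorem image_bound {s Y : ℕ} {F : Finset (ι → ℕ)} {U : Finset ι} {I : Finset ℕ}
    (hG : Gd F U I) (hN : NoSh F U s) (ih : IHy ι s Y U.card) (S : Finset ι) (hS : S ⊆ U) (hS1 : S.card < U.card) :
    (F.image (res S)).card ≤ 2 ^ U.card * Y ^ S.card := by
  classical
  have h := Finset.card_le_mul_card_image (s := F.image (res S)) (f := fun g => S.image g) (Y ^ S.card) ?_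
  · refine h.trans ?_
    rw [mul_comm]
    gcongr
    have h2 : ((F.image (res S)).image (fun g => S.image g)) ⊆ I.powerset := by
      intro J hJ
      obtain ⟨g, hg, rfl⟩ := Finset.mem_image.1 hJ
      obtain ⟨f, hf, rfl⟩ := Finset.mem_image.1 hg
      rw [Finset.mem_powerset]
      intro v hv
      obtain ⟨i, hi, rfl⟩ := Finset.mem_image.1 hv
      rw [res_mem hi]
      exact hG.mem f hf i (hS hi)
    refine (Finset.card_le_card h2).trans ?_
    rw [Finset.card_powerset]
    exact Nat.pow_le_pow_right (by norm_num) hG.card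
  · intro J hJ
    obtain ⟨g0, hg0, hJ0⟩ := Finset.mem_image.1 hJ
    apply ih S J _ hS1
    · constructor
      · intro f hf i hi
        obtain ⟨g, hg, rfl⟩ := Finset.mem_image.1 (Finset.mem_filter.1 hf).1
        exact res_notMem hi
      · intro f hf i hi
        rw [← (Finset.mem_filter.1 hf).2]
        exact Finset.mem_image_of_mem _ hi
      · intro f hf
        obtain ⟨g, hg, rfl⟩ := Finset.mem_image.1 (Finset.mem_filter.1 hf).1
        intro i hi j hj hij
        rw [res_mem (by simpa using hi), res_mem (by simpa using hj)] at hij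
        exact hG.inj g hg (hS hi) (hS hj) hij
      · rw [← hJ0]; exact Finset.card_image_le
    · apply hN.of_agree hS
      intro g hg
      obtain ⟨f, hf, rfl⟩ := Finset.mem_image.1 (Finset.mem_filter.1 hg).1
      exact ⟨f, hf, fun i hi j hj h => by rwa [res_mem hi, res_mem hj] at h⟩

theorem crude_bound {s Y : ℕ} {F : Finset (ι → ℕ)} {U : Finset ι} {I : Finset ℕ}
    (hG : Gd F U I) (hN : NoSh F U s) (ih : IHy ι s Y U.card) (hU : U.Nonempty) (hY : 1 ≤ Y) :
    F.card ≤ (2 * Y) ^ U.card := by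
  classical
  obtain ⟨j, hj⟩ := hU
  have h := Finset.card_le_mul_card_image_of_maps_to (s := F) (t := I) (f := fun f => f j)
    (fun f hf => hG.mem f hf j hj) (Y ^ (U \ {j}).card) ?_
  · refine h.trans ?_
    have h1 : Y ^ (U \ {j}).card ≤ Y ^ U.card := Nat.pow_le_pow_right hY (Finset.card_le_card Finset.sdiff_subset)
    have h2 : I.card ≤ 2 ^ U.card := hG.card.trans (Nat.lt_two_pow_self).le
    rw [mul_pow, mul_comm]
    exact Nat.mul_le_mul h2 h1
  · intro v hv
    have := fibre_bound hG hN ih {j} (by simpa using hj) (by simp) (fun _ => v)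
    simpa using this
end

def ag {ι : Type} [DecidableEq ι] (F : Finset (ι → ℕ)) (S : Finset ι) (f : ι → ℕ) : ℕ :=
  (F.filter (fun g => ∀ i ∈ S, g i = f i)).card

theorem ag_pos {ι : Type} [DecidableEq ι] {F : Finset (ι → ℕ)} {S : Finset ι} {f : ι → ℕ} (hf : f ∈ F) :
    1 ≤ ag F S f := Finset.card_pos.2 ⟨f, by simp [hf]⟩

theorem ag_anti {ι : Type} [DecidableEq ι] {F : Finset (ι → ℕ)} {S S' : Finset ι} {f : ι → ℕ} (h : S ⊆ S') :
    ag F S' f ≤ ag F S f := by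
  apply Finset.card_le_card
  intro g hg
  simp only [Finset.mem_filter] at hg ⊢
  exact ⟨hg.1, fun i hi => hg.2 i (h hi)⟩

theorem entropy {ι : Type} [DecidableEq ι] (F : Finset (ι → ℕ)) (U : Finset ι) (Z : ℕ) (hZ : 2 ≤ Z)
    (hF : F.Nonempty) (hc : F.card ≤ Z ^ U.card) :
    ∃ S ⊆ U, 2 * S.card ≤ U.card ∧ ∀ j ∈ U \ S,
      4 * (F.filter (fun f => Z ^ 8 * ag F (insert j S) f < ag F S f)).card ≤ F.card := by
  classical
  set lam : ℝ := 2 * Real.log Z with hlam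
  have hZ1 : (1:ℝ) < Z := by exact_mod_cast (by omega : 1 < Z)
  have hlogZ : 0 < Real.log Z := Real.log_pos hZ1
  have hFc : (0:ℝ) < F.card := by exact_mod_cast Finset.card_pos.2 hF
  set Φ : Finset ι → ℝ := fun S => (∑ f ∈ F, - Real.log (ag F S f)) - lam * S.card * F.card with hΦ
  obtain ⟨S, hSU, hmax⟩ := Finset.exists_max_image U.powerset Φ ⟨∅, by simp⟩
  rw [Finset.mem_powerset] at hSU
  refine ⟨S, hSU, ?_, ?_⟩
  · have h1 := hmax ∅ (by simp)
    have h2 : Φ ∅ = - (F.card * Real.log F.card) := by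
      simp [hΦ, ag]
    have h3 : Φ S ≤ - (lam * S.card * F.card) := by
      have : ∑ f ∈ F, - Real.log (ag F S f) ≤ 0 := by
        apply Finset.sum_nonpos
        intro f hf
        have h4 : (1:ℝ) ≤ ag F S f := by exact_mod_cast ag_pos hf
        have := Real.log_nonneg h4
        linarith
      simp only [hΦ]; linarith
    have h4 : Real.log F.card ≤ U.card * Real.log Z := by
      rw [← Real.log_pow]
      apply Real.log_le_log hFc
      exact_mod_cast hc
    have h5 : lam * S.card * F.card ≤ (U.card * Real.log Z) * F.card := by
      have := mul_le_mul_of_nonneg_right h4 hFc.le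
      nlinarith
    have h6 : lam * S.card ≤ U.card * Real.log Z := le_of_mul_le_mul_right h5 hFc
    have h7 : (2 * S.card : ℝ) * Real.log Z ≤ U.card * Real.log Z := by
      rw [hlam] at h6; linarith
    have h8 := le_of_mul_le_mul_right h7 hlogZ
    exact_mod_cast h8
  · intro j hj
    rw [Finset.mem_sdiff] at hj
    have h1 := hmax (insert j S) (by
      rw [Finset.mem_powerset]; exact Finset.insert_subset hj.1 hSU)
    have h2 : ∑ f ∈ F, (Real.log (ag F S f) - Real.log (ag F (insert j S) f)) ≤ lam * F.card := by
      simp only [hΦ, Finset.card_insert_of_notMem hj.2] at h1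
      push_cast at h1
      rw [Finset.sum_sub_distrib]
      simp only [Finset.sum_neg_distrib] at h1
      nlinarith
    set B := F.filter (fun f => Z ^ 8 * ag F (insert j S) f < ag F S f) with hB
    have h3 : ∑ f ∈ B, (4 * lam) ≤ ∑ f ∈ F, (Real.log (ag F S f) - Real.log (ag F (insert j S) f)) := by
      calc _ ≤ ∑ f ∈ B, (Real.log (ag F S f) - Real.log (ag F (insert j S) f)) := by
            apply Finset.sum_le_sum
            intro f hf
            rw [hB, Finset.mem_filter] at hf
            have p1 : (1:ℝ) ≤ ag F (insert j S) f := by exact_mod_cast ag_pos hf.1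
            have p2 : ((Z:ℝ)^8 * ag F (insert j S) f) ≤ ag F S f := by exact_mod_cast hf.2.le
            have p3 := Real.log_le_log (by positivity) p2
            rw [Real.log_mul (by positivity) (by positivity), Real.log_pow] at p3
            push_cast at p3
            rw [hlam]; linarith
        _ ≤ _ := by
            apply Finset.sum_le_sum_of_subset_of_nonneg (Finset.filter_subset _ _)
            intro f hf _
            have p1 : (1:ℝ) ≤ ag F (insert j S) f := by exact_mod_cast ag_pos hf
            have p2 : (ag F (insert j S) f : ℝ) ≤ ag F S f := by exact_mod_cast ag_anti (Finset.subset_insert _ _)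
            have := Real.log_le_log (by positivity) p2
            linarith
    rw [Finset.sum_const, nsmul_eq_mul] at h3
    have h4 : (4 * (B.card : ℝ)) * lam ≤ F.card * lam := by nlinarith
    have h5 := le_of_mul_le_mul_right h4 (by rw [hlam]; positivity)
    exact_mod_cast h5

/-- many functions have many good columns -/
theorem half_good {ι : Type} [DecidableEq ι] (F : Finset (ι → ℕ)) (W : Finset ι) (bad : (ι → ℕ) → ι → Prop)
    [∀ f j, Decidable (bad f j)]
    (h : ∀ j ∈ W, 4 * (F.filter (fun f => bad f j)).card ≤ F.card) :
    F.card ≤ 2 * (F.filter (fun f => W.card ≤ 2 * (W.filter (fun j => ¬ bad f j)).card)).card := by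
  classical
  rcases W.eq_empty_or_nonempty with rfl | hW
  · simp; omega
  have hWc := Finset.card_pos.2 hW
  have hdc : ∑ f ∈ F, (W.filter (fun j => bad f j)).card = ∑ j ∈ W, (F.filter (fun f => bad f j)).card := by
    simp only [Finset.card_filter]
    exact Finset.sum_comm
  have h1 : 4 * ∑ f ∈ F, (W.filter (fun j => bad f j)).card ≤ W.card * F.card := by
    rw [hdc, Finset.mul_sum]
    refine (Finset.sum_le_sum h).trans ?_
    simp
  set N := F.filter (fun f => ¬ W.card ≤ 2 * (W.filter (fun j => ¬ bad f j)).card) with hN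
  have h2 : N.card * W.card ≤ 2 * ∑ f ∈ F, (W.filter (fun j => bad f j)).card := by
    calc N.card * W.card = ∑ f ∈ N, W.card := by simp
      _ ≤ ∑ f ∈ N, 2 * (W.filter (fun j => bad f j)).card := by
          apply Finset.sum_le_sum
          intro f hf
          have h3 := (Finset.mem_filter.1 hf).2
          have h4 := Finset.card_filter_add_card_filter_not (s := W) (fun j => bad f j)
          omega
      _ ≤ ∑ f ∈ F, 2 * (W.filter (fun j => bad f j)).card :=
          Finset.sum_le_sum_of_subset (Finset.filter_subset _ _)
      _ = _ := by rw [Finset.mul_sum]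
  have h3 : (F.filter (fun f => W.card ≤ 2 * (W.filter (fun j => ¬ bad f j)).card)).card + N.card = F.card := by
    rw [hN]
    exact Finset.card_filter_add_card_filter_not (s := F) (fun f => W.card ≤ 2 * (W.filter (fun j => ¬ bad f j)).card)
  have h4 : 2 * N.card ≤ F.card := by
    have : (2 * N.card) * W.card ≤ F.card * W.card := by nlinarith
    exact Nat.le_of_mul_le_mul_right this hWc
  omega
end VCX

namespace VCX
open Finset

def rk (I : Finset ℕ) (v : ℕ) : ℕ := (I.filter (fun u => u < v)).card

theorem rk_mono (I : Finset ℕ) : Monotone (rk I) := by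
  intro a b hab
  apply Finset.card_le_card
  intro u hu
  simp only [Finset.mem_filter] at hu ⊢
  exact ⟨hu.1, hu.2.trans_le hab⟩

theorem rk_strict {I : Finset ℕ} {a b : ℕ} (ha : a ∈ I) (hab : a < b) : rk I a < rk I b := by
  apply Finset.card_lt_card
  rw [Finset.ssubset_iff_of_subset]
  · exact ⟨a, by simp [ha, hab], by simp⟩
  · intro u hu
    simp only [Finset.mem_filter] at hu ⊢
    exact ⟨hu.1, hu.2.trans hab⟩

theorem rk_lt {I : Finset ℕ} {a : ℕ} (ha : a ∈ I) : rk I a < I.card := by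
  apply Finset.card_lt_card
  rw [Finset.filter_ssubset]
  exact ⟨a, ha, lt_irrefl _⟩

theorem rk_fibre (I : Finset ℕ) (w c : ℕ) (hw : 1 ≤ w) : (I.filter (fun v => rk I v / w = c)).card ≤ w := by
  have : (Finset.Ico (c * w) (c * w + w)).card = w := by simp
  refine le_trans (Finset.card_le_card_of_injOn (t := Finset.Ico (c * w) (c * w + w)) (rk I) ?_ ?_) this.le
  · intro v hv
    simp only [Finset.coe_filter, Set.mem_ofPred_eq] at hv
    simp only [Finset.coe_Ico, Set.mem_Ico]
    have h1 := Nat.div_add_mod (rk I v) w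
    have h2 := Nat.mod_lt (rk I v) hw
    rw [hv.2, mul_comm] at h1
    omega
  · intro v hv u hu h
    simp only [Finset.coe_filter, Set.mem_ofPred_eq] at hv hu
    rcases lt_trichotomy v u with hlt | heq | hlt
    · have := rk_strict hv.1 hlt; omega
    · exact heq
    · have := rk_strict hu.1 hlt; omega

theorem inner_bound {ι : Type} [Fintype ι] [DecidableEq ι] {s Y w V R X : ℕ} {F : Finset (ι → ℕ)} {U : Finset ι} {I : Finset ℕ}
    (hs : 1 ≤ s) (hw : 1 ≤ w) (hV : 1 ≤ V)
    (hG : Gd F U I) (hN : NoSh F U s) (ih : IHy ι s Y U.card) (S G : Finset ι) (hSU : S ⊆ U) (hGU : G ⊆ U)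
    (hG1 : G.Nonempty) (hFB : FBd ι s s (U.card / w + 1) R X) (f0 : ι → ℕ) (hf0 : f0 ∈ F)
    (H : Finset (ι → ℕ)) (hHF : H ⊆ F) (hHS : ∀ f ∈ H, ∀ i ∈ S, f i = f0 i)
    (hHV : ∀ f ∈ H, ∀ j ∈ G, ag F S f ≤ V * ag F (insert j S) f) :
    H.card ≤ Y ^ (U \ (S ∪ G)).card * (w ^ G.card *
      ((2 * (2 * R + 1)) ^ G.card * V ^ ((2 * R + 1) * (X * (U.card / w + 1))))) := by
  classical
  have step1 : H.card ≤ Y ^ (U \ (S ∪ G)).card * (H.image (res G)).card := by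
    apply Finset.card_le_mul_card_image
    intro a ha
    obtain ⟨f1, hf1, rfl⟩ := Finset.mem_image.1 ha
    refine le_trans (Finset.card_le_card ?_)
      (fibre_bound hG hN ih (S ∪ G) (Finset.union_subset hSU hGU) (hG1.mono Finset.subset_union_right) f1)
    intro f hf
    rw [Finset.mem_filter, res_eq_iff] at hf
    rw [Finset.mem_filter]
    refine ⟨hHF hf.1, fun i hi => ?_⟩
    rcases Finset.mem_union.1 hi with hi | hi
    · rw [hHS f hf.1 i hi, hHS f1 hf1 i hi]
    · exact hf.2 i hi
  refine step1.trans (Nat.mul_le_mul_left _ ?_)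
  set Q := H.image (res G) with hQ
  set κ : (ι → ℕ) → (ι → ℕ) := fun g => res G (fun i => rk I (g i) / w) with hκ
  have step2 : Q.card ≤ w ^ G.card * (Q.image κ).card := by
    apply Finset.card_le_mul_card_image
    intro a ha
    apply card_le_pi _ G (fun i => I.filter (fun v => rk I v / w = a i)) w
    · intro f hf i hi
      obtain ⟨g, hg, rfl⟩ := Finset.mem_image.1 (Finset.mem_filter.1 hf).1
      exact res_notMem hi
    · intro f hf i hi
      obtain ⟨hfQ, hfa⟩ := Finset.mem_filter.1 hf
      obtain ⟨g, hg, rfl⟩ := Finset.mem_image.1 hfQ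
      rw [Finset.mem_filter, ← hfa]
      refine ⟨?_, ?_⟩
      · rw [res_mem hi]; exact hG.mem g (hHF hg) i (hGU hi)
      · simp only [hκ, res_mem hi]
    · intro i _
      exact rk_fibre I w _ hw
  refine step2.trans (Nat.mul_le_mul_left _ ?_)
  set As : ι → Finset ℕ := fun j => I.filter (fun v => ag F S f0 ≤
    V * (F.filter (fun g => (∀ i ∈ S, g i = f0 i) ∧ g j = v)).card) with hAs
  have hAc : ∀ j, (As j).card ≤ V := by
    intro j
    have hp : 0 < ag F S f0 := ag_pos hf0
    have h1 : (As j).card * ag F S f0 ≤ V * ag F S f0 := by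
      calc (As j).card * ag F S f0 = ∑ v ∈ As j, ag F S f0 := by simp
        _ ≤ ∑ v ∈ As j, V * (F.filter (fun g => (∀ i ∈ S, g i = f0 i) ∧ g j = v)).card := by
            apply Finset.sum_le_sum
            intro v hv
            exact (Finset.mem_filter.1 hv).2
        _ = V * ∑ v ∈ As j, ((F.filter (fun g => (∀ i ∈ S, g i = f0 i))).filter (fun g => g j = v)).card := by
            rw [Finset.mul_sum]
            simp only [Finset.filter_filter]
        _ ≤ V * ag F S f0 := by
            gcongr
            rw [Finset.sum_card_fiberwise_eq_card_filter]
            unfold ag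
            apply Finset.card_le_card
            intro g hg
            simp only [Finset.mem_filter] at hg ⊢
            exact hg.1
    exact Nat.le_of_mul_le_mul_right h1 hp
  have hfA : ∀ f ∈ H, ∀ j ∈ G, f j ∈ As j := by
    intro f hf j hj
    rw [hAs, Finset.mem_filter]
    refine ⟨hG.mem f (hHF hf) j (hGU hj), ?_⟩
    have h1 := hHV f hf j hj
    have h2 : ag F S f = ag F S f0 := by
      unfold ag
      congr 1
      ext g
      simp only [Finset.mem_filter]
      apply and_congr_right'
      exact forall₂_congr (fun i hi => by rw [hHS f hf i hi])
    have h3 : ag F (insert j S) f = (F.filter (fun g => (∀ i ∈ S, g i = f0 i) ∧ g j = f j)).card := by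
      unfold ag
      congr 1
      ext g
      simp only [Finset.mem_filter]
      apply and_congr_right'
      rw [Finset.forall_mem_insert, and_comm]
      apply and_congr_left'
      exact forall₂_congr (fun i hi => by rw [hHS f hf i hi])
    rw [h2, h3] at h1
    exact h1
  have hQ' : ∀ q ∈ Q.image κ, ∃ f ∈ H, q = res G (fun i => rk I (f i) / w) := by
    intro q hq
    obtain ⟨g, hg, rfl⟩ := Finset.mem_image.1 hq
    obtain ⟨f, hf, rfl⟩ := Finset.mem_image.1 hg
    refine ⟨f, hf, ?_⟩
    simp only [hκ]
    rw [res_eq_iff]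
    intro i hi
    rw [res_mem hi]
  apply partB hs hV (fun j => (As j).image (fun v => rk I v / w)) G _ hFB
  · intro q hq i hi
    obtain ⟨f, hf, rfl⟩ := hQ' q hq
    exact res_notMem hi
  · intro q hq i hi
    obtain ⟨f, hf, rfl⟩ := hQ' q hq
    rw [res_mem hi]
    have h1 := rk_lt (hG.mem f (hHF hf) i (hGU hi))
    have h2 : rk I (f i) / w ≤ U.card / w := Nat.div_le_div_right (h1.le.trans hG.card)
    omega
  · intro q hq i hi
    obtain ⟨f, hf, rfl⟩ := hQ' q hq
    rw [res_mem hi]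
    exact Finset.mem_image_of_mem _ (hfA f hf i hi)
  · intro i _
    exact Finset.card_image_le.trans (hAc i)
  · apply hN.of_agree hGU
    intro q hq
    obtain ⟨f, hf, rfl⟩ := hQ' q hq
    refine ⟨f, hHF hf, fun i hi j hj hij => ?_⟩
    rw [res_mem hi, res_mem hj] at hij
    by_contra hle
    push Not at hle
    have := Nat.div_le_div_right (c := w) (rk_mono I hle)
    omega

theorem main_step {ι : Type} [Fintype ι] [DecidableEq ι] {s y w R X : ℕ} {F : Finset (ι → ℕ)} {U : Finset ι} {I : Finset ℕ}
    (hs : 1 ≤ s) (hw : w = 8 * (y + 1) * ((2 * R + 1) * X)) (hX : 1 ≤ X) (hY : 2 ^ 21 * ((2 * R + 1) * w) ≤ 2 ^ y)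
    (hG : Gd F U I) (hN : NoSh F U s) (ih : IHy ι s (2 ^ y) U.card)
    (hFB : w ≤ U.card → FBd ι s s (U.card / w + 1) R X) : F.card ≤ (2 ^ y) ^ U.card := by
  classical
  set Y := 2 ^ y with hYdef
  set n := U.card with hn
  have hY1 : 1 ≤ Y := Nat.one_le_two_pow
  have hw1 : 1 ≤ w := by
    rw [hw]
    have : 0 < 8 * (y + 1) * ((2 * R + 1) * X) := by positivity
    omega
  by_cases hwn : w ≤ n
  swap
  · -- small case
    have h1 := card_le_pi F U (fun _ => I) n hG.zero hG.mem (fun _ _ => hG.card)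
    refine h1.trans (Nat.pow_le_pow_left ?_ _)
    have : w ≤ 2 ^ 21 * ((2 * R + 1) * w) := by nlinarith
    omega
  rcases F.eq_empty_or_nonempty with rfl | hFne
  · simp
  have hU : U.Nonempty := Finset.card_pos.1 (by omega)
  have hcr := crude_bound hG hN ih hU hY1
  obtain ⟨S, hSU, hS2, hS4⟩ := entropy F U (2 * Y) (by omega) hFne hcr
  set V := (2 * Y) ^ 8 with hVdef
  have hV1 : 1 ≤ V := Nat.pow_pos (by omega)
  set W := U \ S with hW
  have hWc : W.card = n - S.card := Finset.card_sdiff_of_subset hSU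
  have hhalf := half_good F W (fun f j => V * ag F (insert j S) f < ag F S f) hS4
  set Gf : (ι → ℕ) → Finset ι := fun f => W.filter (fun j => ¬ V * ag F (insert j S) f < ag F S f) with hGf
  set F' := F.filter (fun f => W.card ≤ 2 * (Gf f).card) with hF'
  have hSn : S.card < n := by omega
  -- bound for each G
  have key : ∀ G ∈ F'.image Gf, (F'.filter (fun f => Gf f = G)).card * 2 ^ (2 * n) ≤ Y ^ n := by
    intro G hGm
    obtain ⟨fG, hfG, hfGe⟩ := Finset.mem_image.1 hGm
    have hGW : G ⊆ W := by rw [← hfGe]; exact Finset.filter_subset _ _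
    have hGU : G ⊆ U := hGW.trans Finset.sdiff_subset
    have hGc : W.card ≤ 2 * G.card := by rw [← hfGe]; exact (Finset.mem_filter.1 hfG).2
    set g := G.card with hg
    have hG4 : n ≤ 4 * g := by omega
    have hG1 : G.Nonempty := Finset.card_pos.1 (by omega)
    set FG := F'.filter (fun f => Gf f = G) with hFG
    have hFGF : FG ⊆ F := (Finset.filter_subset _ _).trans (Finset.filter_subset _ _)
    have hFGV : ∀ f ∈ FG, ∀ j ∈ G, ag F S f ≤ V * ag F (insert j S) f := by
      intro f hf j hj
      rw [← (Finset.mem_filter.1 hf).2] at hj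
      exact not_lt.1 (Finset.mem_filter.1 hj).2
    have hUSG : (U \ (S ∪ G)).card = n - S.card - g := by
      have hd : U \ (S ∪ G) = W \ G := by
        ext i
        simp only [hW, Finset.mem_sdiff, Finset.mem_union]
        tauto
      rw [hd, Finset.card_sdiff_of_subset hGW, hWc]
    have hgW : g ≤ n - S.card := by rw [← hWc]; exact Finset.card_le_card hGW
    set E := w ^ g * ((2 * (2 * R + 1)) ^ g * V ^ ((2 * R + 1) * (X * (n / w + 1)))) with hE
    have h1 : FG.card ≤ (Y ^ (n - S.card - g) * E) * (FG.image (res S)).card := by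
      apply Finset.card_le_mul_card_image
      intro a ha
      obtain ⟨f0, hf0, rfl⟩ := Finset.mem_image.1 ha
      have := inner_bound hs hw1 hV1 hG hN ih S G hSU hGU hG1 (hFB hwn) f0 (hFGF hf0)
        (FG.filter (fun f => res S f = res S f0)) ((Finset.filter_subset _ _).trans hFGF)
        (fun f hf => (res_eq_iff _ _ _).1 (Finset.mem_filter.1 hf).2)
        (fun f hf => hFGV f (Finset.mem_filter.1 hf).1)
      rwa [hUSG] at this
    have h2 : (FG.image (res S)).card ≤ 2 ^ n * Y ^ S.card :=
      (Finset.card_le_card (Finset.image_subset_image hFGF)).trans (image_bound hG hN ih S hSU hSn)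
    have h3 : V ^ ((2 * R + 1) * (X * (n / w + 1))) ≤ 2 ^ (2 * n) := by
      have : V = 2 ^ (8 * (y + 1)) := by
        rw [hVdef, hYdef, ← pow_succ', ← pow_mul, mul_comm]
      rw [this, ← pow_mul]
      apply Nat.pow_le_pow_right (by norm_num)
      calc 8 * (y + 1) * ((2 * R + 1) * (X * (n / w + 1))) = w * (n / w + 1) := by rw [hw]; ring
        _ = w * (n / w) + w := by ring
        _ ≤ n + w := by gcongr; exact Nat.mul_div_le n w
        _ ≤ _ := by omega
    have h4 : 2 ^ (5 * n) ≤ (2 ^ 20) ^ g := by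
      rw [← pow_mul]
      exact Nat.pow_le_pow_right (by norm_num) (by omega)
    calc FG.card * 2 ^ (2 * n) ≤ ((Y ^ (n - S.card - g) * (w ^ g * ((2 * (2 * R + 1)) ^ g * 2 ^ (2 * n)))) * (2 ^ n * Y ^ S.card)) * 2 ^ (2 * n) := by
          refine Nat.mul_le_mul_right _ (h1.trans ?_)
          rw [hE]
          gcongr
      _ = (2 ^ (5 * n)) * (w * (2 * (2 * R + 1))) ^ g * (Y ^ (n - S.card - g) * Y ^ S.card) := by
          rw [mul_pow w, show 5 * n = 2 * n + n + 2 * n by ring, pow_add, pow_add]; ring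
      _ ≤ (2 ^ 20) ^ g * (w * (2 * (2 * R + 1))) ^ g * (Y ^ (n - S.card - g) * Y ^ S.card) := by gcongr
      _ = (2 ^ 21 * ((2 * R + 1) * w)) ^ g * Y ^ (n - g) := by
          rw [← mul_pow, ← pow_add]
          congr 2
          · ring
          · omega
      _ ≤ Y ^ g * Y ^ (n - g) := by gcongr
      _ = Y ^ n := by rw [← pow_add]; congr 1; omega
  have hsum : F'.card * 2 ^ (2 * n) ≤ 2 ^ n * Y ^ n := by
    rw [Finset.card_eq_sum_card_image Gf F', Finset.sum_mul]
    refine (Finset.sum_le_sum key).trans ?_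
    rw [Finset.sum_const, smul_eq_mul]
    gcongr
    have : F'.image Gf ⊆ U.powerset := by
      intro G hGm
      obtain ⟨fG, hfG, rfl⟩ := Finset.mem_image.1 hGm
      rw [Finset.mem_powerset]
      exact (Finset.filter_subset _ _).trans Finset.sdiff_subset
    have := Finset.card_le_card this
    rwa [Finset.card_powerset] at this
  have h2n : 2 ≤ 2 ^ n := by
    calc 2 = 2 ^ 1 := by norm_num
      _ ≤ 2 ^ n := Nat.pow_le_pow_right (by norm_num) (by omega)
  have hfin : (2 * F'.card) * 2 ^ n ≤ Y ^ n * 2 ^ n := by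
    calc (2 * F'.card) * 2 ^ n ≤ (2 ^ n * F'.card) * 2 ^ n := by gcongr
      _ = F'.card * 2 ^ (2 * n) := by rw [two_mul n, pow_add]; ring
      _ ≤ _ := by rw [mul_comm (Y ^ n)]; exact hsum
  exact hhalf.trans (Nat.le_of_mul_le_mul_right hfin (by positivity))

theorem main_ind {ι : Type} [Fintype ι] [DecidableEq ι] {s y w R X N : ℕ}
    (hs : 1 ≤ s) (hw : w = 8 * (y + 1) * ((2 * R + 1) * X)) (hX : 1 ≤ X) (hY : 2 ^ 21 * ((2 * R + 1) * w) ≤ 2 ^ y)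
    (hFB : ∀ m ≤ N, FBd ι s s m R X) (n : ℕ) (hnN : n ≤ N) : IHy ι s (2 ^ y) (n + 1) := by
  induction n with
  | zero =>
    intro U I F hU hG hN
    refine main_step hs hw hX hY hG hN ?_ ?_
    · intro U' I' F' hU'; omega
    · intro hwU
      exfalso
      have : 0 < 8 * (y + 1) * ((2 * R + 1) * X) := by positivity
      omega
  | succ n ih =>
    have ih := ih (by omega)
    intro U I F hU hG hN
    refine main_step hs hw hX hY hG hN ?_ ?_
    · intro U' I' F' hU'
      exact ih U' I' F' (by omega)
    · intro hwU
      apply hFB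
      have hw8 : 2 ≤ w := by
        have : 0 < (y + 1) * ((2 * R + 1) * X) := by positivity
        rw [mul_assoc] at hw
        omega
      have : U.card / w ≤ U.card / 2 := Nat.div_le_div_left hw8 (by norm_num)
      omega
end VCX

namespace VCX
open Finset

theorem noSh_of_vc {n k : ℕ} {P : Finset (Equiv.Perm (Fin n))} (hP : VCDimLE n k P) :
    NoSh (P.image (fun π => fun i : Fin n => ((π i : Fin n) : ℕ))) univ (k + 1) := by
  intro T _ hTc hsh
  set a := T.orderEmbOfFin hTc with ha
  apply hP a
  refine ⟨a.strictMono, fun σ => ?_⟩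
  have hex : ∀ i : Fin n, i ∈ T → ∃ j, a j = i := by
    intro i hi
    have : i ∈ Set.range a := by
      rw [ha, Finset.range_orderEmbOfFin]; exact hi
    exact this
  have hmem : ∀ j, a j ∈ T := fun j => Finset.orderEmbOfFin_mem T hTc j
  set e : Fin n → ℕ := fun i => if h : ∃ j, a j = i then ((σ h.choose : Fin (k+1)) : ℕ) else 0 with he
  have hea : ∀ j, e (a j) = σ j := by
    intro j
    have h : ∃ j', a j' = a j := ⟨j, rfl⟩
    simp only [he]
    rw [dif_pos h, a.injective h.choose_spec]
  have hinj : Set.InjOn e T := by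
    intro i hi j hj hij
    obtain ⟨i', rfl⟩ := hex i hi
    obtain ⟨j', rfl⟩ := hex j hj
    rw [hea, hea] at hij
    rw [σ.injective (Fin.ext hij)]
  obtain ⟨f, hf, hfe⟩ := hsh e hinj
  obtain ⟨π, hπ, rfl⟩ := Finset.mem_image.1 hf
  refine ⟨π, hπ, fun i j => ?_⟩
  have key : ∀ i j, σ i < σ j → π (a i) < π (a j) := by
    intro i j hij
    have := hfe (a i) (hmem i) (a j) (hmem j) (by rw [hea, hea]; exact hij)
    exact this
  refine ⟨key i j, fun h => ?_⟩
  by_contra hn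
  rcases lt_or_eq_of_le (not_lt.1 hn) with h1 | h1
  · exact absurd (key j i h1) (not_lt.2 h.le)
  · rw [σ.injective h1] at h
    exact lt_irrefl _ h

theorem vc_bound {n k y R X : ℕ} {P : Finset (Equiv.Perm (Fin n))} (hP : VCDimLE n k P) (hX : 1 ≤ X)
    (hY : 2 ^ 21 * ((2 * R + 1) * (8 * (y + 1) * ((2 * R + 1) * X))) ≤ 2 ^ y)
    (hFB : ∀ m ≤ n, FBd (Fin n) (k + 1) (k + 1) m R X) : P.card ≤ (2 ^ y) ^ n := by
  have h := main_ind (ι := Fin n) (s := k + 1) (by omega) rfl hX hY hFB n le_rfl univ (range n)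
    (P.image (fun π => fun i : Fin n => ((π i : Fin n) : ℕ))) (by simp) ?_ (noSh_of_vc hP)
  · rw [Finset.card_image_of_injective] at h
    · simpa using h
    · intro π π' hh
      ext i
      exact congrFun hh i
  · refine ⟨?_, ?_, ?_, by simp⟩
    · intro f _ i hi
      exact absurd (Finset.mem_univ i) hi
    · intro f hf i _
      obtain ⟨π, hπ, rfl⟩ := Finset.mem_image.1 hf
      simp
    · intro f hf
      obtain ⟨π, hπ, rfl⟩ := Finset.mem_image.1 hf
      intro i _ j _ hij
      exact π.injective (Fin.ext hij)

theorem vc_main (k : ℕ) (hk : 1 ≤ k) : ∃ X, 1 ≤ X ∧ ∀ n, ∀ P : Finset (Equiv.Perm (Fin n)), VCDimLE n k P →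
    ∀ y, 2 ^ 21 * ((2 * Rr (k+1) (invAck n - 1) + 1) * (8 * (y + 1) * ((2 * Rr (k+1) (invAck n - 1) + 1) * X))) ≤ 2 ^ y →
    P.card ≤ (2 ^ y) ^ n := by
  obtain ⟨X, hX, h⟩ := partA (k + 1) (k + 1) (by omega)
  exact ⟨X, hX, fun n P hP y hy => vc_bound hP hX hy (fun m hm => h (Fin n) n m hm)⟩
end VCX

namespace VCX
open Finset

theorem pow_bern (x : ℝ) (hx : 0 ≤ x) (t : ℕ) : x ^ (t+1) + (t+1) * x ^ t ≤ (x+1) ^ (t+1) := by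
  induction t with
  | zero => simp
  | succ t ih =>
    have h1 : (x+1) * (x ^ (t+1) + (t+1) * x ^ t) ≤ (x+1) * (x+1) ^ (t+1) := by gcongr
    have h2 : 0 ≤ x ^ t := by positivity
    have h3 : 0 ≤ ((t:ℝ)+1) * x ^ t := by positivity
    calc x ^ (t+1+1) + ((t+1 : ℕ)+1) * x ^ (t+1) ≤ (x+1) * (x ^ (t+1) + (t+1) * x ^ t) := by
          push_cast
          have : (x+1) * (x ^ (t+1) + (t+1) * x ^ t) = x ^ (t+1+1) + ((t+1)+1) * x ^ (t+1) + (t+1) * x ^ t := by ring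
          rw [this]; linarith
      _ ≤ _ := h1
      _ = _ := by ring

theorem sum_pow_le (t d : ℕ) : ∑ i ∈ range (d+1), ((i:ℝ)+1) ^ t ≤ ((d:ℝ)+1) ^ (t+1) / (t+1) + ((d:ℝ)+1) ^ t := by
  induction d with
  | zero => simp; positivity
  | succ d ih =>
    rw [Finset.sum_range_succ]
    have hb := pow_bern ((d:ℝ)+1) (by positivity) t
    have ht : (0:ℝ) < t + 1 := by positivity
    have h2 : ((d:ℝ)+1) ^ (t+1) / (t+1) + ((d:ℝ)+1) ^ t ≤ ((d:ℝ)+1+1) ^ (t+1) / (t+1) := by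
      rw [le_div_iff₀ ht, add_mul, div_mul_cancel₀ _ ht.ne']
      linarith
    push_cast
    linarith

theorem logb_le_self (d : ℕ) : Real.logb 2 ((d:ℝ)+1) ≤ (d:ℝ)+1 := by
  rw [Real.logb_le_iff_le_rpow (by norm_num) (by positivity)]
  have : d + 1 ≤ 2 ^ (d+1) := Nat.lt_two_pow_self.le
  have h2 : ((d + 1 : ℕ) : ℝ) ≤ ((2 ^ (d+1) : ℕ) : ℝ) := by exact_mod_cast this
  have h3 : (2:ℝ) ^ ((d:ℝ)+1) = ((2 ^ (d+1) : ℕ) : ℝ) := by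
    push_cast
    rw [← Real.rpow_natCast]; push_cast; rfl
  rw [h3]
  push_cast at h2 ⊢
  exact h2

theorem logb_nonneg' (d : ℕ) : 0 ≤ Real.logb 2 ((d:ℝ)+1) :=
  Real.logb_nonneg (by norm_num) (by linarith [Nat.cast_nonneg (α := ℝ) d])

theorem rec_bound (a u v : ℕ → ℕ) (g h : ℕ → ℝ) (hu : ∀ d, 1 ≤ u d) (hv : ∀ d, 1 ≤ v d) (ha : ∀ d, 1 ≤ a d)
    (hrec : ∀ d, a (d+1) = 2 * u (d+1) + v (d+1) * a d)
    (hg : ∀ d, Real.logb 2 (v d) ≤ g d) (hh : ∀ d, Real.logb 2 (u d) ≤ h d) (hm : Monotone h) (d : ℕ) :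
    Real.logb 2 (a d) ≤ ∑ i ∈ range (d+1), g i + h d + (a 0 + 2 : ℕ) + Real.logb 2 ((d:ℝ)+1) := by
  have cast : ∀ z : ℕ, 1 ≤ z → ∀ r : ℝ, Real.logb 2 z ≤ r → (z:ℝ) ≤ 2 ^ r := by
    intro z hz r hr
    rwa [← Real.logb_le_iff_le_rpow (by norm_num) (by exact_mod_cast hz)]
  have hg0 : ∀ d, 0 ≤ g d := fun d =>
    (Real.logb_nonneg (by norm_num) (by exact_mod_cast hv d)).trans (hg d)
  have hh0 : ∀ d, 0 ≤ h d := fun d =>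
    (Real.logb_nonneg (by norm_num) (by exact_mod_cast hu d)).trans (hh d)
  have one_le : ∀ r : ℝ, 0 ≤ r → (1:ℝ) ≤ 2 ^ r := fun r hr => Real.one_le_rpow (by norm_num) hr
  have hG0 : ∀ d, 0 ≤ ∑ i ∈ range d, g i := fun d => Finset.sum_nonneg (fun i _ => hg0 i)
  have key : ∀ d, (a d : ℝ) ≤ 2 ^ (∑ i ∈ range (d+1), g i) * 2 ^ (h d) * ((a 0 : ℝ) + 2 * d) := by
    intro d
    induction d with
    | zero =>
      have h1 := one_le _ (hG0 (0+1))
      have h2 := one_le _ (hh0 0)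
      have h3 : (0:ℝ) ≤ a 0 := Nat.cast_nonneg _
      have h4 : (1:ℝ) ≤ 2 ^ (∑ i ∈ range (0+1), g i) * 2 ^ (h 0) := one_le_mul_of_one_le_of_one_le h1 h2
      push_cast
      nlinarith
    | succ d ih =>
      rw [hrec]
      push_cast
      have h1 := cast _ (hu (d+1)) _ (hh (d+1))
      have h2 := cast _ (hv (d+1)) _ (hg (d+1))
      have h3 : (2:ℝ) ^ (h d) ≤ 2 ^ (h (d+1)) := Real.rpow_le_rpow_of_exponent_le (by norm_num) (hm (Nat.le_succ d))
      rw [Finset.sum_range_succ _ (d+1), Real.rpow_add (by norm_num)]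
      set A := (2:ℝ) ^ (∑ i ∈ range (d+1), g i)
      set B := (2:ℝ) ^ (g (d+1))
      set H := (2:ℝ) ^ (h (d+1))
      have hA : 1 ≤ A := one_le _ (hG0 _)
      have hB : 1 ≤ B := one_le _ (hg0 _)
      have hAB : 1 ≤ A * B := one_le_mul_of_one_le_of_one_le hA hB
      have hH : 1 ≤ H := one_le _ (hh0 _)
      calc 2 * (u (d+1) : ℝ) + v (d+1) * a d ≤ 2 * ((A * B) * H) + B * (A * H * ((a 0 : ℝ) + 2 * d)) := by
            apply add_le_add
            · nlinarith
            · apply mul_le_mul h2 _ (by positivity) (by positivity)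
              refine ih.trans ?_
              gcongr
        _ = _ := by ring
  have k := key d
  have hpos : (0:ℝ) < a d := by exact_mod_cast ha d
  have k2 := Real.logb_le_logb_of_le (b := 2) (by norm_num) hpos k
  have ha0 : (1:ℝ) ≤ a 0 := by exact_mod_cast ha 0
  have hp2 : (0:ℝ) < (a 0 : ℝ) + 2 * d := by positivity
  rw [Real.logb_mul (by positivity) hp2.ne', Real.logb_mul (by positivity) (by positivity),
    Real.logb_rpow (by norm_num) (by norm_num), Real.logb_rpow (by norm_num) (by norm_num)] at k2
  have k3 : Real.logb 2 ((a 0 : ℝ) + 2 * d) ≤ Real.logb 2 (((a 0 + 1 : ℕ) + 1) * ((d:ℝ)+1)) := by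
    apply Real.logb_le_logb_of_le (by norm_num) hp2
    push_cast
    nlinarith [Nat.cast_nonneg (α := ℝ) d, Nat.cast_nonneg (α := ℝ) (a 0)]
  rw [Real.logb_mul (by positivity) (by positivity)] at k3
  have k4 := logb_le_self (a 0 + 1)
  push_cast at k3 k4 ⊢
  linarith

theorem asym (t : ℕ) : ∃ C : ℝ, 0 ≤ C ∧ ∀ d : ℕ,
    Real.logb 2 (Rr (2*t+3) d) ≤ C * ((d:ℝ)+1) ^ t ∧
    Real.logb 2 (Rr (2*t+4) d) ≤ 1 / (Nat.factorial t : ℝ) * ((d:ℝ)+1) ^ t * Real.logb 2 ((d:ℝ)+1) + C * ((d:ℝ)+1) ^ t := by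
  induction t with
  | zero =>
    refine ⟨3, by norm_num, fun d => ⟨?_, ?_⟩⟩
    · rw [show 2 * 0 + 3 = 3 from rfl, Rr_three]
      simp
    · have h4 : ∀ d, Rr 4 d = 4 * d + 6 := by
        intro d
        induction d with
        | zero => rw [Rr_zero 0, Rr_three, Rr_two]
        | succ d ih => rw [Rr_succ 0, ih, Rr_three, Rr_two]; ring
      rw [show 2 * 0 + 4 = 4 from rfl, h4]
      have h1 : Real.logb 2 ((4 * d + 6 : ℕ) : ℝ) ≤ Real.logb 2 (2 ^ (3:ℝ) * ((d:ℝ)+1)) := by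
        apply Real.logb_le_logb_of_le (by norm_num) (by positivity)
        push_cast
        norm_num
        linarith [Nat.cast_nonneg (α := ℝ) d]
      rw [Real.logb_mul (by positivity) (by positivity), Real.logb_rpow (by norm_num) (by norm_num)] at h1
      simp only [Nat.factorial_zero, Nat.cast_one, pow_zero]
      linarith
  | succ t ih =>
    obtain ⟨C, hC, ih⟩ := ih
    have hx1 : ∀ d : ℕ, (1:ℝ) ≤ (d:ℝ)+1 := fun d => by linarith [Nat.cast_nonneg (α := ℝ) d]
    have hmp : ∀ (k : ℕ) (i d : ℕ), i ≤ d → ((i:ℝ)+1) ^ k ≤ ((d:ℝ)+1) ^ k := by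
      intro k i d hid
      have : (i:ℝ) ≤ d := by exact_mod_cast hid
      gcongr
    have hml : ∀ (i d : ℕ), i ≤ d → Real.logb 2 ((i:ℝ)+1) ≤ Real.logb 2 ((d:ℝ)+1) := by
      intro i d hid
      have : (i:ℝ) ≤ d := by exact_mod_cast hid
      exact Real.logb_le_logb_of_le (by norm_num) (by positivity) (by linarith)
    have hf : (0:ℝ) < Nat.factorial t := by exact_mod_cast Nat.factorial_pos t
    have hf1 : 1 / (Nat.factorial t : ℝ) ≤ 1 := by
      rw [div_le_one hf]; exact_mod_cast Nat.factorial_pos t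
    have hf0 : 0 ≤ 1 / (Nat.factorial t : ℝ) := by positivity
    have hpl : ∀ d : ℕ, ((d:ℝ)+1) ^ t ≤ ((d:ℝ)+1) ^ (t+1) := fun d =>
      pow_le_pow_right₀ (hx1 d) (Nat.le_succ t)
    have hxl : ∀ d : ℕ, ((d:ℝ)+1) ^ t * Real.logb 2 ((d:ℝ)+1) ≤ ((d:ℝ)+1) ^ (t+1) := by
      intro d
      rw [pow_succ]
      exact mul_le_mul_of_nonneg_left (logb_le_self d) (by positivity)
    have hlx : ∀ d : ℕ, Real.logb 2 ((d:ℝ)+1) ≤ ((d:ℝ)+1) ^ (t+1) := fun d =>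
      (logb_le_self d).trans (le_self_pow₀ (hx1 d) (by omega))
    have hone : ∀ d : ℕ, (1:ℝ) ≤ ((d:ℝ)+1) ^ (t+1) := fun d => one_le_pow₀ (hx1 d)
    have hsum : ∀ d : ℕ, ∑ i ∈ range (d+1), C * ((i:ℝ)+1) ^ t ≤ C * ((d:ℝ)+1) ^ (t+1) := by
      intro d
      rw [← Finset.mul_sum]
      apply mul_le_mul_of_nonneg_left _ hC
      calc ∑ i ∈ range (d+1), ((i:ℝ)+1) ^ t ≤ ∑ i ∈ range (d+1), ((d:ℝ)+1) ^ t :=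
            Finset.sum_le_sum (fun i hi => hmp t i d (by simp at hi; omega))
        _ = _ := by rw [Finset.sum_const, Finset.card_range, nsmul_eq_mul]; push_cast; ring
    set K1 : ℝ := ((Rr (2*t+5) 0 + 2 : ℕ) : ℝ) with hK1
    set K2 : ℝ := ((Rr (2*t+6) 0 + 2 : ℕ) : ℝ) with hK2
    have hK10 : 0 ≤ K1 := Nat.cast_nonneg _
    have hK20 : 0 ≤ K2 := Nat.cast_nonneg _
    set C1 : ℝ := C + 1 + C + K1 + 1 with hC1
    have hC10 : 0 ≤ C1 := by positivity
    have odd : ∀ d : ℕ, Real.logb 2 (Rr (2*t+5) d) ≤ C1 * ((d:ℝ)+1) ^ (t+1) := by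
      intro d
      have := rec_bound (Rr (2*t+5)) (Rr (2*t+4)) (Rr (2*t+3)) (fun d => C * ((d:ℝ)+1) ^ t)
        (fun d => 1 / (Nat.factorial t : ℝ) * ((d:ℝ)+1) ^ t * Real.logb 2 ((d:ℝ)+1) + C * ((d:ℝ)+1) ^ t)
        (fun d => Rr_pos _ _) (fun d => Rr_pos _ _) (fun d => Rr_pos _ _) (fun d => Rr_succ (2*t+1) d)
        (fun d => (ih d).1) (fun d => (ih d).2) ?_ d
      · have e1 := hsum d
        have e2 := hxl d
        have e3 : 1 / (Nat.factorial t : ℝ) * (((d:ℝ)+1) ^ t * Real.logb 2 ((d:ℝ)+1)) ≤ 1 * ((d:ℝ)+1) ^ (t+1) :=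
          mul_le_mul hf1 e2 (mul_nonneg (by positivity) (logb_nonneg' d)) (by norm_num)
        have e4 := mul_le_mul_of_nonneg_left (hpl d) hC
        have e5 := mul_le_mul_of_nonneg_left (hone d) hK10
        have e6 := hlx d
        rw [← mul_assoc] at e3
        rw [hC1]
        simp only [← hK1] at this
        linarith
      · intro i d hid
        have := hmp t i d hid
        have h2 := hml i d hid
        have h3 := logb_nonneg' i
        simp only
        gcongr
    refine ⟨1 + C + C1 + K2 + 1, by positivity, fun d => ⟨?_, ?_⟩⟩
    · refine (odd d).trans ?_
      gcongr
      linarith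
    · have := rec_bound (Rr (2*t+6)) (Rr (2*t+5)) (Rr (2*t+4))
        (fun d => 1 / (Nat.factorial t : ℝ) * ((d:ℝ)+1) ^ t * Real.logb 2 ((d:ℝ)+1) + C * ((d:ℝ)+1) ^ t)
        (fun d => C1 * ((d:ℝ)+1) ^ (t+1))
        (fun d => Rr_pos _ _) (fun d => Rr_pos _ _) (fun d => Rr_pos _ _) (fun d => Rr_succ (2*t+2) d)
        (fun d => (ih d).2) odd ?_ d
      · have e1 := hsum d
        have e2 : ∑ i ∈ range (d+1), 1 / (Nat.factorial t : ℝ) * ((i:ℝ)+1) ^ t * Real.logb 2 ((i:ℝ)+1) ≤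
            1 / (Nat.factorial (t+1) : ℝ) * ((d:ℝ)+1) ^ (t+1) * Real.logb 2 ((d:ℝ)+1) + ((d:ℝ)+1) ^ (t+1) := by
          calc ∑ i ∈ range (d+1), 1 / (Nat.factorial t : ℝ) * ((i:ℝ)+1) ^ t * Real.logb 2 ((i:ℝ)+1)
              ≤ ∑ i ∈ range (d+1), 1 / (Nat.factorial t : ℝ) * Real.logb 2 ((d:ℝ)+1) * ((i:ℝ)+1) ^ t := by
                apply Finset.sum_le_sum
                intro i hi
                have h2 := hml i d (by simp at hi; omega)
                rw [mul_right_comm]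
                gcongr
            _ = 1 / (Nat.factorial t : ℝ) * Real.logb 2 ((d:ℝ)+1) * ∑ i ∈ range (d+1), ((i:ℝ)+1) ^ t := by
                rw [Finset.mul_sum]
            _ ≤ 1 / (Nat.factorial t : ℝ) * Real.logb 2 ((d:ℝ)+1) * (((d:ℝ)+1) ^ (t+1) / (t+1) + ((d:ℝ)+1) ^ t) :=
                mul_le_mul_of_nonneg_left (sum_pow_le t d) (mul_nonneg hf0 (logb_nonneg' d))
            _ = 1 / (Nat.factorial (t+1) : ℝ) * ((d:ℝ)+1) ^ (t+1) * Real.logb 2 ((d:ℝ)+1) +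
                1 / (Nat.factorial t : ℝ) * (((d:ℝ)+1) ^ t * Real.logb 2 ((d:ℝ)+1)) := by
                rw [Nat.factorial_succ]
                push_cast
                field_simp
            _ ≤ _ := by
                have e3 : 1 / (Nat.factorial t : ℝ) * (((d:ℝ)+1) ^ t * Real.logb 2 ((d:ℝ)+1)) ≤ 1 * ((d:ℝ)+1) ^ (t+1) :=
                  mul_le_mul hf1 (hxl d) (mul_nonneg (by positivity) (logb_nonneg' d)) (by norm_num)
                linarith
        have e5 := mul_le_mul_of_nonneg_left (hone d) hK20
        have e6 := hlx d
        rw [Finset.sum_add_distrib] at this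
        simp only [← hK2] at this
        rw [show 2 * (t+1) + 4 = 2 * t + 6 by ring]
        linarith
      · intro i d hid
        have := hmp (t+1) i d hid
        simp only
        gcongr

theorem final (t : ℕ) (ht : 1 ≤ t) : ∃ C : ℝ, ∀ n : ℕ, 1 ≤ n →
      ∀ P : Finset (Equiv.Perm (Fin n)), VCDimLE n (2 * t + 3) P →
        (P.card : ℝ) ≤ (2 : ℝ) ^ ((n : ℝ) *
          ((2 / (Nat.factorial t : ℝ)) * (invAck n : ℝ) ^ t * Real.logb 2 (invAck n)
            + C * (invAck n : ℝ) ^ t)) := by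
  obtain ⟨X, hX, hvc⟩ := vc_main (2 * t + 3) (by omega)
  obtain ⟨C, hC, has⟩ := asym t
  set K : ℕ := 28 + X with hK
  set B : ℕ := 2 + 2 * ⌈C⌉₊ + 1 + K with hB
  refine ⟨2 * C + 4 + K + B + (t + 1), ?_⟩
  intro n hn P hP
  obtain ⟨hx1, -⟩ := invAck_spec n
  obtain ⟨d, hd⟩ : ∃ d, invAck n = d + 1 := ⟨invAck n - 1, by omega⟩
  have hxd : (invAck n : ℝ) = (d:ℝ) + 1 := by rw [hd]; push_cast; rfl
  have hdd : invAck n - 1 = d := by omega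
  have hv := hvc n P hP
  rw [hdd] at hv
  rw [hxd]
  have hL := (has d).2
  set R := Rr (2 * t + 4) d with hR
  have hR1 : 1 ≤ R := Rr_pos _ _
  set x : ℝ := (d:ℝ) + 1 with hx
  set ℓ := Real.logb 2 x with hℓ
  have hℓ0 : 0 ≤ ℓ := logb_nonneg' d
  have hℓx : ℓ ≤ x := logb_le_self d
  have hx1' : 1 ≤ x := by rw [hx]; linarith [Nat.cast_nonneg (α := ℝ) d]
  set L := Real.logb 2 (R:ℝ) with hLdef
  have hL0 : 0 ≤ L := Real.logb_nonneg (by norm_num) (by exact_mod_cast hR1)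
  have hRL : (R:ℝ) ≤ 2 ^ L := by
    rw [hLdef, Real.rpow_logb (by norm_num) (by norm_num) (by exact_mod_cast hR1)]
  set M := 1 / (Nat.factorial t : ℝ) * x ^ t * ℓ + C * x ^ t with hM
  set c := ⌈2 * L⌉₊ with hc
  have hRc : R ^ 2 ≤ 2 ^ c := by
    have h1 : (2 * L : ℝ) ≤ c := Nat.le_ceil _
    have h2 : ((R:ℝ)) ^ 2 ≤ 2 ^ (c:ℝ) := by
      calc (R:ℝ) ^ 2 ≤ ((2:ℝ) ^ L) ^ 2 := by gcongr
        _ = 2 ^ (2 * L) := by rw [← Real.rpow_natCast, ← Real.rpow_mul (by norm_num)]; push_cast; rw [mul_comm]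
        _ ≤ _ := Real.rpow_le_rpow_of_exponent_le (by norm_num) h1
    rw [Real.rpow_natCast] at h2
    exact_mod_cast h2
  have hcM : (c:ℝ) ≤ 2 * M + 1 := by
    have := Nat.ceil_lt_add_one (a := 2 * L) (by positivity)
    linarith
  set u := c + K with hu
  set l := Nat.log 2 u with hl
  have hu1 : u ≠ 0 := by omega
  have hl1 : u < 2 ^ (l + 1) := Nat.lt_pow_succ_log_self (by norm_num) u
  have hl2 : 2 ^ l ≤ u := Nat.pow_log_le_self 2 hu1
  have hl3 : l + 1 < 2 ^ (l + 1) := Nat.lt_two_pow_self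
  have hh : u + (l + 3) + 1 ≤ 2 ^ (l + 3) := by
    have : 2 ^ (l + 3) = 4 * 2 ^ (l + 1) := by ring
    omega
  have hbig : 2 ^ 21 * ((2 * R + 1) * (8 * ((u + (l + 3)) + 1) * ((2 * R + 1) * X))) ≤ 2 ^ (u + (l + 3)) := by
    have hX2 : X ≤ 2 ^ X := Nat.lt_two_pow_self.le
    calc 2 ^ 21 * ((2 * R + 1) * (8 * ((u + (l + 3)) + 1) * ((2 * R + 1) * X)))
        = 2 ^ 24 * (2 * R + 1) ^ 2 * X * ((u + (l + 3)) + 1) := by ring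
      _ ≤ 2 ^ 24 * (4 * R) ^ 2 * 2 ^ X * 2 ^ (l + 3) := by
          gcongr
          omega
      _ = R ^ 2 * 2 ^ (28 + X) * 2 ^ (l + 3) := by rw [pow_add 2 28 X]; ring
      _ ≤ 2 ^ c * 2 ^ (28 + X) * 2 ^ (l + 3) := by gcongr
      _ = _ := by rw [← pow_add, ← pow_add]
  have hfin := hv (u + (l + 3)) hbig
  set y := u + (l + 3) with hy
  -- bound on l
  have hxt : 1 ≤ x ^ t := one_le_pow₀ hx1'
  have hxt1 : x ≤ x ^ t := le_self_pow₀ hx1' (by omega)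
  have hxtl : x ^ t * ℓ ≤ x ^ (t + 1) := by
    rw [pow_succ]; exact mul_le_mul_of_nonneg_left hℓx (by positivity)
  have hxp : x ^ t ≤ x ^ (t+1) := pow_le_pow_right₀ hx1' (Nat.le_succ t)
  have hx1p : 1 ≤ x ^ (t+1) := one_le_pow₀ hx1'
  have hf1 : 1 / (Nat.factorial t : ℝ) ≤ 1 := by
    rw [div_le_one (by exact_mod_cast Nat.factorial_pos t)]; exact_mod_cast Nat.factorial_pos t
  have hCc : C ≤ (⌈C⌉₊ : ℝ) := Nat.le_ceil C
  have hub : (u:ℝ) ≤ B * x ^ (t + 1) := by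
    have e1 : 1 / (Nat.factorial t : ℝ) * (x ^ t * ℓ) ≤ 1 * x ^ (t + 1) :=
      mul_le_mul hf1 hxtl (by positivity) (by norm_num)
    have e2 : C * x ^ t ≤ ⌈C⌉₊ * x ^ (t+1) := mul_le_mul hCc hxp (by positivity) (by positivity)
    have e3 : (K:ℝ) * 1 ≤ K * x ^ (t+1) := by gcongr
    rw [← mul_assoc] at e1
    have : (u:ℝ) = c + K := by rw [hu]; push_cast; rfl
    rw [this, hB]
    push_cast
    linarith
  have hlb : (l:ℝ) ≤ B + (t + 1) * ℓ := by
    have h1 : ((2:ℝ)) ^ l ≤ 2 ^ B * x ^ (t + 1) := by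
      have e1 : ((2:ℝ)) ^ l ≤ u := by exact_mod_cast hl2
      have e2 : (B:ℝ) ≤ 2 ^ B := by exact_mod_cast Nat.lt_two_pow_self.le
      refine e1.trans (hub.trans ?_)
      gcongr
    have h2 := Real.logb_le_logb_of_le (b := 2) (by norm_num) (by positivity) h1
    rw [Real.logb_mul (by positivity) (by positivity), Real.logb_pow, Real.logb_pow, Real.logb_pow,
      Real.logb_self_eq_one (by norm_num)] at h2
    push_cast at h2
    linarith
  have hyb : (y:ℝ) ≤ 2 / (Nat.factorial t : ℝ) * x ^ t * ℓ + (2 * C + 4 + K + B + (t + 1)) * x ^ t := by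
    have e0 : (y:ℝ) = c + K + (l + 3) := by rw [hy, hu]; push_cast; ring
    have e1 : ((t:ℝ) + 1) * ℓ ≤ (t + 1) * x ^ t := by
      have := hℓx.trans hxt1
      gcongr
    have e2 : (4 + (K:ℝ) + B) * 1 ≤ (4 + K + B) * x ^ t := by gcongr
    have e3 : 2 * M = 2 / (Nat.factorial t : ℝ) * x ^ t * ℓ + 2 * C * x ^ t := by rw [hM]; ring
    rw [e0]
    linarith
  calc (P.card : ℝ) ≤ (((2 ^ y) ^ n : ℕ) : ℝ) := by exact_mod_cast hfin
    _ = (2:ℝ) ^ ((n:ℝ) * y) := by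
        push_cast
        rw [← pow_mul, ← Real.rpow_natCast]; push_cast; rw [mul_comm]
    _ ≤ _ := by
        apply Real.rpow_le_rpow_of_exponent_le (by norm_num)
        gcongr
end VCX


/-- For every `t ≥ 1` there is a constant `C_t` such that for every `n ≥ 1`,
every family of `n`-permutations with VC-dimension at most `2t+3` has size at most
`2 ^ (n·((2/t!)·α(n)^t·log₂ α(n) + C_t·α(n)^t))`. -/
theorem r_odd_upper_bound :
    ∀ t : ℕ, 1 ≤ t → ∃ C : ℝ, ∀ n : ℕ, 1 ≤ n →
      ∀ P : Finset (Equiv.Perm (Fin n)), VCDimLE n (2 * t + 3) P →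
        (P.card : ℝ) ≤ (2 : ℝ) ^ ((n : ℝ) *
          ((2 / (Nat.factorial t : ℝ)) * (invAck n : ℝ) ^ t * Real.logb 2 (invAck n)
            + C * (invAck n : ℝ) ^ t)) := by
  intro t ht
  exact VCX.final t ht
end

section
/- There exists a constant C such that for every integer n with α(n) ≥ 2C + 2, there is a family of n-permutations of size at least (α(n)/2 − C)^n whose VC-dimension is at most 3; in other words, r₃(n) ≥ (α(n)/2 − C)^n. -/
set_option linter.unusedSimpArgs false
namespace R3

/-! ## Construction -/

/-- Lexicographic comparison of (row, rank) pairs. -/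
def Plt {A B : Type} [LinearOrder A] [LinearOrder B] (r : A) (q : B) (r' : A) (q' : B) : Prop :=
  r < r' ∨ (r = r' ∧ q < q')

def NoAlt {A B : Type} [LinearOrder A] [LinearOrder B] (X Y : Finset A) (p q : B) : Prop :=
  ∀ r₁ r₂ r₃ r₄ r₅, r₁ ∈ X → r₂ ∈ Y → r₃ ∈ X → r₄ ∈ Y → r₅ ∈ X →
    Plt r₁ p r₂ q → Plt r₂ q r₃ p → Plt r₃ p r₄ q → Plt r₄ q r₅ p → False

structure Sys (S T : Type) [LinearOrder S] [LinearOrder T] (d R : ℕ) : Type 1 where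
  Row : Type
  Q : Type
  instRow : LinearOrder Row
  instQ : LinearOrder Q
  occ : S → T → Finset Row
  srow : S → Row
  rank : S → T → Q
  U : Finset Row
  card_occ : ∀ s t, (occ s t).card = d
  card_U : U.card ≤ R
  occ_sub : ∀ s t, occ s t ⊆ U
  srow_mem_U : ∀ s, srow s ∈ U
  srow_mem : ∀ s t, srow s ∈ occ s t
  srow_min : ∀ s t, ∀ r ∈ occ s t, srow s ≤ r
  srow_mono : StrictMono srow
  srow_own : ∀ s s' t, srow s ∈ occ s' t → s = s'
  later : ∀ s t t', t < t' → ∀ r ∈ occ s t, ∀ r' ∈ occ s t', r ≠ srow s → r' ≠ srow s → r < r'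
  rank_anti : ∀ s t t', t < t' → rank s t' < rank s t
  rank_inj : ∀ s t s' t', rank s t = rank s' t' → s = s' ∧ t = t'
  alt : ∀ s t s' t', ¬ (s = s' ∧ t = t') → NoAlt (occ s t) (occ s' t') (rank s t) (rank s' t')

attribute [instance] Sys.instRow Sys.instQ

open Classical in
/-- base: one occurrence, two special blocks -/
theorem sys_base (T : Type) [LinearOrder T] : Nonempty (Sys (Fin 2) T 1 2) := by
  refine ⟨{ Row := Fin 2, Q := Fin 2 ×ₗ Tᵒᵈ, instRow := inferInstance, instQ := inferInstance,
            occ := fun s _ => {s}, srow := id, rank := fun s t => toLex (s, OrderDual.toDual t),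
            U := Finset.univ,
            card_occ := ?_, card_U := ?_, occ_sub := ?_, srow_mem_U := ?_, srow_mem := ?_,
            srow_min := ?_, srow_mono := ?_, srow_own := ?_, later := ?_, rank_anti := ?_, rank_inj := ?_, alt := ?_ }⟩
  · simp
  · simp
  · simp
  · simp
  · simp
  · simp
  · exact strictMono_id
  · simp
  · intro s t t' _ r hr r' hr' h
    simp at hr h
    exact absurd hr h
  · intro s t t' h
    rw [Prod.Lex.toLex_lt_toLex]
    right
    exact ⟨rfl, h⟩
  · intro s t s' t' h
    simpa using h
  · intro s t s' t' hne r₁ r₂ r₃ r₄ r₅ h1 h2 h3 h4 h5 a b c d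
    simp only [Finset.mem_singleton] at h1 h2 h3 h4 h5
    subst h1 h2 h3 h4 h5
    unfold Plt at a b
    rcases a with a | a <;> rcases b with b | b
    · exact absurd a b.asymm
    · exact absurd a b.1.not_gt
    · exact absurd b a.1.not_gt
    · exact absurd a.2 b.2.asymm

theorem sys_empty (T : Type) [LinearOrder T] [IsEmpty T] (d : ℕ) : Nonempty (Sys (Fin 1) T d 1) := by
  refine ⟨{ Row := Fin 1, Q := Fin 1, instRow := inferInstance, instQ := inferInstance,
            occ := fun s _ => {s}, srow := id, rank := fun s t => 0,
            U := Finset.univ,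
            card_occ := ?_, card_U := ?_, occ_sub := ?_, srow_mem_U := ?_, srow_mem := ?_,
            srow_min := ?_, srow_mono := ?_, srow_own := ?_, later := ?_, rank_anti := ?_, rank_inj := ?_, alt := ?_ }⟩
  · exact fun _ t => isEmptyElim t
  · simp
  · simp
  · simp
  · simp
  · simp
  · exact strictMono_id
  · exact fun _ _ t => isEmptyElim t
  · exact fun _ t => isEmptyElim t
  · exact fun _ t => isEmptyElim t
  · exact fun _ t => isEmptyElim t
  · exact fun _ t => isEmptyElim t

theorem sys_reindex {S T T' : Type} [LinearOrder S] [LinearOrder T] [LinearOrder T'] {d R : ℕ}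
    (e : T ≃o T') (Z : Sys S T' d R) : Nonempty (Sys S T d R) := by
  refine ⟨{ Row := Z.Row, Q := Z.Q, instRow := inferInstance, instQ := inferInstance,
            occ := fun s t => Z.occ s (e t), srow := Z.srow, rank := fun s t => Z.rank s (e t),
            U := Z.U,
            card_occ := ?_, card_U := ?_, occ_sub := ?_, srow_mem_U := ?_, srow_mem := ?_,
            srow_min := ?_, srow_mono := ?_, srow_own := ?_, later := ?_, rank_anti := ?_, rank_inj := ?_, alt := ?_ }⟩
  · exact fun s t => Z.card_occ s _
  · exact Z.card_U
  · exact fun s t => Z.occ_sub s _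
  · exact Z.srow_mem_U
  · exact fun s t => Z.srow_mem s _
  · exact fun s t => Z.srow_min s _
  · exact Z.srow_mono
  · exact fun s s' t => Z.srow_own s s' _
  · exact fun s t t' h => Z.later s _ _ (e.strictMono h)
  · exact fun s t t' h => Z.rank_anti s _ _ (e.strictMono h)
  · intro s t s' t' h
    simpa using Z.rank_inj _ _ _ _ h
  · intro s t s' t' h
    exact Z.alt _ _ _ _ (by simpa using h)

section step
variable {S T S' : Type} [LinearOrder S] [LinearOrder T] [LinearOrder S'] {d R R' : ℕ}

def stepOcc (Zs : Sys S S' d R) (Z : Sys S' T (d + 1) R') (i : S) (j : S') :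
    WithTop T → Finset (Zs.Row ×ₗ WithTop Z.Row)
  | none => insert (toLex (Zs.srow i, (Z.srow j : WithTop Z.Row)))
      ((Zs.occ i j).image fun r => toLex (r, (⊤ : WithTop Z.Row)))
  | some t => (Z.occ j t).image fun r : Z.Row => toLex (Zs.srow i, (r : WithTop Z.Row))

def stepRank (Zs : Sys S S' d R) (Z : Sys S' T (d + 1) R') (i : S) (j : S') :
    WithTop T → Zs.Q ⊕ₗ (S ×ₗ Z.Q)
  | none => toLex (Sum.inl (Zs.rank i j))
  | some t => toLex (Sum.inr (toLex (i, Z.rank j t)))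

variable (Zs : Sys S S' d R) (Z : Sys S' T (d + 1) R')

theorem mem_top {i j r} : r ∈ stepOcc Zs Z i j ⊤ ↔
    r = toLex (Zs.srow i, (Z.srow j : WithTop Z.Row)) ∨ ∃ a ∈ Zs.occ i j, r = toLex (a, ⊤) := by
  show r ∈ insert _ _ ↔ _
  simp [eq_comm]

theorem mem_some {i j r} {t : T} : r ∈ stepOcc Zs Z i j (t : WithTop T) ↔
    ∃ a ∈ Z.occ j t, r = toLex (Zs.srow i, (a : WithTop Z.Row)) := by
  show r ∈ Finset.image _ _ ↔ _
  simp [eq_comm]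

theorem srank_top {i j} : stepRank Zs Z i j ⊤ = toLex (Sum.inl (Zs.rank i j)) := rfl
theorem srank_some {i j} {t : T} : stepRank Zs Z i j (t : WithTop T) =
  toLex (Sum.inr (toLex (i, Z.rank j t))) := rfl

theorem lt1 {A B : Type} [LinearOrder A] [LinearOrder B] {a a' : A} {b b' : B} :
    toLex (a, b) < toLex (a', b') ↔ a < a' ∨ a = a' ∧ b < b' := Prod.Lex.toLex_lt_toLex

theorem alt_some_some {i j t i' j' t'} (hne : ¬ (i = i' ∧ j = j' ∧ t = t')) :
    NoAlt (stepOcc Zs Z i j (t : T)) (stepOcc Zs Z i' j' (t' : T))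
      (stepRank Zs Z i j t) (stepRank Zs Z i' j' t') := by
  intro r₁ r₂ r₃ r₄ r₅ h1 h2 h3 h4 h5 a b c d
  rw [mem_some] at h1 h2 h3 h4 h5
  obtain ⟨r₁, h1, rfl⟩ := h1
  obtain ⟨r₂, h2, rfl⟩ := h2
  obtain ⟨r₃, h3, rfl⟩ := h3
  obtain ⟨r₄, h4, rfl⟩ := h4
  obtain ⟨r₅, h5, rfl⟩ := h5
  simp only [Plt, srank_some, lt1, Sum.Lex.inr_lt_inr_iff, toLex_inj, Prod.mk.injEq,
    WithTop.coe_lt_coe, WithTop.coe_inj, Zs.srow_mono.lt_iff_lt, Zs.srow_mono.injective.eq_iff]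
    at a b c d
  by_cases hi : i = i'
  · subst hi
    simp only [lt_irrefl, false_or, true_and] at a b c d
    exact Z.alt j t j' t' (by tauto) r₁ r₂ r₃ r₄ r₅ h1 h2 h3 h4 h5 a b c d
  · rcases lt_or_gt_of_ne hi with h | h
    · grind
    · grind

theorem alt_some_top {i j t i' j'} :
    NoAlt (stepOcc Zs Z i j (t : T)) (stepOcc Zs Z i' j' ⊤)
      (stepRank Zs Z i j t) (stepRank Zs Z i' j' ⊤) := by
  intro r₁ r₂ r₃ r₄ r₅ h1 h2 h3 h4 h5 a b c d
  rw [mem_some] at h1 h3 h5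
  rw [mem_top] at h2 h4
  obtain ⟨r₁, h1, rfl⟩ := h1
  obtain ⟨r₃, h3, rfl⟩ := h3
  obtain ⟨r₅, h5, rfl⟩ := h5
  rcases h2 with rfl | ⟨r₂, h2, rfl⟩ <;> rcases h4 with rfl | ⟨r₄, h4, rfl⟩ <;>
  simp only [Plt, srank_some, srank_top, lt1, Sum.Lex.inr_lt_inr_iff, toLex_inj, Prod.mk.injEq,
    WithTop.coe_lt_coe, WithTop.coe_inj, Zs.srow_mono.lt_iff_lt, Zs.srow_mono.injective.eq_iff,
    WithTop.coe_lt_top, not_top_lt, WithTop.coe_ne_top, WithTop.top_ne_coe,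
    Sum.Lex.inl_lt_inr, Sum.Lex.not_inr_lt_inl, and_true, and_false, or_false]
    at a b c d
  · grind
  · grind
  · grind
  · grind

theorem alt_top_some {i j t i' j'} :
    NoAlt (stepOcc Zs Z i' j' ⊤) (stepOcc Zs Z i j (t : T))
      (stepRank Zs Z i' j' ⊤) (stepRank Zs Z i j t) := by
  intro r₁ r₂ r₃ r₄ r₅ h1 h2 h3 h4 h5 a b c d
  rw [mem_some] at h2 h4
  rw [mem_top] at h1 h3
  obtain ⟨r₂, h2, rfl⟩ := h2
  obtain ⟨r₄, h4, rfl⟩ := h4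
  rcases h1 with rfl | ⟨r₁, h1, rfl⟩ <;> rcases h3 with rfl | ⟨r₃, h3, rfl⟩ <;>
  simp only [Plt, srank_some, srank_top, lt1, Sum.Lex.inr_lt_inr_iff, toLex_inj, Prod.mk.injEq,
    WithTop.coe_lt_coe, WithTop.coe_inj, Zs.srow_mono.lt_iff_lt, Zs.srow_mono.injective.eq_iff,
    WithTop.coe_lt_top, not_top_lt, WithTop.coe_ne_top, WithTop.top_ne_coe,
    Sum.Lex.inl_lt_inr, Sum.Lex.not_inr_lt_inl, and_true, and_false, or_false]
    at a b c
  · grind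
  · grind
  · have := Zs.srow_min _ _ _ h1
    grind
  · have := Zs.srow_min _ _ _ h1
    grind

theorem alt_top_top_ne {i j i' j'} (hi : i ≠ i') :
    NoAlt (stepOcc Zs Z i j ⊤) (stepOcc Zs Z i' j' ⊤)
      (stepRank Zs Z i j ⊤) (stepRank Zs Z i' j' ⊤) := by
  intro r₁ r₂ r₃ r₄ r₅ h1 h2 h3 h4 h5 a b c d
  have key : ∀ i j i' j', i ≠ i' → ∀ r r', r ∈ stepOcc Zs Z i j ⊤ → r' ∈ stepOcc Zs Z i' j' ⊤ →
      Plt r (stepRank Zs Z i j ⊤) r' (stepRank Zs Z i' j' ⊤) →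
      Plt (ofLex r).1 (Zs.rank i j) (ofLex r').1 (Zs.rank i' j') := by
    intro i j i' j' hi r r' h h' hlt
    rw [mem_top] at h h'
    have ho := fun t => Zs.srow_own i i' t
    have ho' := fun t => Zs.srow_own i' i t
    have hinj := Zs.srow_mono.injective (a₁ := i) (a₂ := i')
    rcases h with rfl | ⟨r, h, rfl⟩ <;> rcases h' with rfl | ⟨r', h', rfl⟩ <;>
    simp only [Plt, srank_some, srank_top, lt1, Sum.Lex.inl_lt_inl_iff, toLex_inj, Prod.mk.injEq,
      WithTop.coe_lt_top, not_top_lt, WithTop.coe_ne_top, WithTop.top_ne_coe,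
      and_true, and_false, or_false, ofLex_toLex] at hlt ⊢
    · grind
    · grind
    · grind
    · grind
  have mem : ∀ i j r, r ∈ stepOcc Zs Z i j ⊤ → (ofLex r).1 ∈ Zs.occ i j := by
    intro i j r h
    rw [mem_top] at h
    rcases h with rfl | ⟨r, h, rfl⟩
    · exact Zs.srow_mem i j
    · exact h
  exact Zs.alt i j i' j' (by tauto) _ _ _ _ _ (mem _ _ _ h1) (mem _ _ _ h2) (mem _ _ _ h3)
    (mem _ _ _ h4) (mem _ _ _ h5) (key _ _ _ _ hi _ _ h1 h2 a) (key _ _ _ _ hi.symm _ _ h2 h3 b)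
    (key _ _ _ _ hi _ _ h3 h4 c) (key _ _ _ _ hi.symm _ _ h4 h5 d)

theorem plt_le {A B : Type} [LinearOrder A] [LinearOrder B] {r r' : A} {q q' : B}
  (h : Plt r q r' q') : r ≤ r' := by
  rcases h with h | h
  · exact h.le
  · exact h.1.le

theorem plt_lt {A B : Type} [LinearOrder A] [LinearOrder B] {r r' r'' : A} {q q' : B}
  (h : Plt r q r' q') (h' : Plt r' q' r'' q) : r < r'' := by
  unfold Plt at h h'
  grind

theorem lev1 {P : Type} [LinearOrder P] {A A' B r₁ r₂ r₃ r₄ r₅ : P} {C C' : P → Prop}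
    (AB : A < B) (AB' : A' < B) (cc : C r₅ → C' r₄ → r₅ < r₄)
    (h1 : r₁ = A ∨ r₁ = B ∨ (B < r₁ ∧ C r₁)) (h2 : r₂ = A' ∨ r₂ = B ∨ (B < r₂ ∧ C' r₂))
    (h3 : r₃ = A ∨ r₃ = B ∨ (B < r₃ ∧ C r₃)) (h4 : r₄ = A' ∨ r₄ = B ∨ (B < r₄ ∧ C' r₄))
    (h5 : r₅ = A ∨ r₅ = B ∨ (B < r₅ ∧ C r₅)) (l12 : r₁ ≤ r₂) (l34 : r₃ ≤ r₄) (l45 : r₄ ≤ r₅)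
    (l13 : r₁ < r₃) (l24 : r₂ < r₄) (n34 : r₃ ≠ r₄) : False := by
  rcases h4 with h4 | h4 | ⟨h4', h4⟩
  · rcases h2 with h2 | h2 | ⟨h2', h2⟩ <;> order
  · rcases h2 with h2 | h2 | ⟨h2', h2⟩
    · rcases h1 with h1 | h1 | ⟨h1', h1⟩ <;> rcases h3 with h3 | h3 | ⟨h3', h3⟩ <;> order
    · order
    · order
  · rcases h5 with h5 | h5 | ⟨h5', h5⟩
    · order
    · order
    · have := cc h5 h4
      order

theorem lev2 {P : Type} [LinearOrder P] {A A' B r₁ r₂ r₃ r₄ : P} {C C' : P → Prop}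
    (AB : A < B) (AA : A' < A) (cc : C' r₄ → C r₃ → r₄ < r₃)
    (h1 : r₁ = A ∨ r₁ = B ∨ (B < r₁ ∧ C r₁)) (h2 : r₂ = A' ∨ r₂ = B ∨ (B < r₂ ∧ C' r₂))
    (h3 : r₃ = A ∨ r₃ = B ∨ (B < r₃ ∧ C r₃)) (h4 : r₄ = A' ∨ r₄ = B ∨ (B < r₄ ∧ C' r₄))
    (l12 : r₁ ≤ r₂) (l23 : r₂ ≤ r₃) (l34 : r₃ ≤ r₄)
    (l24 : r₂ < r₄) (n23 : r₂ ≠ r₃) : False := by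
  have hB : B ≤ r₂ := by
    rcases h2 with h2 | h2 | ⟨h2', h2⟩
    · rcases h1 with h1 | h1 | ⟨h1', h1⟩ <;> order
    · order
    · order
  rcases h3 with h3 | h3 | ⟨h3', h3⟩
  · order
  · order
  · rcases h4 with h4 | h4 | ⟨h4', h4⟩
    · order
    · order
    · have := cc h4 h3
      order

theorem alt_top_top_eq {i j j'} (hj : j ≠ j') :
    NoAlt (stepOcc Zs Z i j ⊤) (stepOcc Zs Z i j' ⊤)
      (stepRank Zs Z i j ⊤) (stepRank Zs Z i j' ⊤) := by
  intro r₁ r₂ r₃ r₄ r₅ h1 h2 h3 h4 h5 a b c d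
  -- classification into levels A, B, C
  have cls : ∀ j r, r ∈ stepOcc Zs Z i j ⊤ →
      r = toLex (Zs.srow i, (Z.srow j : WithTop Z.Row)) ∨ r = toLex (Zs.srow i, ⊤) ∨
      (toLex (Zs.srow i, ⊤) < r ∧ ∃ a ∈ Zs.occ i j, a ≠ Zs.srow i ∧ r = toLex (a, ⊤)) := by
    intro j r h
    rw [mem_top] at h
    rcases h with rfl | ⟨r, h, rfl⟩
    · exact Or.inl rfl
    · by_cases hr : r = Zs.srow i
      · subst hr; exact Or.inr (Or.inl rfl)
      · right; right
        refine ⟨?_, r, h, hr, rfl⟩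
        rw [lt1]
        left
        exact lt_of_le_of_ne (Zs.srow_min _ _ _ h) (Ne.symm hr)
  have AB : ∀ j, toLex (Zs.srow i, (Z.srow j : WithTop Z.Row)) < toLex (Zs.srow i, ⊤) := by
    intro j
    rw [lt1]; right; exact ⟨rfl, WithTop.coe_lt_top _⟩
  have AA : ∀ j j', j < j' → toLex (Zs.srow i, (Z.srow j : WithTop Z.Row)) <
      toLex (Zs.srow i, (Z.srow j' : WithTop Z.Row)) := by
    intro j j' h
    rw [lt1]; right; exact ⟨rfl, WithTop.coe_lt_coe.2 (Z.srow_mono h)⟩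
  have CC : ∀ j j', j < j' → ∀ r r', (∃ a ∈ Zs.occ i j, a ≠ Zs.srow i ∧ r = toLex (a, ⊤)) →
      (∃ a ∈ Zs.occ i j', a ≠ Zs.srow i ∧ r' = toLex (a, (⊤ : WithTop Z.Row))) → r < r' := by
    rintro j j' h _ _ ⟨r, hr, hn, rfl⟩ ⟨r', hr', hn', rfl⟩
    rw [lt1]; left
    exact Zs.later i j j' h r hr r' hr' hn hn'
  have RK : ∀ j j', j < j' → stepRank Zs Z i j' ⊤ < stepRank Zs Z i j ⊤ := by
    intro j j' h
    rw [srank_top, srank_top, Sum.Lex.inl_lt_inl_iff]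
    exact Zs.rank_anti i j j' h
  have l12 := plt_le a
  have l23 := plt_le b
  have l34 := plt_le c
  have l45 := plt_le d
  have l13 := plt_lt a b
  have l24 := plt_lt b c
  have l35 := plt_lt c d
  replace h1 := cls _ _ h1
  replace h2 := cls _ _ h2
  replace h3 := cls _ _ h3
  replace h4 := cls _ _ h4
  replace h5 := cls _ _ h5
  rcases lt_or_gt_of_ne hj with hlt | hlt
  · have rk := RK _ _ hlt
    have n34 : r₃ ≠ r₄ := by
      intro e
      rcases c with c | c
      · exact c.ne e
      · exact absurd c.2 rk.asymm
    exact lev1 (C := fun r => ∃ a ∈ Zs.occ i j, a ≠ Zs.srow i ∧ r = toLex (a, ⊤))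
      (C' := fun r => ∃ a ∈ Zs.occ i j', a ≠ Zs.srow i ∧ r = toLex (a, ⊤))
      (AB j) (AB j') (CC _ _ hlt r₅ r₄) h1 h2 h3 h4 h5 l12 l34 l45 l13 l24 n34
  · have rk := RK _ _ hlt
    have n23 : r₂ ≠ r₃ := by
      intro e
      rcases b with c | c
      · exact c.ne e
      · exact absurd c.2 rk.asymm
    exact lev2 (C := fun r => ∃ a ∈ Zs.occ i j, a ≠ Zs.srow i ∧ r = toLex (a, ⊤))
      (C' := fun r => ∃ a ∈ Zs.occ i j', a ≠ Zs.srow i ∧ r = toLex (a, ⊤))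
      (AB j) (AA _ _ hlt) (CC _ _ hlt r₄ r₃) h1 h2 h3 h4 l12 l23 l34 l24 n23

end step

section step2
variable {S T S' : Type} [LinearOrder S] [LinearOrder T] [LinearOrder S'] {d R R' : ℕ}

theorem sys_step [Fintype S] (Zs : Sys S S' d R) (Z : Sys S' T (d + 1) R') :
    Nonempty (Sys (S ×ₗ S') (WithTop T) (d + 1) (R + Fintype.card S * R')) := by
  refine ⟨{ Row := Zs.Row ×ₗ WithTop Z.Row, Q := Zs.Q ⊕ₗ (S ×ₗ Z.Q),
            instRow := inferInstance, instQ := inferInstance,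
            occ := fun s t => stepOcc Zs Z (ofLex s).1 (ofLex s).2 t
            srow := fun s => toLex (Zs.srow (ofLex s).1, (Z.srow (ofLex s).2 : WithTop Z.Row))
            rank := fun s t => stepRank Zs Z (ofLex s).1 (ofLex s).2 t
            U := Zs.U.image (fun r => toLex (r, (⊤ : WithTop Z.Row))) ∪
              (Finset.univ ×ˢ Z.U).image
                (fun p : S × Z.Row => toLex (Zs.srow p.1, (p.2 : WithTop Z.Row)))
            card_occ := ?_, card_U := ?_, occ_sub := ?_, srow_mem_U := ?_, srow_mem := ?_,
            srow_min := ?_, srow_mono := ?_, srow_own := ?_, later := ?_, rank_anti := ?_,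
            rank_inj := ?_, alt := ?_ }⟩
  · rintro ⟨i, j⟩ (_ | t)
    · change (insert _ (Finset.image _ _)).card = _
      rw [Finset.card_insert_of_notMem, Finset.card_image_of_injective, Zs.card_occ]
      · intro a b h
        simpa using h
      · simp
    · change (Finset.image _ _).card = _
      rw [Finset.card_image_of_injective, Z.card_occ]
      intro a b h
      simpa using h
  · refine (Finset.card_union_le _ _).trans ?_
    refine Nat.add_le_add (Finset.card_image_le.trans Zs.card_U) (Finset.card_image_le.trans ?_)
    rw [Finset.card_product, Finset.card_univ]
    exact Nat.mul_le_mul_left _ Z.card_U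
  · rintro ⟨i, j⟩ t r hr
    rw [Finset.mem_union]
    induction t with
    | top =>
      rcases (mem_top Zs Z).1 hr with rfl | ⟨a, ha, rfl⟩
      · right
        exact Finset.mem_image.2 ⟨(i, Z.srow j), by simp [Z.srow_mem_U], rfl⟩
      · left
        exact Finset.mem_image.2 ⟨a, Zs.occ_sub _ _ ha, rfl⟩
    | coe t =>
      obtain ⟨a, ha, rfl⟩ := (mem_some Zs Z).1 hr
      right
      exact Finset.mem_image.2 ⟨(i, a), by simp [Z.occ_sub _ _ ha], rfl⟩
  · rintro ⟨i, j⟩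
    rw [Finset.mem_union]
    right
    exact Finset.mem_image.2 ⟨(i, Z.srow j), by simp [Z.srow_mem_U], rfl⟩
  · rintro ⟨i, j⟩ t
    induction t with
    | top => exact (mem_top Zs Z).2 (Or.inl rfl)
    | coe t => exact (mem_some Zs Z).2 ⟨_, Z.srow_mem j t, rfl⟩
  · rintro ⟨i, j⟩ t r hr
    induction t with
    | top =>
      rcases (mem_top Zs Z).1 hr with rfl | ⟨a, ha, rfl⟩
      · exact le_rfl
      · rw [Prod.Lex.toLex_le_toLex]
        rcases (Zs.srow_min _ _ _ ha).lt_or_eq with h | h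
        · exact Or.inl h
        · exact Or.inr ⟨h, le_top⟩
    | coe t =>
      obtain ⟨a, ha, rfl⟩ := (mem_some Zs Z).1 hr
      rw [Prod.Lex.toLex_le_toLex]
      exact Or.inr ⟨rfl, WithTop.coe_le_coe.2 (Z.srow_min _ _ _ ha)⟩
  · rintro ⟨i, j⟩ ⟨i', j'⟩ h
    have h' : toLex (i, j) < toLex (i', j') := h
    rw [lt1] at h'
    change toLex (Zs.srow i, (Z.srow j : WithTop Z.Row)) < toLex (Zs.srow i', (Z.srow j' : WithTop Z.Row))
    rw [lt1]
    rcases h' with h' | ⟨rfl, h'⟩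
    · exact Or.inl (Zs.srow_mono h')
    · exact Or.inr ⟨rfl, WithTop.coe_lt_coe.2 (Z.srow_mono h')⟩
  · rintro ⟨i, j⟩ ⟨i', j'⟩ t hr
    change toLex (i, j) = toLex (i', j')
    change toLex (Zs.srow i, (Z.srow j : WithTop Z.Row)) ∈ stepOcc Zs Z i' j' t at hr
    rw [toLex_inj, Prod.mk.injEq]
    induction t with
    | top =>
      rcases (mem_top Zs Z).1 hr with h | ⟨a, ha, h⟩
      · simp only [toLex_inj, Prod.mk.injEq, WithTop.coe_inj] at h
        exact ⟨Zs.srow_mono.injective h.1, Z.srow_mono.injective h.2⟩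
      · simp at h
    | coe t =>
      obtain ⟨a, ha, h⟩ := (mem_some Zs Z).1 hr
      simp only [toLex_inj, Prod.mk.injEq, WithTop.coe_inj] at h
      obtain ⟨h, rfl⟩ := h
      exact ⟨Zs.srow_mono.injective h, Z.srow_own _ _ _ ha⟩
  · rintro ⟨i, j⟩ t t' htt r hr r' hr' hn hn'
    change r ∈ stepOcc Zs Z i j t at hr
    change r' ∈ stepOcc Zs Z i j t' at hr'
    change r ≠ toLex (Zs.srow i, (Z.srow j : WithTop Z.Row)) at hn
    change r' ≠ toLex (Zs.srow i, (Z.srow j : WithTop Z.Row)) at hn'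
    induction t with
    | top => exact absurd htt not_top_lt
    | coe t =>
      obtain ⟨a, ha, rfl⟩ := (mem_some Zs Z).1 hr
      induction t' with
      | top =>
        rcases (mem_top Zs Z).1 hr' with h | ⟨a', ha', rfl⟩
        · exact absurd h hn'
        · rw [lt1]
          rcases (Zs.srow_min _ _ _ ha').lt_or_eq with h | h
          · exact Or.inl h
          · exact Or.inr ⟨h, WithTop.coe_lt_top _⟩
      | coe t' =>
        obtain ⟨a', ha', rfl⟩ := (mem_some Zs Z).1 hr'
        rw [lt1]
        refine Or.inr ⟨rfl, WithTop.coe_lt_coe.2 ?_⟩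
        refine Z.later j t t' (WithTop.coe_lt_coe.1 htt) a ha a' ha' ?_ ?_
        · rintro rfl; exact hn rfl
        · rintro rfl; exact hn' rfl
  · rintro ⟨i, j⟩ t t' htt
    change stepRank Zs Z i j t' < stepRank Zs Z i j t
    induction t with
    | top => exact absurd htt not_top_lt
    | coe t =>
      induction t' with
      | top =>
        rw [srank_top, srank_some]
        exact Sum.Lex.inl_lt_inr _ _
      | coe t' =>
        rw [srank_some, srank_some, Sum.Lex.inr_lt_inr_iff, lt1]
        exact Or.inr ⟨rfl, Z.rank_anti _ _ _ (WithTop.coe_lt_coe.1 htt)⟩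
  · rintro ⟨i, j⟩ t ⟨i', j'⟩ t' h
    change stepRank Zs Z i j t = stepRank Zs Z i' j' t' at h
    change toLex (i, j) = toLex (i', j') ∧ t = t'
    rw [toLex_inj, Prod.mk.injEq]
    induction t with
    | top =>
      induction t' with
      | top =>
        rw [srank_top, srank_top, toLex_inj, Sum.inl.injEq] at h
        exact ⟨Zs.rank_inj _ _ _ _ h, rfl⟩
      | coe t' => rw [srank_top, srank_some, toLex_inj] at h; cases h
    | coe t =>
      induction t' with
      | top => rw [srank_top, srank_some, toLex_inj] at h; cases h
      | coe t' =>
        rw [srank_some, srank_some, toLex_inj, Sum.inr.injEq, toLex_inj, Prod.mk.injEq] at h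
        have := Z.rank_inj _ _ _ _ h.2
        exact ⟨⟨h.1, this.1⟩, by rw [this.2]⟩
  · rintro ⟨i, j⟩ t ⟨i', j'⟩ t' hne
    change ¬ (toLex (i, j) = toLex (i', j') ∧ t = t') at hne
    rw [toLex_inj, Prod.mk.injEq] at hne
    change NoAlt (stepOcc Zs Z i j t) (stepOcc Zs Z i' j' t') (stepRank Zs Z i j t)
      (stepRank Zs Z i' j' t')
    induction t with
    | top =>
      induction t' with
      | top =>
        by_cases hi : i = i'
        · subst hi
          exact alt_top_top_eq Zs Z (by tauto)
        · exact alt_top_top_ne Zs Z hi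
      | coe t' => exact alt_top_some Zs Z
    | coe t =>
      induction t' with
      | top => exact alt_some_top Zs Z
      | coe t' =>
        apply alt_some_some Zs Z
        rintro ⟨h1, h2, h3⟩
        exact hne ⟨⟨h1, h2⟩, by rw [h3]⟩
end step2

/-- number of special blocks -/
def F : ℕ → ℕ → ℕ
  | 0, _ => 2
  | _ + 1, 0 => 1
  | d + 1, m + 1 => F d (F (d + 1) m) * F (d + 1) m
  termination_by d m => (d, m)

/-- number of rows -/
def Rw : ℕ → ℕ → ℕ
  | 0, _ => 2
  | _ + 1, 0 => 1
  | d + 1, m + 1 => Rw d (F (d + 1) m) + F d (F (d + 1) m) * Rw (d + 1) m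
  termination_by d m => (d, m)

theorem F_zero (m : ℕ) : F 0 m = 2 := by rw [F]
theorem F_succ_zero (d : ℕ) : F (d + 1) 0 = 1 := by rw [F]
theorem F_succ (d m : ℕ) : F (d + 1) (m + 1) = F d (F (d + 1) m) * F (d + 1) m := by rw [F]
theorem Rw_zero (m : ℕ) : Rw 0 m = 2 := by rw [Rw]
theorem Rw_succ_zero (d : ℕ) : Rw (d + 1) 0 = 1 := by rw [Rw]
theorem Rw_succ (d m : ℕ) : Rw (d + 1) (m + 1) =
    Rw d (F (d + 1) m) + F d (F (d + 1) m) * Rw (d + 1) m := by rw [Rw]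

theorem sys_exists (d : ℕ) : ∀ (T : Type) [LinearOrder T] [Fintype T],
    ∃ (S : Type) (_ : LinearOrder S) (_ : Fintype S), Fintype.card S = F d (Fintype.card T) ∧
      Nonempty (Sys S T (d + 1) (Rw d (Fintype.card T))) := by
  induction d with
  | zero =>
    intro T _ _
    refine ⟨Fin 2, inferInstance, inferInstance, by simp [F_zero], ?_⟩
    rw [Rw_zero]
    exact sys_base T
  | succ d ih =>
    have main : ∀ m : ℕ, ∃ (T : Type) (_ : LinearOrder T) (_ : Fintype T) (S : Type)
        (_ : LinearOrder S) (_ : Fintype S), Fintype.card T = m ∧ Fintype.card S = F (d + 1) m ∧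
        Nonempty (Sys S T (d + 1 + 1) (Rw (d + 1) m)) := by
      intro m
      induction m with
      | zero =>
        refine ⟨Fin 0, inferInstance, inferInstance, Fin 1, inferInstance, inferInstance, by simp,
          by simp [F_succ_zero], ?_⟩
        rw [Rw_succ_zero]
        exact sys_empty _ _
      | succ m ihm =>
        obtain ⟨T, _, _, S', _, _, hT, hS', ⟨Z⟩⟩ := ihm
        obtain ⟨S, _, _, hS, ⟨Zs⟩⟩ := ih S'
        have : Fintype (S ×ₗ S') := inferInstanceAs (Fintype (S × S'))
        have : Fintype (WithTop T) := inferInstanceAs (Fintype (Option T))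
        refine ⟨WithTop T, inferInstance, inferInstance, S ×ₗ S', inferInstance,
          inferInstance, ?_, ?_, ?_⟩
        · rw [← hT, ← Fintype.card_option]
          exact Fintype.card_congr (Equiv.refl _)
        · rw [F_succ, ← hS', ← hS, ← Fintype.card_prod]
          exact Fintype.card_congr (Equiv.refl _)
        · rw [Rw_succ, ← hS', ← hS]
          exact sys_step Zs Z
    intro T _ _
    obtain ⟨T', _, _, S, i1, i2, hT, hS, ⟨Z⟩⟩ := main (Fintype.card T)
    refine ⟨S, i1, i2, hS, ?_⟩
    exact sys_reindex ((Fintype.orderIsoFinOfCardEq T rfl).symm.trans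
      (Fintype.orderIsoFinOfCardEq T' hT)) Z

theorem F_pos (d m : ℕ) : 1 ≤ F d m ∧ (1 ≤ m → 2 ≤ F d m) := by
  induction d generalizing m with
  | zero => simp [F_zero]
  | succ d ih =>
    induction m with
    | zero => simp [F_succ_zero]
    | succ m ihm =>
      rw [F_succ]
      have := (ih (F (d + 1) m)).2 ihm.1
      refine ⟨by nlinarith [ihm.1], fun _ => by nlinarith [ihm.1]⟩

theorem Rw_le (d m : ℕ) : Rw d m ≤ 2 ^ (d + 1) * F d m := by
  suffices h : Rw d m + F d m ≤ 2 ^ (d + 1) * F d m by omega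
  induction d generalizing m with
  | zero => simp [F_zero, Rw_zero]
  | succ d ih =>
    obtain ⟨B, hB⟩ : ∃ B, 2 ^ (d + 1) = B + 1 :=
      ⟨2 ^ (d + 1) - 1, (Nat.sub_add_cancel Nat.one_le_two_pow).symm⟩
    have key : ∀ m, Rw (d + 1) m + 2 * B ≤ (1 + 2 * B) * F (d + 1) m := by
      intro m
      induction m with
      | zero => simp [Rw_succ_zero, F_succ_zero]
      | succ m ihm =>
        rw [Rw_succ, F_succ]
        have hf := (F_pos (d + 1) m).1
        set f := F (d + 1) m
        have hg := (F_pos d f).2 hf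
        have h := ih f
        set g := F d f
        rw [hB] at h
        have : g * (Rw (d + 1) m + 2 * B) ≤ g * ((1 + 2 * B) * f) := Nat.mul_le_mul_left _ ihm
        nlinarith
    have := key m
    rw [pow_succ, hB]
    nlinarith

/-- A system of `n` symbols, each occurring in `D` rows out of at most `R`. -/
structure Fam (n D R : ℕ) : Type 1 where
  Row : Type
  Q : Type
  instRow : LinearOrder Row
  instQ : LinearOrder Q
  occ : Fin n → Finset Row
  rank : Fin n → Q
  U : Finset Row
  card_occ : ∀ x, (occ x).card = D
  card_U : U.card ≤ R
  occ_sub : ∀ x, occ x ⊆ U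
  rank_inj : Function.Injective rank
  alt : ∀ x y, x ≠ y → NoAlt (occ x) (occ y) (rank x) (rank y)

attribute [instance] Fam.instRow Fam.instQ

theorem fam_of_sys {S T : Type} [LinearOrder S] [LinearOrder T] [Fintype S] [Fintype T]
    {D R : ℕ} (Z : Sys S T D R) (c n : ℕ) (hn : n ≤ c * (Fintype.card S * Fintype.card T)) :
    Nonempty (Fam n D (c * R)) := by
  have : Nonempty (Fin n ↪ Fin c × S × T) := by
    apply Function.Embedding.nonempty_of_card_le
    simpa using hn
  obtain ⟨e⟩ := this
  refine ⟨{ Row := Fin c ×ₗ Z.Row, Q := Fin c ×ₗ Z.Q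
            instRow := inferInstance, instQ := inferInstance
            occ := fun x => (Z.occ (e x).2.1 (e x).2.2).image fun r => toLex ((e x).1, r)
            rank := fun x => toLex ((e x).1, Z.rank (e x).2.1 (e x).2.2)
            U := (Finset.univ ×ˢ Z.U).image toLex
            card_occ := ?_, card_U := ?_, occ_sub := ?_, rank_inj := ?_, alt := ?_ }⟩
  · intro x
    rw [Finset.card_image_of_injective, Z.card_occ]
    intro a b h
    simpa using h
  · refine Finset.card_image_le.trans ?_
    rw [Finset.card_product]
    simpa using Nat.mul_le_mul_left _ Z.card_U
  · intro x r hr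
    obtain ⟨a, ha, rfl⟩ := Finset.mem_image.1 hr
    exact Finset.mem_image.2 ⟨_, by simp [Z.occ_sub _ _ ha], rfl⟩
  · intro x y h
    simp only [toLex_inj, Prod.mk.injEq] at h
    have := Z.rank_inj _ _ _ _ h.2
    apply e.injective
    ext1
    · exact h.1
    · exact Prod.ext this.1 this.2
  · intro x y hxy
    have hne : e x ≠ e y := fun h => hxy (e.injective h)
    generalize e x = u at *
    generalize e y = v at *
    obtain ⟨i, s, t⟩ := u
    obtain ⟨i', s', t'⟩ := v
    intro r₁ r₂ r₃ r₄ r₅ h1 h2 h3 h4 h5 a b c d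
    obtain ⟨s1, k1, rfl⟩ := Finset.mem_image.1 h1
    obtain ⟨s2, k2, rfl⟩ := Finset.mem_image.1 h2
    obtain ⟨s3, k3, rfl⟩ := Finset.mem_image.1 h3
    obtain ⟨s4, k4, rfl⟩ := Finset.mem_image.1 h4
    obtain ⟨s5, k5, rfl⟩ := Finset.mem_image.1 h5
    simp only [Plt, lt1, toLex_inj, Prod.mk.injEq] at a b c d
    by_cases hi : i = i'
    · subst hi
      simp only [lt_irrefl, false_or, true_and] at a b c d
      exact Z.alt s t s' t' (by rintro ⟨rfl, rfl⟩; exact hne rfl) s1 s2 s3 s4 s5 k1 k2 k3 k4 k5 a b c d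
    · rcases lt_or_gt_of_ne hi with h | h
      · grind
      · grind

/-- Four symbols all of whose orders occur contain an alternation of length 5. -/
theorem shatter_alt {P : Type} [LinearOrder P] (O : Fin 4 → Finset P)
    (hdisj : ∀ x y, x ≠ y → ∀ p ∈ O x, p ∉ O y)
    (h : ∀ σ : Equiv.Perm (Fin 4), ∃ p : Fin 4 → P, (∀ i, p i ∈ O i) ∧
      ∀ i j, σ i < σ j ↔ p i < p j) :
    ∃ x y, x ≠ y ∧ ∃ p₁ p₂ p₃ p₄ p₅, p₁ ∈ O x ∧ p₂ ∈ O y ∧ p₃ ∈ O x ∧ p₄ ∈ O y ∧ p₅ ∈ O x ∧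
      p₁ < p₂ ∧ p₂ < p₃ ∧ p₃ < p₄ ∧ p₄ < p₅ := by
  have ord : ∀ w x y z : Fin 4, w ≠ x → w ≠ y → w ≠ z → x ≠ y → x ≠ z → y ≠ z →
      ∃ p : Fin 4 → P, (∀ i, p i ∈ O i) ∧ p w < p x ∧ p x < p y ∧ p y < p z := by
    intro w x y z h1 h2 h3 h4 h5 h6
    have hinj : Function.Injective ![w, x, y, z] := by
      intro i j hij
      fin_cases i <;> fin_cases j <;> simp_all
    let σ := (Equiv.ofBijective _ (Finite.injective_iff_bijective.1 hinj)).symm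
    have e0 : σ w = 0 := by rw [Equiv.symm_apply_eq]; rfl
    have e1 : σ x = 1 := by rw [Equiv.symm_apply_eq]; rfl
    have e2 : σ y = 2 := by rw [Equiv.symm_apply_eq]; rfl
    have e3 : σ z = 3 := by rw [Equiv.symm_apply_eq]; rfl
    obtain ⟨p, hp, hlt⟩ := h σ
    refine ⟨p, hp, ?_, ?_, ?_⟩
    · rw [← hlt, e0, e1]; decide
    · rw [← hlt, e1, e2]; decide
    · rw [← hlt, e2, e3]; decide
  have ne : ∀ i, (O i).Nonempty := fun i => by
    obtain ⟨p, hp, _⟩ := h 1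
    exact ⟨_, hp i⟩
  -- the symbol whose first occurrence is the latest
  let f : Fin 4 → P := fun i => (O i).min' (ne i)
  obtain ⟨d, -, hd⟩ := Finset.exists_max_image Finset.univ f ⟨0, Finset.mem_univ _⟩
  have hfm : ∀ i, f i ∈ O i := fun i => Finset.min'_mem _ _
  have hfle : ∀ i, ∀ p ∈ O i, f i ≤ p := fun i p hp => Finset.min'_le _ _ hp
  -- every other symbol occurs after `f d`
  have three : ∀ d : Fin 4, ∀ i, i ≠ d → ∃ j k, d ≠ i ∧ d ≠ j ∧ d ≠ k ∧ i ≠ j ∧ i ≠ k ∧ j ≠ k := by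
    decide
  have ne2 : ∀ i, i ≠ d → ((O i).filter (fun p => f d < p)).Nonempty := by
    intro i hi
    obtain ⟨j, k, h1, h2, h3, h4, h5, h6⟩ := three d i hi
    obtain ⟨p, hp, q1, q2, q3⟩ := ord d i j k h1 h2 h3 h4 h5 h6
    exact ⟨p i, Finset.mem_filter.2 ⟨hp i, lt_of_le_of_lt (hfle d _ (hp d)) q1⟩⟩
  let g : Fin 4 → P := fun i => if hi : i ≠ d then ((O i).filter (fun p => f d < p)).min' (ne2 i hi)
    else f d
  have hgm : ∀ i, i ≠ d → g i ∈ O i ∧ f d < g i := by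
    intro i hi
    have : g i ∈ (O i).filter (fun p => f d < p) := by
      simp only [g, dif_pos hi]
      exact Finset.min'_mem _ _
    simpa using this
  have hgle : ∀ i, i ≠ d → ∀ p ∈ O i, f d < p → g i ≤ p := by
    intro i hi p hp hlt
    simp only [g, dif_pos hi]
    exact Finset.min'_le _ _ (Finset.mem_filter.2 ⟨hp, hlt⟩)
  obtain ⟨c, hcm, hc⟩ := Finset.exists_max_image (Finset.univ.erase d) g (by
    refine Finset.card_pos.1 ?_
    rw [Finset.card_erase_of_mem (Finset.mem_univ _)]
    simp)
  have hcd : c ≠ d := (Finset.mem_erase.1 hcm).1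
  obtain ⟨a, b, h1, h2, h3, h4, h5, h6⟩ := three d c hcd
  obtain ⟨p, hp, p1, p2, p3⟩ := ord d c a b h1 h2 h3 h4 h5 h6
  obtain ⟨q, hq, q1, q2, q3⟩ := ord d c b a h1 h3 h2 h5 h4 h6.symm
  have hpc : g c ≤ p c := hgle c hcd _ (hp c) (lt_of_le_of_lt (hfle d _ (hp d)) p1)
  have hqc : g c ≤ q c := hgle c hcd _ (hq c) (lt_of_le_of_lt (hfle d _ (hq d)) q1)
  have hga := hgm a h2.symm
  have hgb := hgm b h3.symm
  have hac : g a ≤ g c := hc a (Finset.mem_erase.2 ⟨h2.symm, Finset.mem_univ _⟩)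
  have hbc : g b ≤ g c := hc b (Finset.mem_erase.2 ⟨h3.symm, Finset.mem_univ _⟩)
  have had : f a ≤ f d := hd a (Finset.mem_univ _)
  have hbd : f b ≤ f d := hd b (Finset.mem_univ _)
  by_cases hfab : f a = f b
  · exact absurd (hfab ▸ hfm b) (hdisj a b h6 _ (hfm a))
  by_cases hgab : g a = g b
  · exact absurd (hgab ▸ hgb.1) (hdisj a b h6 _ hga.1)
  rcases lt_or_gt_of_ne hfab with hf | hf <;> rcases lt_or_gt_of_ne hgab with hg | hg
  · exact ⟨a, b, h6, f a, f b, g a, g b, p a, hfm _, hfm _, hga.1, hgb.1, hp _,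
      by order, by order, by order, by order⟩
  · exact ⟨a, b, h6, f a, f b, g a, q b, q a, hfm _, hfm _, hga.1, hq _, hq _,
      by order, by order, by order, by order⟩
  · exact ⟨b, a, h6.symm, f b, f a, g b, p a, p b, hfm _, hfm _, hgb.1, hp _, hp _,
      by order, by order, by order, by order⟩
  · exact ⟨b, a, h6.symm, f b, f a, g b, g a, q b, hfm _, hfm _, hgb.1, hga.1, hq _,
      by order, by order, by order, by order⟩

theorem perm_of_inj {n : ℕ} {L : Type} [LinearOrder L] (pos : Fin n → L)
    (h : Function.Injective pos) :
    ∃ π : Equiv.Perm (Fin n), ∀ x y, π x < π y ↔ pos x < pos y := by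
  classical
  have hc : (Finset.univ.image pos).card = n := by
    rw [Finset.card_image_of_injective _ h]; simp
  let iso := (Finset.univ.image pos).orderIsoOfFin hc
  let g : Fin n → Fin n := fun x => iso.symm ⟨pos x, Finset.mem_image_of_mem _ (Finset.mem_univ _)⟩
  have hg : Function.Injective g := by
    intro x y hxy
    have := iso.symm.injective hxy
    exact h (by simpa using this)
  refine ⟨Equiv.ofBijective g (Finite.injective_iff_bijective.1 hg), fun x y => ?_⟩
  simp [g]

theorem eq_of_perm_sym {n : ℕ} {A : Type} [LinearOrder A] (f g : Fin n → A)
    (π : Equiv.Perm (Fin n)) (hf : Monotone (f ∘ π)) (hg : Monotone (g ∘ π))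
    (h : Multiset.map f Finset.univ.val = Multiset.map g Finset.univ.val) : f = g := by
  have key : ∀ f : Fin n → A, (List.ofFn (f ∘ π) : Multiset A) = Multiset.map f Finset.univ.val := by
    intro f
    have h1 : (List.ofFn (f ∘ π) : Multiset A) = Multiset.map (f ∘ π) Finset.univ.val := by
      rw [Fin.univ_val_map]
    rw [h1, ← Multiset.map_map]
    congr 1
    have := congrArg Finset.val (Finset.map_univ_equiv π)
    simpa using this
  have hp : (List.ofFn (f ∘ π)).Perm (List.ofFn (g ∘ π)) := by
    rw [← Multiset.coe_eq_coe, key, key, h]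
  have := List.Perm.eq_of_sortedLE hf.sortedLE_ofFn hg.sortedLE_ofFn hp
  have := List.ofFn_injective this
  funext x
  have := congrFun this (π.symm x)
  simpa using this

theorem perms_of_fam {n D R : ℕ} (Fm : Fam n D R) :
    ∃ P : Finset (Equiv.Perm (Fin n)),
      (∀ a : Fin 4 → Fin n, StrictMono a → ¬ ∀ σ : Equiv.Perm (Fin 4), ∃ π ∈ P,
        ∀ i j, σ i < σ j ↔ π (a i) < π (a j)) ∧
      D ^ n ≤ P.card * (R + n - 1).choose n := by
  classical
  have hpos : ∀ f : Fin n → Fm.Row, ∃ π : Equiv.Perm (Fin n), ∀ x y, π x < π y ↔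
      toLex (f x, Fm.rank x) < toLex (f y, Fm.rank y) := by
    intro f
    apply perm_of_inj (fun x => toLex (f x, Fm.rank x))
    intro x y h
    simp only [toLex_inj, Prod.mk.injEq] at h
    exact Fm.rank_inj h.2
  choose Pf hPf using hpos
  refine ⟨(Fintype.piFinset Fm.occ).image Pf, ?_, ?_⟩
  · intro a ha hsh
    have hai := ha.injective
    obtain ⟨x, y, hxy, p₁, p₂, p₃, p₄, p₅, h1, h2, h3, h4, h5, l1, l2, l3, l4⟩ := shatter_alt
      (fun i => (Fm.occ (a i)).image fun r => toLex (r, Fm.rank (a i))) (by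
        intro x y hxy p hp hp'
        obtain ⟨r, -, rfl⟩ := Finset.mem_image.1 hp
        obtain ⟨r', -, h⟩ := Finset.mem_image.1 hp'
        simp only [toLex_inj, Prod.mk.injEq] at h
        exact hxy (hai (Fm.rank_inj h.2.symm))) (by
        intro σ
        obtain ⟨π, hπ, hσ⟩ := hsh σ
        obtain ⟨f, hf, rfl⟩ := Finset.mem_image.1 hπ
        refine ⟨fun i => toLex (f (a i), Fm.rank (a i)), fun i => ?_, fun i j => ?_⟩
        · exact Finset.mem_image_of_mem _ (Fintype.mem_piFinset.1 hf _)
        · rw [hσ, hPf])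
    obtain ⟨s1, k1, rfl⟩ := Finset.mem_image.1 h1
    obtain ⟨s2, k2, rfl⟩ := Finset.mem_image.1 h2
    obtain ⟨s3, k3, rfl⟩ := Finset.mem_image.1 h3
    obtain ⟨s4, k4, rfl⟩ := Finset.mem_image.1 h4
    obtain ⟨s5, k5, rfl⟩ := Finset.mem_image.1 h5
    rw [lt1] at l1 l2 l3 l4
    exact Fm.alt _ _ (fun h => hxy (hai h)) s1 s2 s3 s4 s5 k1 k2 k3 k4 k5 l1 l2 l3 l4
  · have hcard : (Fintype.piFinset Fm.occ).card = D ^ n := by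
      rw [Fintype.card_piFinset]
      simp [Fm.card_occ]
    rw [← hcard]
    have hmono : ∀ f, Monotone (f ∘ (Pf f).symm) := by
      intro f i j hij
      by_contra hlt
      rw [not_le] at hlt
      have : Pf f ((Pf f).symm j) < Pf f ((Pf f).symm i) := by
        rw [hPf, lt1]
        exact Or.inl hlt
      simp only [Equiv.apply_symm_apply] at this
      exact absurd hij (not_le.2 this)
    have hfib : ∀ π ∈ (Fintype.piFinset Fm.occ).image Pf,
        ((Fintype.piFinset Fm.occ).filter fun f => Pf f = π).card ≤ (R + n - 1).choose n := by
      intro π _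
      have hle : Fintype.card (Sym Fm.U n) ≤ (R + n - 1).choose n := by
        rw [Sym.card_sym_eq_choose, Fintype.card_coe]
        apply Nat.choose_le_choose
        have := Fm.card_U
        omega
      refine le_trans ?_ hle
      have hmem : ∀ f ∈ (Fintype.piFinset Fm.occ).filter fun f => Pf f = π, ∀ x, f x ∈ Fm.U :=
        fun f hf x => Fm.occ_sub x (Fintype.mem_piFinset.1 (Finset.mem_filter.1 hf).1 x)
      refine le_trans ?_ ((Finset.card_image_le (s := (Finset.univ : Finset (Sym Fm.U n)))
        (f := fun s => Multiset.map Subtype.val (s : Multiset Fm.U))).trans_eq Finset.card_univ)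
      refine Finset.card_le_card_of_injOn (fun f => Multiset.map f Finset.univ.val) ?_ ?_
      · intro f hf
        have hf' := hmem f hf
        refine Finset.mem_coe.2 (Finset.mem_image.2
          ⟨⟨Multiset.map (fun x => (⟨f x, hf' x⟩ : Fm.U)) Finset.univ.val, by simp⟩,
            Finset.mem_univ _, ?_⟩)
        rw [Sym.coe_mk, Multiset.map_map]
        rfl
      · intro f hf g hg hfg
        have e1 := (Finset.mem_filter.1 hf).2
        have e2 := (Finset.mem_filter.1 hg).2
        refine eq_of_perm_sym f g π.symm ?_ ?_ hfg
        · rw [← e1]; exact hmono f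
        · rw [← e2]; exact hmono g
    have := Finset.card_le_mul_card_image (f := Pf) (Fintype.piFinset Fm.occ) _ hfib
    rw [mul_comm]
    exact this

theorem choose_bound (R n : ℕ) (h : 4 * R ≤ n) : (R + n - 1).choose n ≤ 2 ^ n := by
  rcases Nat.eq_zero_or_pos R with rfl | hR
  · rcases Nat.eq_zero_or_pos n with rfl | hn
    · simp
    · rw [Nat.choose_eq_zero_of_lt (by omega)]; positivity
  obtain ⟨k, rfl⟩ : ∃ k, R = k + 1 := ⟨R - 1, by omega⟩
  have e : k + 1 + n - 1 = n + k := by omega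
  rw [e]
  -- C(n+k, k) * 2^n ≤ 3^(n+k)
  have h1 : (n + k).choose n * 2 ^ n ≤ 3 ^ (n + k) := by
    have := add_pow 2 1 (n + k)
    have h3 : (2 + 1 : ℕ) ^ (n + k) = 3 ^ (n + k) := by norm_num
    rw [← h3, this]
    have := Finset.single_le_sum (f := fun m => 2 ^ m * 1 ^ (n + k - m) * (n + k).choose m)
      (s := Finset.range (n + k + 1)) (fun _ _ => Nat.zero_le _) (a := n)
      (Finset.mem_range.2 (by omega))
    simp only [one_pow, mul_one] at this ⊢
    linarith
  have h2 : 3 ^ (n + k) ≤ 2 ^ n * 2 ^ n := by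
    obtain ⟨t, rfl⟩ : ∃ t, n = 4 * k + t := ⟨n - 4 * k, by omega⟩
    have e1 : 3 ^ (4 * k + t + k) = 243 ^ k * 3 ^ t := by
      rw [show 4 * k + t + k = 5 * k + t by ring, pow_add, pow_mul]; norm_num
    have e2 : 2 ^ (4 * k + t) * 2 ^ (4 * k + t) = 256 ^ k * 4 ^ t := by
      rw [← mul_pow, pow_add, pow_mul]; norm_num
    rw [e1, e2]
    gcongr <;> norm_num
  exact Nat.le_of_mul_le_mul_right (h1.trans h2) (by positivity)

def G : ℕ → ℕ → ℕ
  | 0, t => 2 * t - 1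
  | _ + 1, 0 => 0
  | _ + 1, 1 => 2
  | d + 1, t + 2 => G d (G (d + 1) (t + 1))
  termination_by d t => (d, t)

theorem G_zero (t : ℕ) : G 0 t = 2 * t - 1 := by rw [G]
theorem G_succ_zero (d : ℕ) : G (d + 1) 0 = 0 := by rw [G]
theorem G_succ_one (d : ℕ) : G (d + 1) 1 = 2 := by rw [G]
theorem G_succ (d t : ℕ) : G (d + 1) (t + 2) = G d (G (d + 1) (t + 1)) := by rw [G]

theorem G_two (d : ℕ) : G d 2 = 3 := by
  induction d with
  | zero => rw [G_zero]
  | succ d ih => rw [G_succ, G_succ_one, ih]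

theorem G_three (d : ℕ) : G d 3 = 5 := by
  induction d with
  | zero => rw [G_zero]
  | succ d ih => rw [G_succ, G_two, ih]

theorem G_one (t : ℕ) : G 1 (t + 1) = 2 ^ t + 1 := by
  induction t with
  | zero => rw [G_succ_one]; rfl
  | succ t ih => rw [G_succ, ih, G_zero, pow_succ]; omega

theorem F_mono_succ (d m : ℕ) : F d m ≤ F d (m + 1) := by
  cases d with
  | zero => simp [F_zero]
  | succ d =>
    rw [F_succ]
    exact Nat.le_mul_of_pos_left _ (F_pos _ _).1

theorem F_mono (d : ℕ) : Monotone (F d) := monotone_nat_of_le_succ (F_mono_succ d)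

theorem G_ge_F (d x : ℕ) : (x + 1) ^ 2 * F d x + 3 ≤ G (d + 2) (x + 3) := by
  induction d generalizing x with
  | zero =>
    rw [F_zero]
    induction x with
    | zero => rw [G_three]; norm_num
    | succ x ih =>
      rw [show x + 1 + 3 = (x + 2) + 2 by ring, G_succ]
      have : 0 + 2 = 1 + 1 := rfl
      obtain ⟨y, hy⟩ : ∃ y, G (1 + 1) (x + 3) = y + 1 := ⟨G 2 (x + 3) - 1, by
        have : 3 ≤ G 2 (x + 3) := by
          have := ih; simp only [Nat.zero_add] at this; omega
        change G 2 (x + 3) = _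
        omega⟩
      change (x + 1 + 1) ^ 2 * 2 + 3 ≤ G 1 (G (1 + 1) (x + 3))
      have hih : (x + 1) ^ 2 * 2 + 3 ≤ y + 1 := hy ▸ ih
      rw [hy, G_one]
      have h1 : 2 ^ ((x + 1) ^ 2 * 2 + 2) ≤ 2 ^ y := Nat.pow_le_pow_right (by norm_num) (by omega)
      have h2 : (x + 1) ^ 2 * 2 + 2 < 2 ^ ((x + 1) ^ 2 * 2 + 2) := Nat.lt_two_pow_self
      have h3 : (x + 1) ^ 2 * 2  < 2 ^ ((x + 1) ^ 2 * 2) := Nat.lt_two_pow_self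
      rw [pow_add] at h1
      generalize 2 ^ ((x + 1) ^ 2 * 2) = w at *
      have h4 : (x + 1 + 1) ^ 2 * 2 + 2 ≤ ((x + 1) ^ 2 * 2 + 1) * 4 := by
        ring_nf
        nlinarith [Nat.zero_le (x ^ 2)]
      omega
  | succ d ih =>
    induction x with
    | zero => rw [G_three, F_succ_zero]; norm_num
    | succ x ihx =>
      rw [show x + 1 + 3 = (x + 2) + 2 by ring, show d + 1 + 2 = (d + 2) + 1 by ring, G_succ]
      rw [show d + 1 + 2 = (d + 2) + 1 by ring] at ihx
      obtain ⟨y, hy⟩ : ∃ y, G (d + 2 + 1) (x + 2 + 1) = y + 3 := ⟨G (d + 2 + 1) (x + 3) - 3, by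
        change G (d + 2 + 1) (x + 3) = _
        omega⟩
      have hihx : (x + 1) ^ 2 * F (d + 1) x + 3 ≤ y + 3 := hy ▸ ihx
      rw [hy]
      refine le_trans ?_ (ih y)
      rw [F_succ]
      have hfp := (F_pos (d + 1) x).1
      generalize F (d + 1) x = f at *
      have hyf : f ≤ y := by
        have : 1 * f ≤ (x + 1) ^ 2 * f := Nat.mul_le_mul_right _ (Nat.one_le_pow _ _ (by omega))
        omega
      have hm := F_mono d hyf
      have : (x + 1 + 1) ^ 2 * f ≤ (y + 1) ^ 2 := by
        have h1 : ((x + 1) ^ 2 * f + 1) ^ 2 ≤ (y + 1) ^ 2 := Nat.pow_le_pow_left (by omega) 2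
        refine le_trans ?_ h1
        have h2 : f ≤ f ^ 2 := by nlinarith
        have h3 : ((x + 1) ^ 2 * f + 1) ^ 2 = (x + 1) ^ 4 * f ^ 2 + 2 * ((x + 1) ^ 2 * f) + 1 := by ring
        have h4 : (x + 1) ^ 4 * f ≤ (x + 1) ^ 4 * f ^ 2 := Nat.mul_le_mul_left _ h2
        rcases Nat.eq_zero_or_pos x with rfl | hx
        · nlinarith
        · have h5 : (x + 1 + 1) ^ 2 ≤ (x + 1) ^ 4 + 2 * (x + 1) ^ 2 := by nlinarith [Nat.zero_le ((x+1)^4)]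
          nlinarith [Nat.mul_le_mul_right f h5]
      calc (x + 1 + 1) ^ 2 * (F d f * f) + 3 = ((x + 1 + 1) ^ 2 * f) * F d f + 3 := by ring
        _ ≤ (y + 1) ^ 2 * F d y + 3 := by gcongr

theorem F_one (d : ℕ) : F d 1 = 2 := by
  induction d with
  | zero => rw [F_zero]
  | succ d ih => rw [F_succ, F_succ_zero, ih]

theorem F_two (d : ℕ) : F d 2 = 2 ^ (d + 1) := by
  induction d with
  | zero => rw [F_zero]; rfl
  | succ d ih => rw [F_succ, F_one, ih]; ring

theorem G_le_of_alpha (d : ℕ) : ∀ n t : ℕ, t ≤ alphaHier (d + 1) n → G d t ≤ n := by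
  induction d with
  | zero =>
    intro n t h
    rw [alphaHier] at h
    rw [G_zero]
    omega
  | succ d ih =>
    have key : ∀ fuel m t : ℕ, t ≤ iterCount (alphaHier (d + 1)) fuel m → G (d + 1) t ≤ m := by
      intro fuel
      induction fuel with
      | zero =>
        intro m t h
        rw [iterCount] at h
        obtain rfl : t = 0 := by omega
        rw [G_succ_zero]; omega
      | succ fuel ihf =>
        intro m t h
        rw [iterCount] at h
        split_ifs at h with hm
        · obtain rfl : t = 0 := by omega
          rw [G_succ_zero]; omega
        · rcases t with _ | _ | t
          · rw [G_succ_zero]; omega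
          · rw [G_succ_one]; omega
          · rw [G_succ]
            exact ih _ _ (ihf _ _ (by omega))
    intro n t h
    rw [alphaHier] at h
    exact key _ _ _ h

theorem big_n (D n : ℕ) (h : invAck n = D + 6) :
    2 ^ (D + 4) * F D (2 ^ (D + 4)) ≤ n := by
  have h1 : 4 ≤ alphaHier (D + 5) n := by
    by_contra hlt
    have : D + 5 ∉ {k : ℕ | 1 ≤ k ∧ alphaHier k n ≤ 3} := by
      apply Nat.notMem_of_lt_sInf
      change D + 5 < invAck n
      omega
    exact this ⟨by omega, by omega⟩
  have h2 := G_le_of_alpha (D + 4) n 4 h1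
  have e1 : G (D + 4) 4 = G (D + 2) (G (D + 2) 5) := by
    rw [show D + 4 = (D + 3) + 1 by ring, show (4 : ℕ) = 2 + 2 by rfl, G_succ, G_three,
      show D + 3 = (D + 2) + 1 by ring, show (5 : ℕ) = 3 + 2 by rfl, G_succ,
      show 3 + 1 = 2 + 2 by rfl, G_succ, G_three]
  have h3 := G_ge_F D 2
  rw [F_two] at h3
  rw [e1] at h2
  have e2 : 2 ^ (D + 4) = 8 * 2 ^ (D + 1) := by ring
  obtain ⟨x, hx⟩ : ∃ x, G (D + 2) 5 = x + 3 := ⟨G (D + 2) 5 - 3, by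
    change _ ≤ G (D + 2) 5 at h3
    omega⟩
  change _ ≤ G (D + 2) 5 at h3
  rw [hx] at h2 h3
  have h4 := G_ge_F D x
  have hm : 2 ^ (D + 4) ≤ x := by omega
  have hF := F_mono D hm
  calc 2 ^ (D + 4) * F D (2 ^ (D + 4)) ≤ (x + 1) ^ 2 * F D x := by
        exact Nat.mul_le_mul (by nlinarith) hF
    _ ≤ n := by omega

theorem fam_exists (D n : ℕ) (h : invAck n = D + 6) :
    ∃ R, 4 * R ≤ n ∧ Nonempty (Fam n (D + 1) R) := by
  have hN := big_n D n h
  set m := 2 ^ (D + 4) with hm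
  obtain ⟨S, _, _, hS, ⟨Z⟩⟩ := sys_exists D (Fin m)
  rw [Fintype.card_fin] at hS Z
  have hF := (F_pos D m).1
  have hm1 : 1 ≤ m := Nat.one_le_two_pow
  have hNpos : 0 < m * F D m := Nat.mul_pos hm1 hF
  set q := n / (m * F D m) with hq
  have hq1 : 1 ≤ q := Nat.div_pos hN hNpos
  have hqn : q * (m * F D m) ≤ n := Nat.div_mul_le_self _ _
  have hqn' : n < (q + 1) * (m * F D m) := by
    have := Nat.lt_mul_div_succ n hNpos
    rwa [mul_comm] at this
  refine ⟨(q + 1) * Rw D m, ?_, fam_of_sys Z (q + 1) n ?_⟩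
  · have h1 := Rw_le D m
    calc 4 * ((q + 1) * Rw D m) ≤ 4 * ((q + q) * (2 ^ (D + 1) * F D m)) := by gcongr
      _ = q * (m * F D m) := by rw [hm]; ring
      _ ≤ n := hqn
  · rw [hS, Fintype.card_fin, mul_comm (F D m)]
    exact hqn'.le

end R3

/-- There is a constant `C` such that for every `n` with `α(n) ≥ 2C + 2`
there is a family of `n`-permutations of size at least `(α(n)/2 − C)^n` with
VC-dimension at most 3. -/
theorem r3_lower_bound :
    ∃ C : ℝ, ∀ n : ℕ, 2 * C + 2 ≤ (invAck n : ℝ) →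
      ∃ P : Finset (Equiv.Perm (Fin n)), VCDimLE n 3 P ∧
        ((invAck n : ℝ) / 2 - C) ^ n ≤ (P.card : ℝ) := by
  refine ⟨5, fun n hn => ?_⟩
  have hk : 12 ≤ invAck n := by
    have : (12 : ℝ) ≤ (invAck n : ℝ) := by linarith
    exact_mod_cast this
  obtain ⟨D, hD⟩ : ∃ D, invAck n = D + 6 := ⟨invAck n - 6, by omega⟩
  obtain ⟨R, hR, ⟨Fm⟩⟩ := R3.fam_exists D n hD
  obtain ⟨P, hP, hcard⟩ := R3.perms_of_fam Fm
  refine ⟨P, fun a ha => hP a ha.1 ha.2, ?_⟩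
  have h1 : (D + 1) ^ n ≤ P.card * 2 ^ n :=
    hcard.trans (Nat.mul_le_mul_left _ (R3.choose_bound R n hR))
  have h2 : ((D : ℝ) + 1) ^ n ≤ (P.card : ℝ) * 2 ^ n := by exact_mod_cast h1
  have h3 : (((D : ℝ) + 1) / 2) ^ n ≤ (P.card : ℝ) := by
    rw [div_pow, div_le_iff₀ (by positivity)]
    exact h2
  refine le_trans ?_ h3
  have hDr : (invAck n : ℝ) = (D : ℝ) + 6 := by rw [hD]; push_cast; ring
  rw [hDr] at hn ⊢
  exact pow_le_pow_left₀ (by linarith) (by linarith) n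
end
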